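/- arXiv:1508.04457 — 3 statements merged into one kernel-verified Lean document; each statement's English description precedes it below -/
import Mathlib

section
/- Let Q₂(2k) denote the number of Goldbach partitions of the even integer 2k. Then the limit, as n → ∞, of (Σ_{2<k≤n} k·Q₂(2k)) / (n · Σ_{2<k≤n} Q₂(2k)) equals 2/3. Equivalently, if 2Gₙ is the even number partitioned by a uniformly random Goldbach partition from the set of all Goldbach partitions of even integers in (4, 2n], then E(Gₙ)/n → 2/3 as n → ∞. -/
open Filter Topology Asymptotics MeasureTheory

/-- `Q2 k` is the number of Goldbach partitions of `2*k`, i.e. the number of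
unordered pairs `{p, q}` of odd primes with `p + q = 2*k`. -/
def Q2 (k : ℕ) : ℕ :=
  ((Finset.range (2 * k + 1) ×ˢ Finset.range (2 * k + 1)).filter
    (fun pq => pq.1.Prime ∧ pq.2.Prime ∧ Odd pq.1 ∧ Odd pq.2 ∧
      pq.1 ≤ pq.2 ∧ pq.1 + pq.2 = 2 * k)).card

/-- `fOdd z = Σ_{p odd prime} z^p`. -/
noncomputable def fOdd (z : ℝ) : ℝ := ∑' p : ℕ, if p.Prime ∧ Odd p then z ^ p else 0

/-- `fOdd' z = Σ_{p odd prime} p * z^(p-1)`, the derivative of `fOdd` on `(0,1)`. -/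
noncomputable def fOdd' (z : ℝ) : ℝ :=
  ∑' p : ℕ, if p.Prime ∧ Odd p then (p : ℝ) * z ^ (p - 1) else 0

/-- `fOdd'' z = Σ_{p odd prime} p * (p-1) * z^(p-2)`, the second derivative of `fOdd` on `(0,1)`. -/
noncomputable def fOdd'' (z : ℝ) : ℝ :=
  ∑' p : ℕ, if p.Prime ∧ Odd p then (p : ℝ) * ((p : ℝ) - 1) * z ^ (p - 2) else 0

/-- The prime-counting function at a real argument: the number of primes `≤ y`. -/
noncomputable def primePi (y : ℝ) : ℕ := Nat.primeCounting ⌊y⌋₊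


open FourierTransform Convolution in
lemma base_kernel : ∃ φ : ℝ → ℂ, ∃ K : ℝ → ℝ, Continuous φ ∧ HasCompactSupport φ ∧
    (∀ v, 𝓕 φ v = (K v : ℂ)) ∧ (∀ v, 0 ≤ K v) ∧ Continuous K ∧ Integrable K ∧ 0 < ∫ v, K v := by
  let b : ContDiffBump (0 : ℝ) := ⟨1, 2, one_pos, one_lt_two⟩
  let g : ℝ → ℂ := fun x => ((b x : ℝ) : ℂ)
  have hgc : Continuous g := Complex.continuous_ofReal.comp b.continuous
  have hgs : HasCompactSupport g := b.hasCompactSupport.comp_left (g := fun x : ℝ => (x : ℂ)) (by simp)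
  have hgd : ContDiff ℝ ((⊤ : ℕ∞) : WithTop ℕ∞) g := Complex.ofRealCLM.contDiff.comp b.contDiff
  have hgi : Integrable g := hgc.integrable_of_hasCompactSupport hgs
  let S : SchwartzMap ℝ ℂ := hgs.toSchwartzMap hgd
  have hS : (S : ℝ → ℂ) = g := rfl
  have hFS : ∀ v, (𝓕 S : SchwartzMap ℝ ℂ) v = 𝓕 g v := by
    intro v
    rw [SchwartzMap.fourier_coe, hS]
  have hreal : ∀ v, (starRingEnd ℂ) (𝓕 g v) = 𝓕 g v := by
    intro v
    rw [Real.fourier_real_eq_integral_exp_smul, ← integral_conj]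
    rw [← integral_neg_eq_self]
    refine integral_congr_ae (Eventually.of_forall fun x => ?_)
    simp only [g, smul_eq_mul, map_mul, Complex.conj_ofReal, ContDiffBump.neg, ← Complex.exp_conj]
    congr 2
    simp
  have hre : ∀ v, 𝓕 g v = ((𝓕 g v).re : ℂ) := fun v => (Complex.conj_eq_iff_re.mp (hreal v)).symm
  have hcont : Continuous (fun v => (𝓕 g v).re) := by
    have : (fun v => (𝓕 g v).re) = fun v => ((𝓕 S : SchwartzMap ℝ ℂ) v).re := by
      ext v; rw [hFS]
    rw [this]
    exact Complex.continuous_re.comp (𝓕 S : SchwartzMap ℝ ℂ).continuous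
  refine ⟨g ⋆[ContinuousLinearMap.mul ℂ ℂ] g, fun v => (𝓕 g v).re ^ 2, ?_, ?_, ?_, ?_, ?_, ?_, ?_⟩
  · exact hgs.continuous_convolution_left _ hgc (hgc.locallyIntegrable)
  · exact hgs.convolution _ hgs
  · intro v
    rw [Real.fourier_mul_convolution_eq hgi hgi, hre v]
    push_cast
    ring
  · intro v; positivity
  · exact hcont.pow 2
  all_goals
    have hIntg : Integrable (fun v => (𝓕 g v).re ^ 2) := by
      have h2 : MemLp (fun v => (𝓕 S : SchwartzMap ℝ ℂ) v) 2 volume := (𝓕 S : SchwartzMap ℝ ℂ).memLp 2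
      have h3 := h2.re.integrable_sq
      refine h3.congr (Eventually.of_forall fun v => ?_)
      simp [hFS]
  · exact hIntg
  · rw [integral_pos_iff_support_of_nonneg (fun v => by positivity) hIntg]
    refine IsOpen.measure_pos volume ?_ ⟨0, ?_⟩
    · exact (hcont.pow 2).isOpen_support
    · have : 𝓕 g 0 = ((∫ x, b x : ℝ) : ℂ) := by
        rw [Real.fourier_real_eq_integral_exp_smul, ← integral_complex_ofReal]
        simp [g]
      simp only [Function.mem_support, this, Complex.ofReal_re]
      exact pow_ne_zero _ (b.integral_pos).ne'

open FourierTransform in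
lemma exists_kernel (δ η : ℝ) (hδ : 0 < δ) (hη : 0 < η) :
    ∃ φ : ℝ → ℂ, ∃ K : ℝ → ℝ, Continuous φ ∧ HasCompactSupport φ ∧
    (∀ v, 𝓕 φ v = (K v : ℂ)) ∧ (∀ v, 0 ≤ K v) ∧ Continuous K ∧ Integrable K ∧ ∫ v, K v = 1 ∧
    ∫ v in {v | δ < |v|}, K v ≤ η := by
  obtain ⟨φ, K, hφ, hφs, hF, hK0, hKc, hKi, hpos⟩ := base_kernel
  set c := ∫ v, K v with hc
  have htail : Tendsto (fun l : ℝ => ∫ v, Set.indicator {v | l * δ < |v|} K v) atTop (𝓝 0) := by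
    have : (0 : ℝ) = ∫ v : ℝ, (0 : ℝ) := by simp
    rw [this]
    refine tendsto_integral_filter_of_dominated_convergence (fun v => |K v|) ?_ ?_ hKi.abs ?_
    · refine Eventually.of_forall fun l => (hKi.indicator ?_).aestronglyMeasurable
      exact measurableSet_lt measurable_const measurable_id.abs
    · refine Eventually.of_forall fun l => Eventually.of_forall fun v => ?_
      exact norm_indicator_le_norm_self _ _
    · refine Eventually.of_forall fun v => ?_
      refine tendsto_const_nhds.congr' ?_
      filter_upwards [eventually_ge_atTop (|v| / δ)] with l hl
      rw [Set.indicator_of_notMem]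
      simp only [Set.mem_ofPred_eq, not_lt]
      rwa [div_le_iff₀ hδ] at hl
  obtain ⟨l, hl, hl0⟩ := ((htail.eventually (gt_mem_nhds (mul_pos hη hpos))).and
    (eventually_gt_atTop 0)).exists
  have hl1 : |l⁻¹| = l⁻¹ := abs_of_pos (inv_pos.mpr hl0)
  refine ⟨fun x => (c⁻¹ : ℂ) * φ (l⁻¹ * x), fun v => c⁻¹ * (l * K (l * v)), by fun_prop, ?_, ?_, ?_,
    by fun_prop, ?_, ?_, ?_⟩
  · refine HasCompactSupport.mul_left ?_
    exact hφs.comp_homeomorph (Homeomorph.mulLeft₀ l⁻¹ (inv_pos.mpr hl0).ne')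
  · intro v
    have h1 := hF (l * v)
    rw [Real.fourier_real_eq_integral_exp_smul] at h1 ⊢
    push_cast
    rw [← h1]
    have := Measure.integral_comp_mul_left (fun x : ℝ => Complex.exp (↑(-2 * Real.pi * x * (l * v)) * Complex.I) • φ x) l⁻¹
    rw [inv_inv, abs_of_pos hl0] at this
    rw [Complex.real_smul] at this
    rw [← this, ← integral_const_mul]
    refine integral_congr_ae (Eventually.of_forall fun x => ?_)
    simp only [smul_eq_mul]
    have : -2 * Real.pi * (l⁻¹ * x) * (l * v) = -2 * Real.pi * x * v := by
      field_simp
    rw [this]; push_cast; ring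
  · intro v; have := hK0 (l * v); positivity
  · exact ((hKi.comp_mul_left' hl0.ne').const_mul _).const_mul _
  · rw [integral_const_mul, integral_const_mul, Measure.integral_comp_mul_left, hl1, smul_eq_mul, ← hc]
    field_simp
  · have hm : MeasurableSet {v : ℝ | δ < |v|} := measurableSet_lt measurable_const measurable_id.abs
    rw [integral_const_mul, integral_const_mul, ← integral_indicator hm]
    have : (fun v => Set.indicator {v | δ < |v|} (fun v => K (l * v)) v) = fun v => Set.indicator {v | l * δ < |v|} K (l * v) := by
      ext v
      simp only [Set.indicator, Set.mem_ofPred_eq, abs_mul, abs_of_pos hl0, mul_lt_mul_iff_right₀ hl0]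
    rw [this, Measure.integral_comp_mul_left (fun v => Set.indicator {v | l * δ < |v|} K v), hl1, smul_eq_mul, inv_mul_le_iff₀ hpos]
    rw [mul_inv_cancel_left₀ hl0.ne']
    linarith

/-- Tauberian step. -/
lemma tauber_step (B : ℝ → ℝ) (M : ℝ) (hB0 : ∀ u, 0 ≤ B u) (hBM : ∀ u, B u ≤ M)
    (hBmeas : Measurable B) (hmono : ∀ u v, u ≤ v → B u ≤ B v * Real.exp (v - u))
    (hK : ∀ δ η : ℝ, 0 < δ → 0 < η → ∃ K : ℝ → ℝ, (∀ v, 0 ≤ K v) ∧ Integrable K ∧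
      ∫ v, K v = 1 ∧ ∫ v in {v | δ < |v|}, K v ≤ η ∧
      Tendsto (fun x => ∫ u in Set.Ioi 0, B u * K (u - x)) atTop (𝓝 1)) :
    Tendsto B atTop (𝓝 1) := by
  have hM0 : 0 ≤ M := (hB0 0).trans (hBM 0)
  have key : ∀ δ η : ℝ, 0 < δ → 0 < η → η < 1 → ∀ᶠ x in atTop,
      B x ≤ Real.exp (2 * δ) * (1 + η) / (1 - η) ∧
      (1 - η - M * η) / Real.exp (2 * δ) ≤ B x := by
    intro δ η hδ hη hη1
    obtain ⟨K, hK0, hKi, hK1, hKt, hlim⟩ := hK δ η hδ hη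
    have hKx : ∀ x, Integrable (fun u => K (u - x)) := fun x => hKi.comp_sub_right x
    have hBK : ∀ x, Integrable (fun u => B u * K (u - x)) := by
      intro x
      refine (hKx x).bdd_mul (c := M) hBmeas.aestronglyMeasurable ?_
      refine Eventually.of_forall fun u => ?_
      rw [Real.norm_of_nonneg (hB0 u)]; exact hBM u
    have hm : MeasurableSet {v : ℝ | δ < |v|} := measurableSet_lt measurable_const measurable_id.abs
    have hin : 1 - η ≤ ∫ v in {v : ℝ | δ < |v|}ᶜ, K v := by
      have := integral_add_compl hm hKi
      linarith
    have hshift : ∀ y, ∫ u, Set.indicator {v : ℝ | δ < |v|}ᶜ K (u - y) = ∫ v in {v : ℝ | δ < |v|}ᶜ, K v := by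
      intro y
      rw [integral_sub_right_eq_self (fun u => Set.indicator {v : ℝ | δ < |v|}ᶜ K u), integral_indicator hm.compl]
    have hshift2 : ∀ y, ∫ u, Set.indicator {v : ℝ | δ < |v|} K (u - y) = ∫ v in {v : ℝ | δ < |v|}, K v := by
      intro y
      rw [integral_sub_right_eq_self (fun u => Set.indicator {v : ℝ | δ < |v|} K u), integral_indicator hm]
    have h1 : Tendsto (fun x => ∫ u in Set.Ioi 0, B u * K (u - (x + δ))) atTop (𝓝 1) :=
      hlim.comp (tendsto_atTop_add_const_right _ δ tendsto_id)
    have h2 : Tendsto (fun x => ∫ u in Set.Ioi 0, B u * K (u - (x - δ))) atTop (𝓝 1) :=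
      hlim.comp (tendsto_atTop_add_const_right _ (-δ) tendsto_id)
    filter_upwards [h1.eventually (gt_mem_nhds (show (1:ℝ) < 1 + η by linarith)),
      h2.eventually (lt_mem_nhds (show 1 - η < (1:ℝ) by linarith)), eventually_gt_atTop 0] with x hx1 hx2 hx0
    constructor
    · have : B x * Real.exp (-(2 * δ)) * (∫ v in {v : ℝ | δ < |v|}ᶜ, K v) ≤ ∫ u in Set.Ioi 0, B u * K (u - (x + δ)) := by
        rw [← hshift (x + δ), ← integral_const_mul, ← integral_indicator measurableSet_Ioi]
        refine integral_mono (((hKi.indicator hm.compl).comp_sub_right _).const_mul _) ((hBK _).indicator measurableSet_Ioi) ?_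
        intro u
        simp only [Set.indicator, Set.mem_compl_iff, Set.mem_ofPred_eq, not_lt, Set.mem_Ioi]
        have hk := hK0 (u - (x + δ))
        have hb := hB0 u
        split_ifs with h3 h4 h4
        · rw [abs_le] at h3
          have h5 := hmono x u (by linarith)
          have h6 : Real.exp (u - x) ≤ Real.exp (2 * δ) := Real.exp_le_exp.mpr (by linarith)
          refine mul_le_mul_of_nonneg_right ?_ hk
          rw [Real.exp_neg, ← div_eq_mul_inv, div_le_iff₀ (Real.exp_pos _)]
          exact h5.trans (mul_le_mul_of_nonneg_left h6 hb)
        · rw [abs_le] at h3; exfalso; linarith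
        · simp; positivity
        · simp
      rw [Real.exp_neg] at this
      rw [le_div_iff₀ (by linarith)]
      have h7 : B x * (Real.exp (2 * δ))⁻¹ * (1 - η) ≤ 1 + η := by
        refine le_trans ?_ (this.trans hx1.le)
        exact mul_le_mul_of_nonneg_left hin (mul_nonneg (hB0 x) (by positivity))
      have h8 := mul_le_mul_of_nonneg_left h7 (Real.exp_pos (2 * δ)).le
      calc B x * (1 - η) = Real.exp (2 * δ) * (B x * (Real.exp (2 * δ))⁻¹ * (1 - η)) := by
            field_simp
        _ ≤ _ := h8
    · have : ∫ u in Set.Ioi 0, B u * K (u - (x - δ)) ≤ B x * Real.exp (2 * δ) * (∫ u, K (u - (x - δ))) + M * ∫ v in {v : ℝ | δ < |v|}, K v := by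
        rw [← hshift2 (x - δ), ← integral_const_mul, ← integral_const_mul, ← integral_indicator measurableSet_Ioi,
          ← integral_add ((hKx _).const_mul _) (((hKi.indicator hm).comp_sub_right _).const_mul _)]
        refine integral_mono ((hBK _).indicator measurableSet_Ioi) (((hKx _).const_mul _).add (((hKi.indicator hm).comp_sub_right _).const_mul _)) ?_
        intro u
        have hk := hK0 (u - (x - δ))
        have hb := hB0 u
        have hbx := hB0 x
        have hbm := hBM u
        have he := Real.exp_pos (2 * δ)
        refine (Set.indicator_le_self' (fun _ _ => mul_nonneg hb hk) u).trans ?_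
        simp only [Set.indicator, Set.mem_ofPred_eq]
        split_ifs with h3
        · have : 0 ≤ B x * Real.exp (2 * δ) * K (u - (x - δ)) := by positivity
          nlinarith [mul_le_mul_of_nonneg_right hbm hk]
        · rw [not_lt, abs_le] at h3
          have h5 := hmono u x (by linarith)
          have h6 : Real.exp (x - u) ≤ Real.exp (2 * δ) := Real.exp_le_exp.mpr (by linarith)
          rw [mul_zero, add_zero]
          exact mul_le_mul_of_nonneg_right (h5.trans (mul_le_mul_of_nonneg_left h6 hbx)) hk
      rw [integral_sub_right_eq_self (fun u => K u), hK1, mul_one] at this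
      rw [div_le_iff₀ (Real.exp_pos _)]
      nlinarith [mul_le_mul_of_nonneg_left hKt hM0]
  have t1 : Tendsto (fun η : ℝ => Real.exp (2 * η) * (1 + η) / (1 - η)) (𝓝[>] 0) (𝓝 1) := by
    have : ContinuousAt (fun η : ℝ => Real.exp (2 * η) * (1 + η) / (1 - η)) 0 := by
      refine ContinuousAt.div (by fun_prop) (by fun_prop) (by norm_num)
    have h := this.tendsto
    simp only [mul_zero, Real.exp_zero, add_zero, sub_zero, mul_one, div_one] at h
    exact h.mono_left nhdsWithin_le_nhds
  have t2 : Tendsto (fun η : ℝ => (1 - η - M * η) / Real.exp (2 * η)) (𝓝[>] 0) (𝓝 1) := by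
    have : ContinuousAt (fun η : ℝ => (1 - η - M * η) / Real.exp (2 * η)) 0 := by
      refine ContinuousAt.div (by fun_prop) (by fun_prop) (Real.exp_pos _).ne'
    have h := this.tendsto
    simp only [mul_zero, Real.exp_zero, sub_zero, div_one] at h
    exact h.mono_left nhdsWithin_le_nhds
  rw [Metric.tendsto_nhds]
  intro ε hε
  have hev : ∀ᶠ η : ℝ in 𝓝[>] 0, η < 1 := (gt_mem_nhds one_pos).filter_mono nhdsWithin_le_nhds
  obtain ⟨η, ⟨⟨h1, h2⟩, h3⟩, h4⟩ := (((t1.eventually (gt_mem_nhds (show (1:ℝ) < 1 + ε by linarith))).and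
    (t2.eventually (lt_mem_nhds (show 1 - ε < (1:ℝ) by linarith)))).and hev |>.and self_mem_nhdsWithin).exists
  filter_upwards [key η η h4 h4 h3] with x hx
  rw [Real.dist_eq, abs_lt]
  constructor <;> linarith [hx.1, hx.2]

noncomputable def pntB (u : ℝ) : ℝ := Chebyshev.psi (Real.exp u) * Real.exp (-u)

lemma pntB_nonneg (u : ℝ) : 0 ≤ pntB u := mul_nonneg (Chebyshev.psi_nonneg _) (Real.exp_pos _).le

lemma pntB_le (u : ℝ) : pntB u ≤ Real.log 4 + 4 := by
  have := Chebyshev.psi_le_const_mul_self (Real.exp_pos u).le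
  unfold pntB
  rw [Real.exp_neg, ← div_eq_mul_inv, div_le_iff₀ (Real.exp_pos u)]
  exact this

lemma pntB_meas : Measurable pntB := by
  unfold pntB
  exact (Chebyshev.psi_mono.measurable.comp Real.measurable_exp).mul (Real.measurable_exp.comp measurable_neg)

lemma pntB_mono (u v : ℝ) (h : u ≤ v) : pntB u ≤ pntB v * Real.exp (v - u) := by
  unfold pntB
  rw [mul_assoc, ← Real.exp_add, show -v + (v - u) = -u by ring]
  exact mul_le_mul_of_nonneg_right (Chebyshev.psi_mono (Real.exp_le_exp.mpr h)) (Real.exp_pos _).le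

open ArithmeticFunction ArithmeticFunction.vonMangoldt in
lemma exists_G : ∃ G : ℂ → ℂ, ContinuousOn G {s | 1 ≤ s.re} ∧ ∀ s : ℂ, 1 < s.re →
    IntegrableOn (fun u : ℝ => ((pntB u - 1 : ℝ) : ℂ) * Complex.exp (-(s - 1) * u)) (Set.Ioi 0) ∧
    ∫ u in Set.Ioi (0:ℝ), ((pntB u - 1 : ℝ) : ℂ) * Complex.exp (-(s - 1) * u) = G s := by
  refine ⟨fun s => (LFunctionResidueClassAux (q := 1) 1 s - 1) / s, ?_, ?_⟩
  · refine ContinuousOn.div ((continuousOn_LFunctionResidueClassAux (q := 1) 1).sub continuousOn_const) continuousOn_id ?_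
    intro s hs h0
    simp only [Set.mem_ofPred_eq] at hs h0
    rw [h0] at hs; simp at hs; linarith
  · intro s hs
    have hs0 : s ≠ 0 := by rintro rfl; simp at hs; linarith
    have hs1 : s - 1 ≠ 0 := by
      intro h; rw [sub_eq_zero] at h; rw [h] at hs; simp at hs
    have hneg : (-(s - 1)).re < 0 := by simp; linarith
    have hexp : IntegrableOn (fun u : ℝ => Complex.exp (-(s - 1) * u)) (Set.Ioi 0) :=
      integrableOn_exp_mul_complex_Ioi hneg 0
    have hBe : IntegrableOn (fun u : ℝ => ((pntB u : ℝ) : ℂ) * Complex.exp (-(s - 1) * u)) (Set.Ioi 0) := by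
      refine hexp.bdd_mul (c := Real.log 4 + 4) (Complex.measurable_ofReal.comp pntB_meas).aestronglyMeasurable ?_
      refine Eventually.of_forall fun u => ?_
      rw [Complex.norm_real, Real.norm_of_nonneg (pntB_nonneg u)]
      exact pntB_le u
    have heq : (fun u : ℝ => ((pntB u - 1 : ℝ) : ℂ) * Complex.exp (-(s - 1) * u)) =
      fun u : ℝ => ((pntB u : ℝ) : ℂ) * Complex.exp (-(s - 1) * u) - Complex.exp (-(s - 1) * u) := by
      ext u; push_cast; ring
    rw [heq]
    refine ⟨hBe.sub hexp, ?_⟩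
    rw [integral_sub hBe hexp, integral_exp_mul_complex_Ioi hneg 0]
    have hL := eqOn_LFunctionResidueClassAux (q := 1) (a := 1) isUnit_one (show s ∈ {s : ℂ | 1 < s.re} from hs)
    have hres : (fun n : ℕ => ((residueClass (1 : ZMod 1) n : ℝ) : ℂ)) = fun n : ℕ => ((vonMangoldt n : ℝ) : ℂ) := by
      ext n
      simp [residueClass, Set.indicator, Subsingleton.elim _ (1 : ZMod 1)]
    simp only [hres] at hL
    have hIntg := LSeries_eq_mul_integral_of_nonneg (fun n => vonMangoldt n) zero_le_one hs ?_ (fun n => vonMangoldt_nonneg)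
    swap
    · refine IsBigO.of_bound (Real.log 4 + 4) (Eventually.of_forall fun n => ?_)
      have := Chebyshev.psi_le_const_mul_self (Nat.cast_nonneg (α := ℝ) n)
      rw [Real.rpow_one, Real.norm_of_nonneg (Nat.cast_nonneg n), Real.norm_of_nonneg (Finset.sum_nonneg fun _ _ => vonMangoldt_nonneg)]
      rw [Chebyshev.psi, Nat.floor_natCast] at this
      exact this
    have hcv : ∫ t in Set.Ioi (1 : ℝ), (∑ k ∈ Finset.Icc 1 ⌊t⌋₊, (vonMangoldt k : ℂ)) * (t:ℂ) ^ (-(s + 1)) =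
        ∫ u in Set.Ioi (0:ℝ), ((pntB u : ℝ) : ℂ) * Complex.exp (-(s - 1) * u) := by
      have himg : Real.exp '' Set.Ioi 0 = Set.Ioi 1 := by
        ext t
        constructor
        · rintro ⟨u, hu, rfl⟩; exact Real.one_lt_exp_iff.mpr hu
        · intro ht
          exact ⟨Real.log t, Real.log_pos ht, Real.exp_log (lt_trans one_pos ht)⟩
      rw [← himg, integral_image_eq_integral_abs_deriv_smul measurableSet_Ioi
        (fun u _ => (Real.hasDerivAt_exp u).hasDerivWithinAt) Real.exp_injective.injOn]
      refine setIntegral_congr_fun measurableSet_Ioi fun u hu => ?_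
      have hp : (∑ k ∈ Finset.Icc 1 ⌊Real.exp u⌋₊, (vonMangoldt k : ℂ)) = ((Chebyshev.psi (Real.exp u) : ℝ) : ℂ) := by
        rw [Chebyshev.psi]; push_cast; rfl
      simp only [hp]
      rw [abs_of_pos (Real.exp_pos u), Complex.real_smul, pntB]
      rw [Complex.cpow_def_of_ne_zero (by simp), ← Complex.ofReal_log (Real.exp_pos u).le, Real.log_exp]
      push_cast
      rw [mul_left_comm, ← Complex.exp_add, mul_assoc, ← Complex.exp_add]
      congr 2
      ring
    rw [hcv] at hIntg
    beta_reduce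
    rw [hL, hIntg]
    generalize (∫ u in Set.Ioi (0:ℝ), ((pntB u : ℝ) : ℂ) * Complex.exp (-(s - 1) * u)) = J
    simp only [Complex.ofReal_zero, mul_zero, Complex.exp_zero, Nat.totient_one, Nat.cast_one, inv_one]
    field_simp
    ring

open FourierTransform in
lemma fourier_lim (b : ℝ → ℝ) (M : ℝ) (hbM : ∀ u, |b u| ≤ M) (hbm : Measurable b)
    (G : ℂ → ℂ) (hGc : ContinuousOn G {s | 1 ≤ s.re})
    (hG : ∀ s : ℂ, 1 < s.re →
      IntegrableOn (fun u : ℝ => ((b u : ℝ) : ℂ) * Complex.exp (-(s - 1) * u)) (Set.Ioi 0) ∧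
      ∫ u in Set.Ioi (0:ℝ), ((b u : ℝ) : ℂ) * Complex.exp (-(s - 1) * u) = G s)
    (φ : ℝ → ℂ) (K : ℝ → ℝ) (hφ : Continuous φ) (hφs : HasCompactSupport φ)
    (hF : ∀ v, 𝓕 φ v = (K v : ℂ)) (hKi : Integrable K) :
    Tendsto (fun x => ∫ u in Set.Ioi 0, b u * K (u - x)) atTop (𝓝 0) := by
  let e : ℝ → ℝ → ℂ := fun x ξ => Complex.exp (((2 * Real.pi * x * ξ : ℝ) : ℂ) * Complex.I)
  have hen : ∀ x ξ, ‖e x ξ‖ = 1 := fun x ξ => Complex.norm_exp_ofReal_mul_I _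
  have hec : ∀ x, Continuous (e x) := fun x => by fun_prop
  have hφi : Integrable φ := hφ.integrable_of_hasCompactSupport hφs
  let p : ℝ → ℝ → ℂ := fun ε ξ => ((1 + ε : ℝ) : ℂ) + ((2 * Real.pi * ξ : ℝ) : ℂ) * Complex.I
  have hpre : ∀ ε ξ, (p ε ξ).re = 1 + ε := fun ε ξ => by simp [p]
  -- identity for positive ε
  have hid : ∀ x ε : ℝ, 0 < ε → ∫ u in Set.Ioi (0:ℝ), (((b u * K (u - x)) * Real.exp (-ε * u) : ℝ) : ℂ) =
      ∫ ξ, (φ ξ * e x ξ) * G (p ε ξ) := by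
    intro x ε hε
    let g : ℝ → ℂ := Set.indicator (Set.Ioi 0) (fun u : ℝ => ((b u : ℝ) : ℂ) * ((Real.exp (-ε * u) : ℝ) : ℂ))
    have hgi : Integrable g := by
      rw [integrable_indicator_iff measurableSet_Ioi]
      refine (hG (p ε 0) (by rw [hpre]; linarith)).1.congr (Eventually.of_forall fun u => ?_)
      simp [p]
    have hFg : ∀ ξ, 𝓕 g ξ = G (p ε ξ) := by
      intro ξ
      rw [← (hG (p ε ξ) (by rw [hpre]; linarith)).2, Real.fourier_real_eq_integral_exp_smul,
        ← integral_indicator measurableSet_Ioi]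
      refine integral_congr_ae (Eventually.of_forall fun u => ?_)
      simp only [g, Set.indicator]
      split_ifs with h
      · rw [smul_eq_mul, mul_left_comm]
        congr 1
        rw [Complex.ofReal_exp, ← Complex.exp_add]
        congr 1
        simp only [p]; push_cast; ring
      · simp
    have hFf : ∀ u, 𝓕 (fun ξ => φ ξ * e x ξ) u = (K (u - x) : ℂ) := by
      intro u
      rw [← hF, Real.fourier_real_eq_integral_exp_smul, Real.fourier_real_eq_integral_exp_smul]
      refine integral_congr_ae (Eventually.of_forall fun ξ => ?_)
      simp only [e, smul_eq_mul]
      rw [mul_left_comm, ← Complex.exp_add, mul_comm]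
      congr 2
      push_cast; ring
    have hfi : Integrable (fun ξ => φ ξ * e x ξ) := by
      refine hφi.mul_bdd (c := 1) (hec x).aestronglyMeasurable (Eventually.of_forall fun ξ => (hen x ξ).le)
    have key : ∫ u, 𝓕 (fun ξ => φ ξ * e x ξ) u • g u = ∫ ξ, (φ ξ * e x ξ) • 𝓕 g ξ := by
      simpa using! VectorFourier.integral_bilin_fourierIntegral_eq_flip (ContinuousLinearMap.lsmul ℂ ℂ) (L := innerₗ ℝ) (μ := volume) (ν := volume)
        Real.continuous_fourierChar continuous_inner hfi hgi
    simp only [hFg, hFf, smul_eq_mul] at key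
    rw [← key, ← integral_indicator measurableSet_Ioi]
    refine integral_congr_ae (Eventually.of_forall fun u => ?_)
    simp only [g, Set.indicator]
    split_ifs
    · push_cast; ring
    · simp
  -- passage to the limit
  have hid0 : ∀ x : ℝ, ((∫ u in Set.Ioi (0:ℝ), b u * K (u - x) : ℝ) : ℂ) =
      ∫ ξ, (φ ξ * e x ξ) * G (p 0 ξ) := by
    intro x
    have hKx : Integrable (fun u => K (u - x)) := hKi.comp_sub_right x
    have l1 : Tendsto (fun ε : ℝ => ∫ u in Set.Ioi (0:ℝ), (((b u * K (u - x)) * Real.exp (-ε * u) : ℝ) : ℂ))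
        (𝓝[>] 0) (𝓝 (∫ u in Set.Ioi (0:ℝ), ((b u * K (u - x) : ℝ) : ℂ))) := by
      refine tendsto_integral_filter_of_dominated_convergence (fun u => M * |K (u - x)|) ?_ ?_ ?_ ?_
      · refine Eventually.of_forall fun ε => ?_
        refine Complex.continuous_ofReal.comp_aestronglyMeasurable ?_
        refine ((hbm.aestronglyMeasurable).mul hKx.aestronglyMeasurable.restrict).mul ?_
        exact Continuous.aestronglyMeasurable (by fun_prop)
      · filter_upwards [self_mem_nhdsWithin] with ε hε
        filter_upwards [ae_restrict_mem measurableSet_Ioi] with u hu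
        rw [Complex.norm_real, norm_mul, norm_mul, Real.norm_eq_abs, Real.norm_eq_abs, Real.norm_eq_abs, Real.abs_exp]
        have h1 : Real.exp (-ε * u) ≤ 1 := by
          rw [Real.exp_le_one_iff]
          have : 0 < ε * u := mul_pos hε hu
          linarith
        calc |b u| * |K (u - x)| * Real.exp (-ε * u) ≤ |b u| * |K (u - x)| * 1 := by gcongr
          _ ≤ M * |K (u - x)| := by rw [mul_one]; gcongr; exact hbM u
      · exact (hKx.abs.const_mul M).integrableOn
      · refine Eventually.of_forall fun u => ?_
        have : Continuous (fun ε : ℝ => (((b u * K (u - x)) * Real.exp (-ε * u) : ℝ) : ℂ)) := by fun_prop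
        have h := this.tendsto 0
        simp only [neg_zero, zero_mul, Real.exp_zero, mul_one] at h
        exact h.mono_left nhdsWithin_le_nhds
    have hpc : Continuous (fun q : ℝ × ℝ => p q.1 q.2) := by fun_prop
    have hGp : ContinuousOn (fun q : ℝ × ℝ => G (p q.1 q.2)) (Set.Icc 0 1 ×ˢ tsupport φ) := by
      refine hGc.comp hpc.continuousOn ?_
      rintro ⟨ε, ξ⟩ ⟨h1, h2⟩
      simp only [Set.mem_ofPred_eq, hpre]
      linarith [h1.1]
    obtain ⟨C, hC⟩ := (isCompact_Icc.prod hφs).exists_bound_of_continuousOn hGp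
    have hGcξ : ∀ ε, 0 ≤ ε → Continuous (fun ξ => G (p ε ξ)) := by
      intro ε hε
      rw [← continuousOn_univ]
      refine hGc.comp (by fun_prop) ?_
      intro ξ _
      simp only [Set.mem_ofPred_eq, hpre]; linarith
    have l2 : Tendsto (fun ε : ℝ => ∫ ξ, (φ ξ * e x ξ) * G (p ε ξ)) (𝓝[>] 0)
        (𝓝 (∫ ξ, (φ ξ * e x ξ) * G (p 0 ξ))) := by
      have hev : ∀ᶠ ε : ℝ in 𝓝[>] 0, ε ∈ Set.Ioo (0:ℝ) 1 := Ioo_mem_nhdsGT one_pos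
      refine tendsto_integral_filter_of_dominated_convergence (fun ξ => ‖φ ξ‖ * C) ?_ ?_ ?_ ?_
      · filter_upwards [hev] with ε hε
        exact ((hφ.mul (hec x)).mul (hGcξ ε hε.1.le)).aestronglyMeasurable
      · filter_upwards [hev] with ε hε
        refine Eventually.of_forall fun ξ => ?_
        rw [norm_mul, norm_mul, hen, mul_one]
        by_cases hξ : ξ ∈ tsupport φ
        · exact mul_le_mul_of_nonneg_left (hC (ε, ξ) ⟨⟨hε.1.le, hε.2.le⟩, hξ⟩) (norm_nonneg _)
        · rw [image_eq_zero_of_notMem_tsupport hξ]; simp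
      · exact hφi.norm.mul_const C
      · refine Eventually.of_forall fun ξ => ?_
        refine Tendsto.const_mul _ ?_
        have h0 : Tendsto (fun ε : ℝ => p ε ξ) (𝓝[>] 0) (𝓝[{s | 1 ≤ s.re}] (p 0 ξ)) := by
          refine tendsto_nhdsWithin_iff.mpr ⟨?_, ?_⟩
          · have : Continuous (fun ε : ℝ => p ε ξ) := by fun_prop
            exact (this.tendsto 0).mono_left nhdsWithin_le_nhds
          · filter_upwards [hev] with ε hε
            simp only [hpre]; linarith [hε.1]
        exact (hGc (p 0 ξ) (by simp [hpre])).tendsto.comp h0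
    rw [← integral_complex_ofReal]
    refine tendsto_nhds_unique l1 (l2.congr' ?_)
    filter_upwards [self_mem_nhdsWithin] with ε hε
    exact (hid x ε hε).symm
  -- Riemann-Lebesgue
  have hRL : Tendsto (fun x : ℝ => 𝓕 (fun ξ => φ ξ * G (p 0 ξ)) (-x)) atTop (𝓝 0) := by
    refine (Real.zero_at_infty_fourier (fun ξ => φ ξ * G (p 0 ξ))).comp ?_
    exact (tendsto_neg_atTop_atBot).mono_right atBot_le_cocompact
  have : Tendsto (fun x => ((∫ u in Set.Ioi (0:ℝ), b u * K (u - x) : ℝ) : ℂ)) atTop (𝓝 ((0:ℝ):ℂ)) := by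
    rw [Complex.ofReal_zero]
    refine hRL.congr fun x => ?_
    rw [hid0, Real.fourier_real_eq_integral_exp_smul]
    refine integral_congr_ae (Eventually.of_forall fun ξ => ?_)
    simp only [smul_eq_mul, e]
    rw [show -2 * Real.pi * ξ * -x = 2 * Real.pi * x * ξ by ring]
    ring
  have h2 := (Complex.continuous_re.tendsto _).comp this
  simpa [Function.comp_def] using h2


lemma pntB_tendsto : Tendsto pntB atTop (𝓝 1) := by
  refine tauber_step pntB _ pntB_nonneg pntB_le pntB_meas pntB_mono ?_
  intro δ η hδ hη
  obtain ⟨φ, K, hφ, hφs, hF, hK0, hKc, hKi, hK1, hKt⟩ := exists_kernel δ η hδ hη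
  refine ⟨K, hK0, hKi, hK1, hKt, ?_⟩
  obtain ⟨G, hGc, hG⟩ := exists_G
  have hlog : 0 ≤ Real.log 4 := Real.log_nonneg (by norm_num)
  have hb : ∀ u, |pntB u - 1| ≤ Real.log 4 + 4 := by
    intro u
    rw [abs_le]
    constructor <;> linarith [pntB_nonneg u, pntB_le u]
  have h0 := fourier_lim (fun u => pntB u - 1) _ hb (pntB_meas.sub_const 1) G hGc hG φ K hφ hφs hF hKi
  have h1 : Tendsto (fun x => ∫ u in Set.Ioi (0:ℝ), K (u - x)) atTop (𝓝 1) := by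
    have : ∀ x, ∫ u in Set.Ioi (0:ℝ), K (u - x) = ∫ v, Set.indicator (Set.Ioi (-x)) K v := by
      intro x
      rw [← integral_indicator measurableSet_Ioi, ← integral_sub_right_eq_self (fun v => Set.indicator (Set.Ioi (-x)) K v) x]
      refine integral_congr_ae (Eventually.of_forall fun u => ?_)
      simp only [Set.indicator, Set.mem_Ioi]
      congr 1
      simp
    simp_rw [this]
    rw [← hK1]
    refine tendsto_integral_filter_of_dominated_convergence (fun v => |K v|) ?_ ?_ hKi.abs ?_
    · exact Eventually.of_forall fun l => (hKi.indicator measurableSet_Ioi).aestronglyMeasurable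
    · refine Eventually.of_forall fun l => Eventually.of_forall fun v => ?_
      exact norm_indicator_le_norm_self _ _
    · refine Eventually.of_forall fun v => ?_
      refine tendsto_const_nhds.congr' ?_
      filter_upwards [eventually_gt_atTop (-v)] with x hx
      rw [Set.indicator_of_mem]
      simp only [Set.mem_Ioi]; linarith
  have h2 := h0.add h1
  rw [zero_add] at h2
  refine h2.congr fun x => ?_
  have hKx : Integrable (fun u => K (u - x)) := hKi.comp_sub_right x
  rw [← integral_add]
  · refine integral_congr_ae (Eventually.of_forall fun u => ?_)
    simp only; ring
  · refine (hKx.bdd_mul (c := Real.log 4 + 4) (pntB_meas.sub_const 1).aestronglyMeasurable ?_).integrableOn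
    exact Eventually.of_forall fun u => hb u
  · exact hKx.integrableOn

/-- The prime number theorem. -/
lemma psi_div_tendsto : Tendsto (fun x : ℝ => Chebyshev.psi x / x) atTop (𝓝 1) := by
  refine (pntB_tendsto.comp Real.tendsto_log_atTop).congr' ?_
  filter_upwards [eventually_gt_atTop 0] with x hx
  simp only [Function.comp, pntB]
  rw [Real.exp_neg, Real.exp_log hx, div_eq_mul_inv]

lemma psi_nat_bound (ε : ℝ) (hε : 0 < ε) : ∃ C : ℝ, 0 ≤ C ∧ ∀ y : ℕ, |Chebyshev.psi y - y| ≤ ε * y + C := by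
  have h := psi_div_tendsto.comp (tendsto_natCast_atTop_atTop (R := ℝ))
  rw [Metric.tendsto_atTop] at h
  obtain ⟨N, hN⟩ := h ε hε
  refine ⟨∑ y ∈ Finset.range (N + 1), |Chebyshev.psi y - y|, Finset.sum_nonneg fun _ _ => abs_nonneg _, fun y => ?_⟩
  by_cases hy : y ∈ Finset.range (N + 1)
  · have := Finset.single_le_sum (f := fun y : ℕ => |Chebyshev.psi y - y|) (fun _ _ => abs_nonneg _) hy
    have : 0 ≤ ε * y := by positivity
    linarith
  · have hy' : N < y := by simpa using hy
    have h1 := hN y hy'.le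
    simp only [Function.comp, Real.dist_eq] at h1
    have hy0 : (0:ℝ) < y := by exact_mod_cast (Nat.zero_le N).trans_lt hy'
    have : |Chebyshev.psi y - y| ≤ ε * y := by
      have h2 : Chebyshev.psi y - y = (Chebyshev.psi y / y - 1) * y := by field_simp
      rw [h2, abs_mul, abs_of_pos hy0]
      gcongr
    have : 0 ≤ ∑ y ∈ Finset.range (N + 1), |Chebyshev.psi y - y| := Finset.sum_nonneg fun _ _ => abs_nonneg _
    linarith

/-- odd primes up to n -/
def oddPr (n : ℕ) : Finset ℕ := (Finset.range (n + 1)).filter (fun p => p.Prime ∧ Odd p)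

lemma pi_le_oddPr (n : ℕ) : Nat.primeCounting n ≤ (oddPr n).card + 1 := by
  rw [Nat.primeCounting, Nat.primeCounting', Nat.count_eq_card_filter_range]
  have : (Finset.range (n + 1)).filter Nat.Prime ⊆ insert 2 (oddPr n) := by
    intro p hp
    simp only [Finset.mem_filter, oddPr, Finset.mem_insert] at hp ⊢
    rcases hp.2.eq_two_or_odd' with h | h
    · exact Or.inl h
    · exact Or.inr ⟨hp.1, hp.2, h⟩
  exact (Finset.card_le_card this).trans (Finset.card_insert_le _ _)

lemma oddPr_mul_log_le (c : ℝ) (hc : 0 < c) (N y : ℕ) (hN : 1 ≤ N) :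
    c * Real.log N * (oddPr y).card ≤ Chebyshev.psi y + (N : ℝ) ^ c * (c * Real.log N) := by
  have hlog : 0 ≤ Real.log N := Real.log_natCast_nonneg N
  have hcl : 0 ≤ c * Real.log N := mul_nonneg hc.le hlog
  have hN0 : (0:ℝ) < N := by exact_mod_cast hN
  have hpt : ∀ p ∈ oddPr y, c * Real.log N ≤ Real.log p + if (p:ℝ) ≤ (N:ℝ)^c then c * Real.log N else 0 := by
    intro p hp
    have hp' := (Finset.mem_filter.mp hp).2.1
    have hl : 0 ≤ Real.log p := Real.log_natCast_nonneg p
    split_ifs with h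
    · linarith
    · rw [not_le] at h
      have := Real.log_le_log (by positivity) h.le
      rw [Real.log_rpow hN0] at this
      linarith
  have hs := Finset.sum_le_sum hpt
  rw [Finset.sum_const, nsmul_eq_mul, Finset.sum_add_distrib, ← Finset.sum_filter, Finset.sum_const, nsmul_eq_mul] at hs
  have h1 : ∑ p ∈ oddPr y, Real.log p ≤ Chebyshev.psi y := by
    refine le_trans ?_ (Chebyshev.theta_le_psi y)
    rw [Chebyshev.theta_eq_sum_Icc, Nat.floor_natCast]
    refine Finset.sum_le_sum_of_subset_of_nonneg ?_ (fun p _ _ => Real.log_natCast_nonneg p)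
    intro p hp
    simp only [oddPr, Finset.mem_filter, Finset.mem_range, Finset.mem_Icc] at hp ⊢
    exact ⟨⟨Nat.zero_le _, by omega⟩, hp.2.1⟩
  have h2 : (((oddPr y).filter (fun p : ℕ => (p:ℝ) ≤ (N:ℝ)^c)).card : ℝ) ≤ (N:ℝ)^c := by
    have hsub : (oddPr y).filter (fun p : ℕ => (p:ℝ) ≤ (N:ℝ)^c) ⊆ Finset.Icc 1 ⌊(N:ℝ)^c⌋₊ := by
      intro p hp
      simp only [oddPr, Finset.mem_filter, Finset.mem_Icc] at hp ⊢
      exact ⟨hp.1.2.1.one_lt.le, Nat.le_floor hp.2⟩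
    have := Finset.card_le_card hsub
    rw [Nat.card_Icc, Nat.add_sub_cancel] at this
    exact (Nat.cast_le.mpr this).trans (Nat.floor_le (by positivity))
  have h3 := mul_le_mul_of_nonneg_right h2 hcl
  linarith

lemma rpow_log_small (c : ℝ) (hc1 : c < 1) (ε C : ℝ) (hε : 0 < ε) :
    ∀ᶠ N : ℕ in atTop, C + (N:ℝ) ^ c * Real.log N ≤ ε * N := by
  have h1 : (fun x : ℝ => x ^ c * Real.log x) =o[atTop] (fun x : ℝ => x) := by
    have h := (isLittleO_log_rpow_atTop (show 0 < 1 - c by linarith))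
    have h2 := (isBigO_refl (fun x : ℝ => x ^ c) atTop).mul_isLittleO h
    refine h2.congr' (EventuallyEq.refl _ _) ?_
    filter_upwards [eventually_gt_atTop 0] with x hx
    rw [← Real.rpow_add hx]; simp
  have h2 : (fun _ : ℝ => C) =o[atTop] (fun x : ℝ => x) := isLittleO_const_id_atTop C
  have h3 := (h2.add h1).bound hε
  filter_upwards [tendsto_natCast_atTop_atTop.eventually h3] with N hN
  rw [Real.norm_of_nonneg (Nat.cast_nonneg N)] at hN
  exact (le_abs_self _).trans hN

lemma oddPr_unif (ε : ℝ) (hε : 0 < ε) : ∀ᶠ N : ℕ in atTop, ∀ y ≤ N,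
    |(oddPr y).card * Real.log N - y| ≤ ε * N := by
  -- choose a small parameter
  obtain ⟨d, hd, hd1, hd2⟩ : ∃ d : ℝ, 0 < d ∧ d ≤ 1 ∧ 3 * d ≤ ε / 2 := by
    refine ⟨min 1 (ε / 6), by positivity, min_le_left _ _, ?_⟩
    linarith [min_le_right 1 (ε / 6)]
  obtain ⟨C, hC0, hC⟩ := psi_nat_bound d hd
  have hc1 : (1 + d)⁻¹ < 1 := inv_lt_one_of_one_lt₀ (by linarith)
  filter_upwards [rpow_log_small _ hc1 (ε / 2) (2 * C) (by positivity),
    rpow_log_small 0 one_pos (ε / 2) C (by positivity), eventually_ge_atTop 1] with N h1 h2 hN y hy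
  have hyN : (y:ℝ) ≤ N := by exact_mod_cast hy
  have hy0 : (0:ℝ) ≤ y := Nat.cast_nonneg y
  have hlog : 0 ≤ Real.log N := Real.log_natCast_nonneg N
  obtain ⟨hCl, hCu⟩ := abs_le.mp (hC y)
  rw [Real.rpow_zero, one_mul] at h2
  rw [abs_le]
  constructor
  · have h3 := Chebyshev.psi_le_primeCounting_mul_log y
    have h4 : (Nat.primeCounting y : ℝ) ≤ (oddPr y).card + 1 := by exact_mod_cast pi_le_oddPr y
    have h5 : Real.log y ≤ Real.log N := by
      rcases Nat.eq_zero_or_pos y with rfl | h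
      · simpa using hlog
      · exact Real.log_le_log (by exact_mod_cast h) hyN
    have h6 : (Nat.primeCounting y : ℝ) * Real.log y ≤ ((oddPr y).card + 1) * Real.log N :=
      mul_le_mul h4 h5 (Real.log_natCast_nonneg y) (by positivity)
    have h7 : d * y ≤ d * N := by gcongr
    have h8 : d * N ≤ ε / 2 * N := by
      have : d ≤ ε / 2 := by linarith
      gcongr
    nlinarith
  · have h3 := oddPr_mul_log_le (1 + d)⁻¹ (by positivity) N y hN
    have h4 := mul_le_mul_of_nonneg_left h3 (show 0 ≤ 1 + d by linarith)
    have e1 : (1 + d) * ((1 + d)⁻¹ * Real.log N * (oddPr y).card) = (oddPr y).card * Real.log N := by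
      field_simp
    have e2 : (1 + d) * (Chebyshev.psi y + (N : ℝ) ^ (1 + d)⁻¹ * ((1 + d)⁻¹ * Real.log N)) =
      (1 + d) * Chebyshev.psi y + (N : ℝ) ^ (1 + d)⁻¹ * Real.log N := by
      field_simp
    rw [e1, e2] at h4
    have h5 : (1 + d) * Chebyshev.psi y ≤ (1 + d) * (y + d * y + C) := by
      gcongr; linarith
    have h6 : (1 + d) * C ≤ 2 * C := by gcongr; linarith
    have h7 : (1 + d) * (y + d * y) ≤ y + 3 * d * y := by nlinarith [mul_nonneg hd.le hy0]
    have h8 : 3 * d * y ≤ ε / 2 * N := by gcongr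
    nlinarith


noncomputable def TT (y : ℕ) : ℝ := ∑ p ∈ oddPr y, ((oddPr (y - p)).card : ℝ)

lemma sum_sub_oddPr (y : ℕ) : ∑ p ∈ oddPr y, ((y - p : ℕ) : ℝ) = ∑ j ∈ Finset.range y, ((oddPr j).card : ℝ) := by
  induction y with
  | zero => simp [oddPr]
  | succ y ih =>
    rw [Finset.sum_range_succ, ← ih]
    have hsub : oddPr y ⊆ oddPr (y + 1) := by
      intro p hp
      simp only [oddPr, Finset.mem_filter, Finset.mem_range] at hp ⊢
      exact ⟨by omega, hp.2⟩
    rw [← Finset.sum_subset hsub]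
    · rw [Finset.cast_card, ← Finset.sum_add_distrib]
      refine Finset.sum_congr rfl fun p hp => ?_
      simp only [oddPr, Finset.mem_filter, Finset.mem_range] at hp
      rw [show y + 1 - p = (y - p) + 1 by omega]; push_cast; ring
    · intro p hp hp'
      simp only [oddPr, Finset.mem_filter, Finset.mem_range] at hp hp'
      have : y + 1 - p = 0 := by
        by_contra h
        exact hp' ⟨by omega, hp.2⟩
      simp [this]

lemma sum_range_real (y : ℕ) : ∑ j ∈ Finset.range y, (j:ℝ) = (y:ℝ) * (y - 1) / 2 := by
  induction y with
  | zero => simp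
  | succ y ih => rw [Finset.sum_range_succ, ih]; push_cast; ring

lemma TT_unif (ε : ℝ) (hε : 0 < ε) : ∀ᶠ N : ℕ in atTop, ∀ y ≤ N,
    |TT y * Real.log N ^ 2 - (y:ℝ) ^ 2 / 2| ≤ ε * (N:ℝ) ^ 2 := by
  obtain ⟨d, hd, hd1, hd2⟩ : ∃ d : ℝ, 0 < d ∧ d ≤ 1 ∧ 4 * d ≤ ε := by
    refine ⟨min 1 (ε / 4), by positivity, min_le_left _ _, ?_⟩
    linarith [min_le_right 1 (ε / 4)]
  have hlarge : ∀ᶠ N : ℕ in atTop, 1 / d ≤ (N:ℝ) := tendsto_natCast_atTop_atTop.eventually_ge_atTop _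
  filter_upwards [oddPr_unif d hd, hlarge] with N hN hNd y hy
  have hlog : 0 ≤ Real.log N := Real.log_natCast_nonneg N
  have hyN : (y:ℝ) ≤ N := by exact_mod_cast hy
  have hy0 : (0:ℝ) ≤ y := Nat.cast_nonneg y
  have hdN : 1 ≤ d * N := by rw [div_le_iff₀ hd] at hNd; linarith
  set l := Real.log N with hl
  have s1 : |TT y * l ^ 2 - l * ∑ p ∈ oddPr y, ((y - p : ℕ) : ℝ)| ≤ l * ((oddPr y).card * (d * N)) := by
    have : TT y * l ^ 2 - l * ∑ p ∈ oddPr y, ((y - p : ℕ) : ℝ) =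
        l * ∑ p ∈ oddPr y, (((oddPr (y - p)).card : ℝ) * l - ((y - p : ℕ) : ℝ)) := by
      rw [Finset.sum_sub_distrib, ← Finset.sum_mul, TT]; ring
    rw [this, abs_mul, abs_of_nonneg hlog]
    refine mul_le_mul_of_nonneg_left ?_ hlog
    refine (Finset.abs_sum_le_sum_abs _ _).trans ?_
    rw [← nsmul_eq_mul]
    exact Finset.sum_le_card_nsmul _ _ _ fun p _ => hN (y - p) (by omega)
  have s2 : l * ((oddPr y).card * (d * N)) ≤ 2 * d * (N:ℝ) ^ 2 := by
    have h := (abs_le.mp (hN y hy)).2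
    have h' : (oddPr y).card * l ≤ 2 * N := by nlinarith [Nat.cast_nonneg (α := ℝ) N]
    have h2 := mul_le_mul_of_nonneg_right h' (show 0 ≤ d * N by linarith)
    nlinarith
  have s3 : |l * ∑ j ∈ Finset.range y, ((oddPr j).card : ℝ) - ∑ j ∈ Finset.range y, (j:ℝ)| ≤ y * (d * N) := by
    rw [Finset.mul_sum, ← Finset.sum_sub_distrib]
    refine (Finset.abs_sum_le_sum_abs _ _).trans ?_
    have := Finset.sum_le_card_nsmul (Finset.range y) (fun j => |l * ((oddPr j).card : ℝ) - j|) (d * N) (fun j hj => by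
      rw [mul_comm l]; exact hN j (by have := Finset.mem_range.mp hj; omega))
    rwa [Finset.card_range, nsmul_eq_mul] at this
  have s4 : (y:ℝ) * (d * N) ≤ d * (N:ℝ) ^ 2 := by nlinarith [mul_le_mul_of_nonneg_right hyN (show 0 ≤ d * N by linarith)]
  rw [sum_range_real] at s3
  rw [sum_sub_oddPr] at s1
  have s5 : (y:ℝ) / 2 ≤ d * (N:ℝ) ^ 2 := by nlinarith [Nat.cast_nonneg (α := ℝ) N]
  have s6 : 4 * d * (N:ℝ) ^ 2 ≤ ε * (N:ℝ) ^ 2 := by gcongr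
  obtain ⟨a1, a2⟩ := abs_le.mp s1
  obtain ⟨b1, b2⟩ := abs_le.mp s3
  rw [abs_le]
  constructor <;> nlinarith

def rr (k : ℕ) : Finset (ℕ × ℕ) := (Finset.range (2 * k + 1) ×ˢ Finset.range (2 * k + 1)).filter
    (fun pq => pq.1.Prime ∧ pq.2.Prime ∧ Odd pq.1 ∧ Odd pq.2 ∧ pq.1 + pq.2 = 2 * k)

lemma rr_Q2 (k : ℕ) : (rr k).card ≤ 2 * Q2 k ∧ 2 * Q2 k ≤ (rr k).card + 1 := by
  set a := (rr k).filter (fun pq => pq.1 ≤ pq.2) with ha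
  set b := (rr k).filter (fun pq => pq.2 ≤ pq.1) with hb
  have hQ : Q2 k = a.card := by
    rw [Q2, ha, rr, Finset.filter_filter]
    congr 1
    ext pq
    simp only [Finset.mem_filter]
    tauto
  have hab : a.card = b.card := by
    refine Finset.card_bij (fun pq _ => (pq.2, pq.1)) ?_ ?_ ?_
    · rintro ⟨p, q⟩ h
      simp only [ha, hb, rr, Finset.mem_filter, Finset.mem_product] at h ⊢
      rw [add_comm q p]; tauto
    · rintro ⟨p, q⟩ _ ⟨p', q'⟩ _ h
      simp only [Prod.mk.injEq] at h ⊢; tauto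
    · rintro ⟨p, q⟩ h
      refine ⟨(q, p), ?_, rfl⟩
      simp only [ha, hb, rr, Finset.mem_filter, Finset.mem_product] at h ⊢
      rw [add_comm q p]; tauto
  have hu : a ∪ b = rr k := by
    ext ⟨p, q⟩
    simp only [ha, hb, Finset.mem_union, Finset.mem_filter]
    have := le_total p q
    tauto
  have hi : (a ∩ b).card ≤ 1 := by
    have : a ∩ b ⊆ {(k, k)} := by
      rintro ⟨p, q⟩ h
      simp only [ha, hb, rr, Finset.mem_inter, Finset.mem_filter, Finset.mem_singleton, Prod.mk.injEq] at h ⊢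
      omega
    simpa using Finset.card_le_card this
  have := Finset.card_union_add_card_inter a b
  rw [hu] at this
  omega

lemma sum_rr (n : ℕ) : ∑ k ∈ Finset.Icc 3 n, ((rr k).card : ℝ) = TT (2 * n) := by
  let S : Finset (Σ _ : ℕ, ℕ) := (oddPr (2 * n)).sigma (fun p => oddPr (2 * n - p))
  have h1 : TT (2 * n) = (S.card : ℝ) := by
    rw [Finset.card_sigma]; push_cast; rfl
  rw [h1]
  have h2 : S.card = ∑ k ∈ Finset.Icc 3 n, (S.filter (fun x => (x.1 + x.2) / 2 = k)).card := by
    refine Finset.card_eq_sum_card_fiberwise ?_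
    rintro ⟨p, q⟩ h
    simp only [S, oddPr, Finset.mem_sigma, Finset.mem_coe, Finset.mem_filter, Finset.mem_range, Finset.mem_Icc] at h ⊢
    have := h.1.2.1.two_le
    have := h.2.2.1.two_le
    obtain ⟨a, ha⟩ := h.1.2.2
    obtain ⟨b, hb⟩ := h.2.2.2
    omega
  rw [h2]
  push_cast
  refine Finset.sum_congr rfl fun k hk => ?_
  rw [Finset.mem_Icc] at hk
  congr 1
  refine Finset.card_bij (fun pq _ => ⟨pq.1, pq.2⟩) ?_ ?_ ?_
  · rintro ⟨p, q⟩ h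
    simp only [S, rr, oddPr, Finset.mem_sigma, Finset.mem_filter, Finset.mem_range, Finset.mem_product] at h ⊢
    obtain ⟨_, h1, h2, h3, h4, h5⟩ := h
    refine ⟨⟨⟨by omega, h1, h3⟩, ⟨by omega, h2, h4⟩⟩, by omega⟩
  · rintro ⟨p, q⟩ _ ⟨p', q'⟩ _ h
    simpa using h
  · rintro ⟨p, q⟩ h
    refine ⟨(p, q), ?_, rfl⟩
    simp only [S, rr, oddPr, Finset.mem_sigma, Finset.mem_filter, Finset.mem_range, Finset.mem_product] at h ⊢
    obtain ⟨⟨⟨_, h1, h3⟩, ⟨_, h2, h4⟩⟩, h5⟩ := h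
    obtain ⟨a, ha⟩ := h3
    obtain ⟨b, hb⟩ := h4
    refine ⟨⟨by omega, by omega⟩, h1, h2, ⟨a, ha⟩, ⟨b, hb⟩, by omega⟩

noncomputable def AA (n : ℕ) : ℝ := ∑ k ∈ Finset.Icc 3 n, (Q2 k : ℝ)

lemma AA_TT (n : ℕ) : TT (2 * n) ≤ 2 * AA n ∧ 2 * AA n ≤ TT (2 * n) + n := by
  rw [← sum_rr, AA, Finset.mul_sum]
  constructor
  · refine Finset.sum_le_sum fun k _ => ?_
    exact_mod_cast (rr_Q2 k).1
  · have : ∑ k ∈ Finset.Icc 3 n, (2 * (Q2 k : ℝ)) ≤ ∑ k ∈ Finset.Icc 3 n, (((rr k).card : ℝ) + 1) := by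
      refine Finset.sum_le_sum fun k _ => ?_
      exact_mod_cast (rr_Q2 k).2
    refine this.trans ?_
    rw [Finset.sum_add_distrib, Finset.sum_const, nsmul_eq_mul, mul_one, Nat.card_Icc]
    gcongr
    omega

lemma AA_unif (ε : ℝ) (hε : 0 < ε) : ∀ᶠ n : ℕ in atTop, ∀ k ≤ n,
    |AA k * Real.log (2 * n : ℕ) ^ 2 - (k:ℝ) ^ 2| ≤ ε * (n:ℝ) ^ 2 := by
  have ht : Tendsto (fun n : ℕ => 2 * n) atTop atTop := tendsto_id.const_mul_atTop' two_pos
  have hsmall : ∀ᶠ n : ℕ in atTop, Real.log (2 * n : ℕ) ^ 2 ≤ ε * n := by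
    have h := (Real.isLittleO_pow_log_id_atTop (n := 2)).bound (show 0 < ε / 2 by positivity)
    filter_upwards [(tendsto_natCast_atTop_atTop.comp ht).eventually h] with n hn
    simp only [Function.comp, id] at hn
    rw [Real.norm_of_nonneg (by positivity), Real.norm_of_nonneg (by positivity)] at hn
    push_cast at hn ⊢
    linarith
  filter_upwards [ht.eventually (TT_unif (ε / 4) (by positivity)), hsmall] with n h1 h2 k hk
  have h3 := h1 (2 * k) (by omega)
  obtain ⟨h4, h5⟩ := AA_TT k
  set l := Real.log (2 * n : ℕ) ^ 2
  have hl : 0 ≤ l := by positivity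
  have hkn : (k:ℝ) ≤ n := by exact_mod_cast hk
  have h6 : (k:ℝ) * l ≤ n * (ε * n) := mul_le_mul hkn h2 hl (by positivity)
  have h7 := mul_le_mul_of_nonneg_right h4 hl
  have h8 := mul_le_mul_of_nonneg_right h5 hl
  obtain ⟨a, b⟩ := abs_le.mp h3
  push_cast at a b
  rw [abs_le]
  constructor <;> nlinarith

lemma sum_k_Q2 (n : ℕ) : ∑ k ∈ Finset.Icc 3 n, (k : ℝ) * (Q2 k : ℝ) = n * AA n - ∑ k ∈ Finset.range n, AA k := by
  induction n with
  | zero => simp [AA]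
  | succ n ih =>
    rw [Finset.sum_range_succ]
    by_cases h : 3 ≤ n + 1
    · have hA : AA (n + 1) = AA n + Q2 (n + 1) := by
        rw [AA, AA, Finset.sum_Icc_succ_top h]
      rw [Finset.sum_Icc_succ_top h, ih, hA]
      push_cast; ring
    · have e : Finset.Icc 3 (n + 1) = ∅ := Finset.Icc_eq_empty h
      have e' : Finset.Icc 3 n = ∅ := Finset.Icc_eq_empty (by omega)
      have hA : AA (n + 1) = 0 := by rw [AA, e]; simp
      have hA' : AA n = 0 := by rw [AA, e']; simp
      rw [e'] at ih
      rw [e, hA, hA']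
      rw [hA'] at ih
      simp at ih ⊢
      exact ih

lemma sum_range_sq_real (y : ℕ) : ∑ j ∈ Finset.range y, (j:ℝ) ^ 2 = (y:ℝ) ^ 3 / 3 - (y:ℝ) ^ 2 / 2 + y / 6 := by
  induction y with
  | zero => simp
  | succ y ih => rw [Finset.sum_range_succ, ih]; push_cast; ring

lemma lim_AA : Tendsto (fun n : ℕ => AA n * Real.log (2 * n : ℕ) ^ 2 / (n:ℝ) ^ 2) atTop (𝓝 1) := by
  rw [Metric.tendsto_nhds]
  intro ε hε
  filter_upwards [AA_unif (ε / 2) (by positivity), eventually_gt_atTop 0] with n hn h0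
  have h0' : (0:ℝ) < (n:ℝ) ^ 2 := by positivity
  rw [Real.dist_eq, div_sub_one h0'.ne', abs_div, abs_of_pos h0', div_lt_iff₀ h0']
  refine (hn n le_rfl).trans_lt ?_
  gcongr
  linarith

lemma lim_sum_AA : Tendsto (fun n : ℕ => (∑ k ∈ Finset.range n, AA k) * Real.log (2 * n : ℕ) ^ 2 / (n:ℝ) ^ 3) atTop (𝓝 (1 / 3)) := by
  rw [Metric.tendsto_nhds]
  intro ε hε
  have hlarge : ∀ᶠ N : ℕ in atTop, 2 / ε ≤ (N:ℝ) := tendsto_natCast_atTop_atTop.eventually_ge_atTop _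
  filter_upwards [AA_unif (ε / 4) (by positivity), eventually_gt_atTop 0, hlarge] with n hn h0 hl
  have h1 : (1:ℝ) ≤ n := by exact_mod_cast h0
  have h0' : (0:ℝ) < (n:ℝ) ^ 3 := by positivity
  have hs : |(∑ k ∈ Finset.range n, AA k) * Real.log (2 * n : ℕ) ^ 2 - ∑ j ∈ Finset.range n, (j:ℝ) ^ 2| ≤ n * (ε / 4 * (n:ℝ) ^ 2) := by
    rw [Finset.sum_mul, ← Finset.sum_sub_distrib]
    refine (Finset.abs_sum_le_sum_abs _ _).trans ?_
    have := Finset.sum_le_card_nsmul (Finset.range n) (fun k => |AA k * Real.log (2 * n : ℕ) ^ 2 - (k:ℝ) ^ 2|) _ (fun j hj => hn j (Finset.mem_range.mp hj).le)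
    rwa [Finset.card_range, nsmul_eq_mul] at this
  rw [sum_range_sq_real] at hs
  have h2 : (2:ℝ) ≤ ε * n := by rw [div_le_iff₀ hε] at hl; linarith
  have h3 : (n:ℝ) ^ 2 * 2 ≤ ε * (n:ℝ) ^ 3 := by nlinarith [sq_nonneg (n:ℝ)]
  have h4 : (n:ℝ) ≤ (n:ℝ) ^ 2 := by nlinarith
  have e : (∑ k ∈ Finset.range n, AA k) * Real.log (2 * n : ℕ) ^ 2 / (n:ℝ) ^ 3 - 1 / 3 =
    ((∑ k ∈ Finset.range n, AA k) * Real.log (2 * n : ℕ) ^ 2 - (n:ℝ) ^ 3 / 3) / (n:ℝ) ^ 3 := by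
    field_simp
  rw [Real.dist_eq, e, abs_div, abs_of_pos h0', div_lt_iff₀ h0']
  obtain ⟨a, b⟩ := abs_le.mp hs
  have h5 : 0 < ε * (n:ℝ) ^ 3 := by positivity
  rw [abs_lt]
  constructor <;> nlinarith

/-- The limit of `(Σ_{2<k≤n} k·Q₂(2k)) / (n · Σ_{2<k≤n} Q₂(2k))` as `n → ∞` is `2/3`;
equivalently, `E(Gₙ)/n → 2/3` for a uniformly random Goldbach partition from `(4, 2n]`. -/
theorem mean_goldbach_number :
    Tendsto (fun n : ℕ =>
        (∑ k ∈ Finset.Icc 3 n, (k : ℝ) * (Q2 k : ℝ)) /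
          ((n : ℝ) * ∑ k ∈ Finset.Icc 3 n, (Q2 k : ℝ)))
      atTop (𝓝 (2 / 3)) := by
  have h1 : Tendsto (fun n : ℕ => 1 - (∑ k ∈ Finset.range n, AA k) * Real.log (2 * n : ℕ) ^ 2 / (n:ℝ) ^ 3 /
      (AA n * Real.log (2 * n : ℕ) ^ 2 / (n:ℝ) ^ 2)) atTop (𝓝 (1 - 1 / 3 / 1)) :=
    (lim_sum_AA.div lim_AA one_ne_zero).const_sub 1
  rw [show (1 - 1 / 3 / 1 : ℝ) = 2 / 3 by norm_num] at h1
  refine h1.congr' ?_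
  filter_upwards [eventually_gt_atTop 0, lim_AA.eventually (lt_mem_nhds (show (0:ℝ) < 1 by norm_num))] with n hn h
  have hn' : (0:ℝ) < n := by exact_mod_cast hn
  have hA : AA n ≠ 0 := by
    intro h0; rw [h0] at h; simp at h
  have hL : Real.log (2 * n : ℕ) ≠ 0 := by
    intro h0; rw [h0] at h; simp at h
  rw [sum_k_Q2, show (∑ k ∈ Finset.Icc 3 n, (Q2 k : ℝ)) = AA n from rfl]
  field_simp
end

section
/- Let Q₂(2k) denote the number of Goldbach partitions of the even integer 2k, and let Gₙ be half the even number partitioned by a uniformly random Goldbach partition from the set of all Goldbach partitions of even integers in (4, 2n]. Then lim_{n→∞} Var(Gₙ)/n² = 1/18; equivalently, (Σ_{2<k≤n} k²·Q₂(2k))/(n² Σ_{2<k≤n} Q₂(2k)) − ((Σ_{2<k≤n} k·Q₂(2k))/(n Σ_{2<k≤n} Q₂(2k)))² → 1/18 as n → ∞. -/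
open Filter Topology Asymptotics MeasureTheory

namespace GB
open Chebyshev FourierTransform

/-- normalised Chebyshev function -/
noncomputable def hh (u : ℝ) : ℝ := psi (Real.exp u) * Real.exp (-u)

noncomputable def FF (s : ℂ) : ℂ :=
  ArithmeticFunction.vonMangoldt.LFunctionResidueClassAux (q := 1) 1 s

lemma FF_cont : ContinuousOn FF {s | 1 ≤ s.re} :=
  ArithmeticFunction.vonMangoldt.continuousOn_LFunctionResidueClassAux (q := 1) 1

lemma FF_eq {s : ℂ} (hs : 1 < s.re) :
    FF s = LSeries (fun n => (ArithmeticFunction.vonMangoldt n : ℂ)) s - 1 / (s - 1) := by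
  have h := ArithmeticFunction.vonMangoldt.eqOn_LFunctionResidueClassAux (q := 1) (a := 1)
    isUnit_one (x := s) hs
  unfold FF
  rw [h]
  have : ∀ n : ℕ, ((n : ℕ) : ZMod 1) = 1 := fun n => Subsingleton.elim _ _
  simp [Set.indicator, ArithmeticFunction.vonMangoldt.residueClass, this]

lemma psi_sum (n : ℕ) : ∑ k ∈ Finset.Icc 1 n, ArithmeticFunction.vonMangoldt k = psi n := by
  unfold psi
  rw [Nat.floor_natCast]
  rfl

lemma LS_eq {s : ℂ} (hs : 1 < s.re) :
    LSeries (fun n => (ArithmeticFunction.vonMangoldt n : ℂ)) s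
      = s * ∫ t in Set.Ioi (1 : ℝ), (psi t : ℂ) * (t : ℂ) ^ (-(s + 1)) := by
  rw [LSeries_eq_mul_integral_of_nonneg (fun n => ArithmeticFunction.vonMangoldt n)
    (zero_le_one) hs ?_ (fun n => ArithmeticFunction.vonMangoldt_nonneg)]
  · congr 1
    apply setIntegral_congr_fun measurableSet_Ioi
    intro t ht
    have := psi_sum ⌊t⌋₊
    rw [← psi_eq_psi_coe_floor] at this
    simp only [← this]
    push_cast
    rfl
  · refine IsBigO.of_bound (Real.log 4 + 4) (Eventually.of_forall fun n => ?_)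
    rw [psi_sum, Real.norm_of_nonneg (psi_nonneg _), Real.rpow_one, Real.norm_of_nonneg (by positivity)]
    exact psi_le_const_mul_self (by positivity)

lemma exp_image : Real.exp '' Set.Ioi (0:ℝ) = Set.Ioi 1 := by
  ext x
  constructor
  · rintro ⟨u, hu, rfl⟩
    exact Real.one_lt_exp_iff.2 hu
  · intro hx
    have hx' : (1:ℝ) < x := hx
    exact ⟨Real.log x, Real.log_pos hx', Real.exp_log (by linarith)⟩

lemma cov (s : ℂ) : ∫ t in Set.Ioi (1 : ℝ), (psi t : ℂ) * (t : ℂ) ^ (-(s + 1))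
    = ∫ u in Set.Ioi (0:ℝ), (hh u : ℂ) * Complex.exp (-(s - 1) * u) := by
  rw [← exp_image, integral_image_eq_integral_abs_deriv_smul measurableSet_Ioi
    (fun x _ => (Real.hasDerivAt_exp x).hasDerivWithinAt) Real.exp_injective.injOn]
  apply setIntegral_congr_fun measurableSet_Ioi
  intro u hu
  simp only [hh, Real.abs_exp, Complex.real_smul]
  rw [Complex.cpow_def_of_ne_zero (by simp),
    ← Complex.ofReal_log (Real.exp_pos u).le, Real.log_exp]
  push_cast
  have e : Complex.exp u * Complex.exp (u * -(s+1)) = Complex.exp (-u) * Complex.exp (-(s-1)*u) := by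
    rw [← Complex.exp_add, ← Complex.exp_add]; ring_nf
  linear_combination (psi (Real.exp u) : ℂ) * e

lemma hh_nonneg (u : ℝ) : 0 ≤ hh u := mul_nonneg (psi_nonneg _) (Real.exp_pos _).le

lemma hh_le (u : ℝ) : hh u ≤ Real.log 4 + 4 := by
  have := psi_le_const_mul_self (Real.exp_pos u).le
  unfold hh
  calc _ ≤ (Real.log 4 + 4) * Real.exp u * Real.exp (-u) := by gcongr
    _ = _ := by rw [mul_assoc, ← Real.exp_add]; simp

lemma hh_abs (u : ℝ) : |hh u - 1| ≤ Real.log 4 + 4 := by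
  have h1 := hh_nonneg u
  have h2 := hh_le u
  have : 0 ≤ Real.log 4 := Real.log_nonneg (by norm_num)
  rw [abs_le]; constructor <;> linarith

lemma hh_meas : Measurable hh := by
  unfold hh
  exact (psi_mono.measurable.comp Real.measurable_exp).mul (Real.measurable_exp.comp measurable_neg)

lemma exp_int {z : ℂ} (hz : 0 < z.re) :
    IntegrableOn (fun u : ℝ => Complex.exp (-z * u)) (Set.Ioi 0) := by
  exact integrableOn_exp_mul_complex_Ioi (by simpa using hz) 0

lemma laplace_int {s : ℂ} (hs : 1 < s.re) :
    IntegrableOn (fun u : ℝ => ((hh u : ℂ)) * Complex.exp (-(s - 1) * u)) (Set.Ioi 0) := by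
  have := exp_int (z := s - 1) (by simpa using hs)
  refine this.bdd_mul (c := Real.log 4 + 4) ?_ ?_
  · exact (Complex.measurable_ofReal.comp hh_meas).aestronglyMeasurable
  · refine Eventually.of_forall fun u => ?_
    rw [Complex.norm_real, Real.norm_of_nonneg (hh_nonneg u)]
    exact hh_le u

lemma laplace {s : ℂ} (hs : 1 < s.re) :
    ∫ u in Set.Ioi (0:ℝ), ((hh u - 1 : ℝ) : ℂ) * Complex.exp (-(s - 1) * u) = (FF s - 1) / s := by
  have e1 := exp_int (z := s - 1) (by simpa using hs)
  have : ∀ u : ℝ, ((hh u - 1 : ℝ) : ℂ) * Complex.exp (-(s - 1) * u)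
     = (hh u : ℂ) * Complex.exp (-(s - 1) * u) - Complex.exp (-(s - 1) * u) := by
    intro u; push_cast; ring
  simp_rw [this]
  rw [integral_sub (laplace_int hs) e1, integral_exp_mul_complex_Ioi (by simpa using hs),
    ← cov, FF_eq hs, LS_eq hs]
  have h1 : s ≠ 0 := by rintro rfl; simp at hs; linarith
  have h2 : s - 1 ≠ 0 := by
    intro h; have : s = 1 := by linear_combination h
    rw [this] at hs; simp at hs
  generalize (∫ t in Set.Ioi (1 : ℝ), (psi t : ℂ) * (t : ℂ) ^ (-(s + 1))) = I
  rw [Complex.ofReal_zero, mul_zero, Complex.exp_zero, neg_div_neg_eq]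
  field_simp
  ring
end GB

namespace GB
open Chebyshev FourierTransform

noncomputable def GG (s : ℂ) : ℂ := (FF s - 1) / s

lemma GG_cont : ContinuousOn GG {s | 1 ≤ s.re} := by
  unfold GG
  refine (FF_cont.sub continuousOn_const).div continuousOn_id ?_
  rintro s hs rfl
  have : (1:ℝ) ≤ 0 := hs
  linarith

noncomputable def gg (δ : ℝ) : ℝ → ℂ :=
  (Set.Ioi (0:ℝ)).indicator (fun u => ((hh u - 1 : ℝ) : ℂ) * Complex.exp (-(δ : ℂ) * u))

lemma gg_meas (δ : ℝ) : Measurable (gg δ) := by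
  unfold gg
  refine Measurable.indicator ?_ measurableSet_Ioi
  refine (Complex.measurable_ofReal.comp (hh_meas.sub_const 1)).mul ?_
  exact (by fun_prop : Continuous fun u : ℝ => Complex.exp (-(δ : ℂ) * u)).measurable

lemma gg_norm {δ : ℝ} (hδ : 0 ≤ δ) (u : ℝ) : ‖gg δ u‖ ≤ Real.log 4 + 4 := by
  have h4 : 0 ≤ Real.log 4 := Real.log_nonneg (by norm_num)
  unfold gg
  by_cases hu : u ∈ Set.Ioi (0:ℝ)
  · rw [Set.indicator_of_mem hu, norm_mul, Complex.norm_real, Complex.norm_exp]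
    have hu' : 0 < u := hu
    have : Real.exp ((-(δ:ℂ) * u).re) ≤ 1 := by
      rw [Real.exp_le_one_iff]
      simp
      positivity
    calc _ ≤ (Real.log 4 + 4) * 1 := by
          gcongr
          exact hh_abs u
      _ = _ := mul_one _
  · rw [Set.indicator_of_notMem hu]; simp; linarith

lemma gg_int {δ : ℝ} (hδ : 0 < δ) : Integrable (gg δ) := by
  unfold gg
  rw [integrable_indicator_iff measurableSet_Ioi]
  have := exp_int (z := δ) (by simpa using hδ)
  refine this.bdd_mul (c := Real.log 4 + 4) ?_ ?_
  · exact (Complex.measurable_ofReal.comp (hh_meas.sub_const 1)).aestronglyMeasurable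
  · refine Eventually.of_forall fun u => ?_
    rw [Complex.norm_real]
    exact hh_abs u

lemma gg_fourier {δ : ℝ} (hδ : 0 < δ) (t : ℝ) :
    𝓕 (gg δ) t = GG (1 + δ + 2 * Real.pi * t * Complex.I) := by
  have h := laplace (s := 1 + δ + 2 * Real.pi * t * Complex.I) (by simpa using hδ)
  unfold GG
  rw [← h, Real.fourier_real_eq_integral_exp_smul, ← integral_indicator measurableSet_Ioi]
  congr 1
  ext u
  unfold gg
  by_cases hu : u ∈ Set.Ioi (0:ℝ)
  · rw [Set.indicator_of_mem hu, Set.indicator_of_mem hu, smul_eq_mul, mul_left_comm,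
      ← Complex.exp_add]
    congr 2
    push_cast
    ring
  · rw [Set.indicator_of_notMem hu, Set.indicator_of_notMem hu, smul_zero]

lemma fourier_shift (χ : ℝ → ℂ) (v u : ℝ) :
    𝓕 (fun t : ℝ => Complex.exp (2 * Real.pi * t * v * Complex.I) * χ t) u = 𝓕 χ (u - v) := by
  rw [Real.fourier_real_eq_integral_exp_smul, Real.fourier_real_eq_integral_exp_smul]
  congr 1
  ext t
  rw [smul_eq_mul, smul_eq_mul, ← mul_assoc, ← Complex.exp_add]
  congr 2
  push_cast
  ring

lemma shift_int {χ : ℝ → ℂ} (hχ : Integrable χ) (v : ℝ) :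
    Integrable (fun t : ℝ => Complex.exp (2 * Real.pi * t * v * Complex.I) * χ t) := by
  refine hχ.bdd_mul (c := 1) ?_ ?_
  · exact (by fun_prop : Continuous fun t : ℝ =>
      Complex.exp (2 * Real.pi * t * v * Complex.I)).aestronglyMeasurable
  · refine Eventually.of_forall fun t => ?_
    rw [Complex.norm_exp]
    simp

lemma key_δ {χ : ℝ → ℂ} (hχ : Integrable χ) {δ : ℝ} (hδ : 0 < δ) (v : ℝ) :
    ∫ u, 𝓕 χ (u - v) * gg δ u =
      ∫ t : ℝ, (Complex.exp (2 * Real.pi * t * v * Complex.I) * χ t) *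
        GG (1 + δ + 2 * Real.pi * t * Complex.I) := by
  have h := VectorFourier.integral_fourierIntegral_smul_eq_flip (𝕜 := ℝ) (e := Real.fourierChar)
    (μ := volume) (ν := volume) (L := innerₗ ℝ)
    Real.continuous_fourierChar (by exact continuous_inner) (shift_int hχ v) (gg_int hδ)
  simp only [flip_innerₗ, smul_eq_mul] at h
  have e1 : ∀ u, VectorFourier.fourierIntegral Real.fourierChar volume (innerₗ ℝ)
      (fun t : ℝ => Complex.exp (2 * Real.pi * t * v * Complex.I) * χ t) u = 𝓕 χ (u - v) := by
    intro u
    rw [← fourier_shift]; rfl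
  have e2 : ∀ t, VectorFourier.fourierIntegral Real.fourierChar volume (innerₗ ℝ)
      (gg δ) t = GG (1 + δ + 2 * Real.pi * t * Complex.I) := by
    intro u
    rw [← gg_fourier hδ]; rfl
  simp only [e1, e2] at h
  exact h

lemma key_0 {χ : ℝ → ℂ} (hχ : Continuous χ) (hs : HasCompactSupport χ)
    (hF : Integrable (𝓕 χ)) (v : ℝ) :
    ∫ u, 𝓕 χ (u - v) * gg 0 u =
      ∫ t : ℝ, (Complex.exp (2 * Real.pi * t * v * Complex.I) * χ t) *
        GG (1 + 2 * Real.pi * t * Complex.I) := by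
  have hi : Integrable χ := hχ.integrable_of_hasCompactSupport hs
  have L : Tendsto (fun δ : ℝ => ∫ u, 𝓕 χ (u - v) * gg δ u) (𝓝[>] 0)
      (𝓝 (∫ u, 𝓕 χ (u - v) * gg 0 u)) := by
    refine tendsto_integral_filter_of_dominated_convergence
      (fun u => ‖𝓕 χ (u - v)‖ * (Real.log 4 + 4)) ?_ ?_ ?_ ?_
    · refine Eventually.of_forall fun δ => ?_
      exact (hF.comp_sub_right v).aestronglyMeasurable.mul (gg_meas δ).aestronglyMeasurable
    · filter_upwards [self_mem_nhdsWithin] with δ hδ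
      refine Eventually.of_forall fun u => ?_
      rw [norm_mul]
      gcongr
      exact gg_norm (le_of_lt hδ) u
    · exact (hF.comp_sub_right v).norm.mul_const _
    · refine Eventually.of_forall fun u => ?_
      refine Tendsto.const_mul _ ?_
      unfold gg
      by_cases hu : u ∈ Set.Ioi (0:ℝ)
      · simp only [Set.indicator_of_mem hu]
        refine tendsto_nhdsWithin_of_tendsto_nhds ?_
        exact Continuous.tendsto (by fun_prop) 0
      · simp only [Set.indicator_of_notMem hu]
        exact tendsto_const_nhds
  have hK : IsCompact ((fun p : ℝ × ℝ => (1 + p.1 + 2 * Real.pi * p.2 * Complex.I : ℂ)) ''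
      (Set.Icc 0 1 ×ˢ tsupport χ)) := by
    refine (isCompact_Icc.prod hs).image (by fun_prop)
  have hsub : ((fun p : ℝ × ℝ => (1 + p.1 + 2 * Real.pi * p.2 * Complex.I : ℂ)) ''
      (Set.Icc 0 1 ×ˢ tsupport χ)) ⊆ {s | 1 ≤ s.re} := by
    rintro _ ⟨⟨a, b⟩, ⟨ha, hb⟩, rfl⟩
    simpa using ha.1
  obtain ⟨C, hC⟩ := hK.exists_bound_of_continuousOn (GG_cont.mono hsub)
  have R : Tendsto (fun δ : ℝ => ∫ t : ℝ, (Complex.exp (2 * Real.pi * t * v * Complex.I) * χ t) *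
        GG (1 + δ + 2 * Real.pi * t * Complex.I)) (𝓝[>] 0)
      (𝓝 (∫ t : ℝ, (Complex.exp (2 * Real.pi * t * v * Complex.I) * χ t) *
        GG (1 + 2 * Real.pi * t * Complex.I))) := by
    refine tendsto_integral_filter_of_dominated_convergence
      (fun t => ‖χ t‖ * C) ?_ ?_ ?_ ?_
    · filter_upwards [self_mem_nhdsWithin] with δ hδ
      refine (shift_int hi v).aestronglyMeasurable.mul ?_
      refine Continuous.aestronglyMeasurable ?_
      refine GG_cont.comp_continuous (by fun_prop) ?_
      intro t
      have : (0:ℝ) < δ := hδ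
      simpa using this.le
    · have : Set.Ioc (0:ℝ) 1 ∈ 𝓝[>] (0:ℝ) := Ioc_mem_nhdsGT (by norm_num)
      filter_upwards [this] with δ hδ
      refine Eventually.of_forall fun t => ?_
      rw [norm_mul, norm_mul, Complex.norm_exp]
      by_cases ht : t ∈ tsupport χ
      · have := hC _ ⟨(δ, t), ⟨⟨hδ.1.le, hδ.2⟩, ht⟩, rfl⟩
        simp only [] at this
        have e : Real.exp ((2 * Real.pi * t * v * Complex.I : ℂ).re) = 1 := by simp
        rw [e, one_mul]
        gcongr
      · rw [image_eq_zero_of_notMem_tsupport ht]; simp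
    · exact hi.norm.mul_const _
    · refine Eventually.of_forall fun t => ?_
      refine Tendsto.const_mul _ ?_
      have hc : ContinuousWithinAt GG {s | 1 ≤ s.re} (1 + 2 * Real.pi * t * Complex.I) :=
        GG_cont _ (by simp)
      refine hc.tendsto.comp ?_
      refine tendsto_nhdsWithin_iff.2 ⟨?_, ?_⟩
      · refine tendsto_nhdsWithin_of_tendsto_nhds ?_
        have : Continuous (fun δ : ℝ => (1 + δ + 2 * Real.pi * t * Complex.I : ℂ)) := by fun_prop
        simpa using this.tendsto 0
      · filter_upwards [self_mem_nhdsWithin] with δ hδ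
        have : (0:ℝ) < δ := hδ
        simpa using this.le
  refine tendsto_nhds_unique L (R.congr' ?_)
  filter_upwards [self_mem_nhdsWithin] with δ hδ
  exact (key_δ hi hδ v).symm

lemma key_lim {χ : ℝ → ℂ} (hχ : Continuous χ) (hs : HasCompactSupport χ)
    (hF : Integrable (𝓕 χ)) :
    Tendsto (fun v : ℝ => ∫ u, 𝓕 χ (u - v) * gg 0 u) atTop (𝓝 0) := by
  have h := Real.zero_at_infty_fourier
    (fun t : ℝ => χ t * GG (1 + 2 * Real.pi * t * Complex.I))
  have h2 : Tendsto (fun v : ℝ => -v) atTop (cocompact ℝ) :=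
    tendsto_neg_atTop_atBot.mono_right atBot_le_cocompact
  refine (h.comp h2).congr fun v => ?_
  rw [key_0 hχ hs hF, Function.comp_apply, Real.fourier_real_eq_integral_exp_smul]
  congr 1
  ext t
  have e : (((-2 * Real.pi * t * -v : ℝ) : ℂ) * Complex.I)
      = 2 * Real.pi * t * v * Complex.I := by
    push_cast; ring
  rw [smul_eq_mul, e]
  ring
end GB

namespace GB
open Chebyshev FourierTransform

lemma exists_kernel : ∃ (χ : ℝ → ℂ) (K : ℝ → ℝ), Continuous χ ∧ HasCompactSupport χ ∧
    (∀ x, 𝓕 χ x = K x) ∧ (∀ x, 0 ≤ K x) ∧ Integrable K ∧ ∫ x, K x = 1 := by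
  let f : ContDiffBump (0:ℝ) := ⟨1, 2, by norm_num, by norm_num⟩
  let Φ : ℝ → ℂ := fun x => (f x : ℂ)
  have hΦc : HasCompactSupport Φ := f.hasCompactSupport.comp_left (g := fun x : ℝ => (x:ℂ)) (by simp)
  have hΦs : ContDiff ℝ (⊤ : ℕ∞) Φ := Complex.ofRealCLM.contDiff.comp f.contDiff
  let S : SchwartzMap ℝ ℂ := hΦc.toSchwartzMap hΦs
  have hΦcont : Continuous Φ := hΦs.continuous
  have hΦi : Integrable Φ := hΦcont.integrable_of_hasCompactSupport hΦc
  have hFS : ∀ x, (𝓕 S) x = 𝓕 Φ x := by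
    intro x
    rw [SchwartzMap.fourier_coe]
    rfl
  have hFi : Integrable (𝓕 Φ) := by
    have := (𝓕 S).integrable (μ := volume)
    refine this.congr (Eventually.of_forall hFS)
  have hFc : Continuous (𝓕 Φ) := by
    have := (𝓕 S).continuous
    refine this.congr hFS
  have hreal : ∀ x, ((𝓕 Φ x).re : ℂ) = 𝓕 Φ x := by
    intro x
    rw [← Complex.conj_eq_iff_re, Real.fourier_real_eq_integral_exp_smul, ← integral_conj,
      ← integral_neg_eq_self]
    congr 1
    ext t
    have : f (-t) = f t := f.neg t
    simp only [Φ, smul_eq_mul, map_mul, ← Complex.exp_conj, Complex.conj_ofReal, Complex.conj_I,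
      this]
    congr 2
    push_cast
    ring
  let K : ℝ → ℝ := fun x => (𝓕 Φ x).re ^ 2
  have hKc : Continuous K := (Complex.continuous_re.comp hFc).pow 2
  have hK0 : ∀ x, 0 ≤ K x := fun x => sq_nonneg _
  have hKi : Integrable K := by
    have h1 : Integrable (fun x => (𝓕 Φ x).re) := hFi.re
    have h2 : Integrable (fun x => (𝓕 Φ x).re * (𝓕 Φ x).re) := by
      refine h1.bdd_mul (c := ∫ t, ‖Φ t‖) h1.aestronglyMeasurable (Eventually.of_forall fun x => ?_)
      refine (Complex.abs_re_le_norm _).trans ?_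
      exact VectorFourier.norm_fourierIntegral_le_integral_norm _ _ _ _ _
    refine h2.congr (Eventually.of_forall fun x => ?_)
    simp [K, sq]
  have hKpos : 0 < ∫ x, K x := by
    refine integral_pos_of_integrable_nonneg_nonzero (x := 0) hKc hKi hK0 ?_
    have : 𝓕 Φ 0 = ((∫ x, f x : ℝ) : ℂ) := by
      rw [Real.fourier_real_eq_integral_exp_smul]
      simp only [mul_zero, Complex.ofReal_zero, zero_mul, Complex.exp_zero, one_smul, Φ]
      exact integral_ofReal
    simp only [K, this, Complex.ofReal_re]
    exact pow_ne_zero 2 f.integral_pos.ne'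
  let χ0 : ℝ → ℂ := convolution Φ Φ (ContinuousLinearMap.mul ℂ ℂ) volume
  have hχ0 : ∀ x, 𝓕 χ0 x = (K x : ℂ) := by
    intro x
    have := Real.fourier_mul_convolution_eq hΦi hΦi x
    rw [this]
    simp only [K]
    rw [Complex.ofReal_pow, hreal, sq]
  let c := ∫ x, K x
  refine ⟨fun t => (c⁻¹ : ℝ) • χ0 t, fun x => c⁻¹ * K x, ?_, ?_, ?_, ?_, ?_, ?_⟩
  · have : Continuous χ0 := hΦc.continuous_convolution_right _ hΦi.locallyIntegrable hΦcont
    exact (continuous_const (y := c⁻¹)).smul this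
  · have : HasCompactSupport χ0 := hΦc.convolution _ hΦc
    exact this.comp_left (g := fun z : ℂ => (c⁻¹ : ℝ) • z) (by simp)
  · intro x
    have := hχ0 x
    rw [Real.fourier_real_eq_integral_exp_smul] at this ⊢
    simp_rw [smul_comm _ (c⁻¹ : ℝ)]
    rw [integral_smul, this]
    simp
  · intro x
    exact mul_nonneg (inv_nonneg.2 hKpos.le) (hK0 x)
  · exact hKi.const_mul _
  · rw [integral_const_mul]
    exact inv_mul_cancel₀ hKpos.ne'

lemma fourier_scale (χ : ℝ → ℂ) {l : ℝ} (hl : 0 < l) (u : ℝ) :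
    𝓕 (fun t : ℝ => (l⁻¹ : ℝ) • χ (t / l)) u = 𝓕 χ (l * u) := by
  rw [Real.fourier_real_eq_integral_exp_smul, Real.fourier_real_eq_integral_exp_smul]
  have := Measure.integral_comp_div
    (fun t : ℝ => Complex.exp (((-2 * Real.pi * t * (l * u) : ℝ) : ℂ) * Complex.I) • χ t) l
  rw [abs_of_pos hl] at this
  have e : (∫ v, Complex.exp (((-2 * Real.pi * v * (l * u) : ℝ) : ℂ) * Complex.I) • χ v) =
    l⁻¹ • ∫ x : ℝ, Complex.exp (((-2 * Real.pi * (x/l) * (l * u) : ℝ) : ℂ) * Complex.I) • χ (x / l) := by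
    rw [this, inv_smul_smul₀ hl.ne']
  rw [e, ← integral_smul]
  congr 1
  ext t
  rw [smul_comm]
  congr 4
  field_simp

lemma hh_zero {u : ℝ} (hu : u ≤ 0) : hh u = 0 := by
  unfold hh
  rw [psi_eq_zero_of_le_one (Real.exp_le_one_iff.2 hu), zero_mul]

lemma hh_mono {a b : ℝ} (hab : a ≤ b) : hh a ≤ hh b * Real.exp (b - a) := by
  unfold hh
  have : psi (Real.exp a) ≤ psi (Real.exp b) := psi_mono (Real.exp_le_exp.2 hab)
  rw [mul_assoc, ← Real.exp_add]
  have e : -b + (b - a) = -a := by ring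
  rw [e]
  gcongr

lemma smooth_lim {χ : ℝ → ℂ} {K : ℝ → ℝ} (hχ : Continuous χ) (hs : HasCompactSupport χ)
    (hFK : ∀ x, 𝓕 χ x = K x) (hKi : Integrable K) (hK1 : ∫ x, K x = 1)
    {l : ℝ} (hl : 0 < l) :
    Tendsto (fun v : ℝ => ∫ x, hh (v + x / l) * K x) atTop (𝓝 1) := by
  have hF : 𝓕 (fun t : ℝ => (l⁻¹ : ℝ) • χ (t / l)) = fun u => (K (l * u) : ℂ) := by
    ext u
    rw [fourier_scale χ hl, hFK]
  have A := key_lim (χ := fun t : ℝ => (l⁻¹ : ℝ) • χ (t / l)) (by fun_prop)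
    (by
      have h1 : HasCompactSupport (fun t : ℝ => χ (t / l)) := by
        have := hs.comp_homeomorph (Homeomorph.mulRight₀ (l⁻¹) (inv_ne_zero hl.ne'))
        exact this
      exact h1.comp_left (g := fun z : ℂ => (l⁻¹ : ℝ) • z) (by simp))
    (by
      rw [hF]
      exact (hKi.comp_mul_left' hl.ne').ofReal)
  rw [hF] at A
  let I : ℝ → ℝ := (Set.Ioi (0:ℝ)).indicator (fun _ => 1)
  have hgg : ∀ u, gg 0 u = ((hh u - I u : ℝ) : ℂ) := by
    intro u
    unfold gg
    by_cases hu : u ∈ Set.Ioi (0:ℝ)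
    · simp only [I, Set.indicator_of_mem hu]; simp
    · simp only [I, Set.indicator_of_notMem hu]
      rw [hh_zero (not_lt.1 hu)]; simp
  have Imeas : Measurable I := measurable_const.indicator measurableSet_Ioi
  have A2 : Tendsto (fun v : ℝ => ∫ x, (hh (v + x / l) - I (v + x / l)) * K x) atTop (𝓝 0) := by
    have A0 := A.const_mul (l:ℂ)
    rw [mul_zero] at A0
    have A3 := (Complex.continuous_re.tendsto 0).comp A0
    simp only [Complex.zero_re] at A3
    refine A3.congr fun v => ?_
    simp only [Function.comp_apply]
    have : ∀ u, (K (l * (u - v)) : ℂ) * gg 0 u = ((K (l * (u - v)) * (hh u - I u) : ℝ) : ℂ) := by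
      intro u; rw [hgg]; push_cast; ring
    simp_rw [this]
    rw [show (∫ u, ((K (l * (u - v)) * (hh u - I u) : ℝ) : ℂ))
        = ((∫ u, K (l * (u - v)) * (hh u - I u) : ℝ) : ℂ) from integral_ofReal,
      ← Complex.ofReal_mul, Complex.ofReal_re]
    rw [← integral_add_right_eq_self _ v]
    have e := Measure.integral_comp_div (fun x => (hh (v + x / l) - I (v + x / l)) * K x) (l⁻¹)
    rw [abs_of_pos (inv_pos.2 hl), smul_eq_mul] at e
    rw [← mul_right_inj' (inv_ne_zero hl.ne'), ← e, ← mul_assoc, inv_mul_cancel₀ hl.ne', one_mul]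
    congr 1
    ext u
    have e1 : u / l⁻¹ / l = u := by field_simp
    have e2 : u / l⁻¹ = l * u := by field_simp
    rw [e1, e2, add_sub_cancel_right, add_comm v u]
    ring
  have B : Tendsto (fun v : ℝ => ∫ x, I (v + x / l) * K x) atTop (𝓝 1) := by
    rw [← hK1]
    refine tendsto_integral_filter_of_dominated_convergence (fun x => ‖K x‖) ?_ ?_ hKi.norm ?_
    · refine Eventually.of_forall fun v => ?_
      refine AEStronglyMeasurable.mul ?_ hKi.aestronglyMeasurable
      exact (Imeas.comp (by fun_prop)).aestronglyMeasurable
    · refine Eventually.of_forall fun v => Eventually.of_forall fun x => ?_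
      rw [norm_mul]
      refine mul_le_of_le_one_left (norm_nonneg _) ?_
      by_cases hu : v + x / l ∈ Set.Ioi (0:ℝ)
      · simp only [I, Set.indicator_of_mem hu]; simp
      · simp only [I, Set.indicator_of_notMem hu]; simp
    · refine Eventually.of_forall fun x => ?_
      refine tendsto_const_nhds.congr' ?_
      filter_upwards [eventually_gt_atTop (-(x / l))] with v hv
      have hu : v + x / l ∈ Set.Ioi (0:ℝ) := by
        show 0 < v + x / l
        linarith
      simp only [I, Set.indicator_of_mem hu]; simp
  have C := A2.add B
  rw [zero_add] at C
  refine C.congr fun v => ?_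
  have i1 : Integrable (fun x => I (v + x / l) * K x) := by
    refine hKi.bdd_mul (c := 1) (Imeas.comp (by fun_prop)).aestronglyMeasurable
      (Eventually.of_forall fun x => ?_)
    by_cases hu : v + x / l ∈ Set.Ioi (0:ℝ)
    · simp only [I, Set.indicator_of_mem hu]; simp
    · simp only [I, Set.indicator_of_notMem hu]; simp
  have i2 : Integrable (fun x => hh (v + x / l) * K x) := by
    refine hKi.bdd_mul (c := Real.log 4 + 4) (hh_meas.comp (by fun_prop)).aestronglyMeasurable
      (Eventually.of_forall fun x => ?_)
    rw [Real.norm_of_nonneg (hh_nonneg _)]; exact hh_le _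
  have i3 : Integrable (fun x => (hh (v + x / l) - I (v + x / l)) * K x) := by
    refine (i2.sub i1).congr (Eventually.of_forall fun x => ?_)
    simp only [Pi.sub_apply]; ring
  rw [← integral_add i3 i1]
  congr 1
  ext x
  ring

lemma hh_tendsto : Tendsto hh atTop (𝓝 1) := by
  obtain ⟨χ, K, hχ, hs, hFK, hK0, hKi, hK1⟩ := exists_kernel
  set M := Real.log 4 + 4 with hM
  have hM0 : 0 ≤ M := (hh_nonneg 0).trans (hh_le 0)
  have main : ∀ ε : ℝ, 0 < ε → ε < 1 → ∀ᶠ v in atTop,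
      hh v * (Real.exp (-(2*ε)) * (1 - ε)) ≤ 1 + ε ∧ 1 - ε - M * ε ≤ hh v * Real.exp (2*ε) := by
    intro ε hε hε1
    have hcov : Tendsto (fun X : ℝ => ∫ x in Set.Icc (-X) X, K x) atTop (𝓝 1) := by
      rw [← hK1]
      exact (aecover_Icc tendsto_neg_atTop_atBot tendsto_id).integral_tendsto_of_countably_generated hKi
    obtain ⟨X, hX, hX0⟩ := ((hcov.eventually (lt_mem_nhds (show 1 - ε < 1 by linarith))).and
      (eventually_gt_atTop 0)).exists
    set l := X / ε with hl
    have hl0 : 0 < l := by positivity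
    have hxl : ∀ x ∈ Set.Icc (-X) X, -ε ≤ x / l ∧ x / l ≤ ε := by
      intro x hx
      have : ε * l = X := by rw [hl]; field_simp
      constructor
      · rw [le_div_iff₀ hl0]; linarith [hx.1]
      · rw [div_le_iff₀ hl0]; linarith [hx.2]
    have hlim := smooth_lim hχ hs hFK hKi hK1 hl0
    have i2 : ∀ v, Integrable (fun x => hh (v + x / l) * K x) := by
      intro v
      refine hKi.bdd_mul (c := M) (hh_meas.comp (by fun_prop)).aestronglyMeasurable
        (Eventually.of_forall fun x => ?_)
      rw [Real.norm_of_nonneg (hh_nonneg _)]; exact hh_le _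
    have hle1 : ∫ x in Set.Icc (-X) X, K x ≤ 1 := by
      rw [← hK1]
      exact setIntegral_le_integral hKi (Eventually.of_forall hK0)
    have up : ∀ᶠ v in atTop, ∫ x, hh (v + x / l) * K x < 1 + ε :=
      hlim.eventually (gt_mem_nhds (by linarith))
    have lo : ∀ᶠ v in atTop, 1 - ε < ∫ x, hh (v + x / l) * K x :=
      hlim.eventually (lt_mem_nhds (by linarith))
    have up' := (tendsto_atTop_add_const_right atTop ε tendsto_id).eventually up
    have lo' := (tendsto_atTop_add_const_right atTop (-ε) tendsto_id).eventually lo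
    filter_upwards [up', lo'] with w hw1 hw2
    simp only [id] at hw1 hw2
    constructor
    · refine le_trans ?_ hw1.le
      calc hh w * (Real.exp (-(2*ε)) * (1 - ε))
          ≤ hh w * Real.exp (-(2*ε)) * ∫ x in Set.Icc (-X) X, K x := by
            rw [← mul_assoc]
            have := hh_nonneg w
            gcongr
        _ = ∫ x in Set.Icc (-X) X, hh w * Real.exp (-(2*ε)) * K x := by
            rw [integral_const_mul]
        _ ≤ ∫ x in Set.Icc (-X) X, hh (w + ε + x / l) * K x := by
            refine setIntegral_mono_on (hKi.integrableOn.const_mul _) (i2 _).integrableOn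
              measurableSet_Icc fun x hx => ?_
            obtain ⟨h1, h2⟩ := hxl x hx
            refine mul_le_mul_of_nonneg_right ?_ (hK0 x)
            have h3 := hh_mono (show w ≤ w + ε + x / l by linarith)
            have h4 := hh_nonneg (w + ε + x / l)
            calc hh w * Real.exp (-(2*ε))
                ≤ hh (w + ε + x / l) * Real.exp (w + ε + x / l - w) * Real.exp (-(2*ε)) := by gcongr
              _ = hh (w + ε + x / l) * Real.exp (x / l - ε) := by
                  rw [mul_assoc, ← Real.exp_add]; congr 2; ring
              _ ≤ hh (w + ε + x / l) * 1 := by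
                  gcongr
                  rw [Real.exp_le_one_iff]; linarith
              _ = _ := mul_one _
        _ ≤ _ := setIntegral_le_integral (i2 _) (Eventually.of_forall fun x =>
            mul_nonneg (hh_nonneg _) (hK0 x))
    · have hsplit := integral_add_compl (measurableSet_Icc (a := -X) (b := X)) (i2 (w + -ε))
      have hsplitK := integral_add_compl (measurableSet_Icc (a := -X) (b := X)) hKi
      rw [hK1] at hsplitK
      have p1 : ∫ x in Set.Icc (-X) X, hh (w + -ε + x / l) * K x ≤ hh w * Real.exp (2*ε) := by
        calc _ ≤ ∫ x in Set.Icc (-X) X, hh w * Real.exp (2*ε) * K x := by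
              refine setIntegral_mono_on (i2 _).integrableOn (hKi.integrableOn.const_mul _)
                measurableSet_Icc fun x hx => ?_
              obtain ⟨h1, h2⟩ := hxl x hx
              refine mul_le_mul_of_nonneg_right ?_ (hK0 x)
              have h3 := hh_mono (show w + -ε + x / l ≤ w by linarith)
              refine h3.trans ?_
              have := hh_nonneg w
              gcongr
              linarith
          _ = hh w * Real.exp (2*ε) * ∫ x in Set.Icc (-X) X, K x := by rw [integral_const_mul]
          _ ≤ hh w * Real.exp (2*ε) * 1 := by
              have := hh_nonneg w
              gcongr
          _ = _ := mul_one _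
      have p2 : ∫ x in (Set.Icc (-X) X)ᶜ, hh (w + -ε + x / l) * K x ≤ M * ε := by
        calc _ ≤ ∫ x in (Set.Icc (-X) X)ᶜ, M * K x := by
              refine setIntegral_mono_on (i2 _).integrableOn (hKi.integrableOn.const_mul _)
                measurableSet_Icc.compl fun x hx => ?_
              exact mul_le_mul_of_nonneg_right (hh_le _) (hK0 x)
          _ = M * ∫ x in (Set.Icc (-X) X)ᶜ, K x := by rw [integral_const_mul]
          _ ≤ M * ε := by
              gcongr
              linarith
      linarith
  rw [tendsto_order]
  constructor
  · intro a ha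
    have hc : Tendsto (fun ε : ℝ => (1 - ε - M * ε) * Real.exp (-(2*ε))) (𝓝[>] 0) (𝓝 1) := by
      refine tendsto_nhdsWithin_of_tendsto_nhds ?_
      have : Continuous (fun ε : ℝ => (1 - ε - M * ε) * Real.exp (-(2*ε))) := by fun_prop
      simpa using this.tendsto 0
    obtain ⟨ε, h1, h2⟩ := ((hc.eventually (lt_mem_nhds ha)).and
      (Ioo_mem_nhdsGT (show (0:ℝ) < 1 by norm_num))).exists
    filter_upwards [main ε h2.1 h2.2] with v hv
    have := mul_le_mul_of_nonneg_right hv.2 (Real.exp_pos (-(2*ε))).le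
    rw [mul_assoc, ← Real.exp_add] at this
    simp at this
    linarith
  · intro a ha
    have hc : Tendsto (fun ε : ℝ => a * (Real.exp (-(2*ε)) * (1 - ε)) - (1 + ε)) (𝓝[>] 0) (𝓝 (a - 1)) := by
      refine tendsto_nhdsWithin_of_tendsto_nhds ?_
      have : Continuous (fun ε : ℝ => a * (Real.exp (-(2*ε)) * (1 - ε)) - (1 + ε)) := by fun_prop
      simpa using this.tendsto 0
    obtain ⟨ε, h1, h2⟩ := ((hc.eventually (lt_mem_nhds (show 0 < a - 1 by linarith))).and
      (Ioo_mem_nhdsGT (show (0:ℝ) < 1 by norm_num))).exists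
    filter_upwards [main ε h2.1 h2.2] with v hv
    have hpos : 0 < Real.exp (-(2*ε)) * (1 - ε) := mul_pos (Real.exp_pos _) (by linarith [h2.2])
    have : hh v * (Real.exp (-(2*ε)) * (1 - ε)) < a * (Real.exp (-(2*ε)) * (1 - ε)) := by linarith [hv.1]
    exact lt_of_mul_lt_mul_right this hpos.le
end GB

namespace GB
open Chebyshev

lemma psi_lim : Tendsto (fun x : ℝ => psi x / x) atTop (𝓝 1) := by
  refine (hh_tendsto.comp Real.tendsto_log_atTop).congr' ?_
  filter_upwards [eventually_gt_atTop 0] with x hx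
  simp only [Function.comp_apply, hh]
  rw [Real.exp_neg, Real.exp_log hx]
  rfl

lemma theta_lim : Tendsto (fun x : ℝ => theta x / x) atTop (𝓝 1) := by
  have h1 : (psi - theta) =o[atTop] (fun x : ℝ => x) := by
    refine isBigO_psi_sub_theta_sqrt.trans_isLittleO ?_
    refine (isLittleO_iff_tendsto' ?_).mpr ?_
    · filter_upwards [eventually_gt_atTop 0] with x hx h
      exact absurd h hx.ne'
    · refine Tendsto.congr' ?_ (Real.tendsto_sqrt_atTop.inv_tendsto_atTop)
      filter_upwards [eventually_gt_atTop 0] with x hx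
      rw [Pi.inv_apply, Real.sqrt_div_self', one_div]
  have h2 := psi_lim.sub h1.tendsto_div_nhds_zero
  rw [sub_zero] at h2
  refine h2.congr fun x => ?_
  simp only [Pi.sub_apply]
  ring

lemma pi_lim : Tendsto (fun x : ℝ => (Nat.primeCounting ⌊x⌋₊ : ℝ) * Real.log x / x) atTop (𝓝 1) := by
  have h1 : (fun x : ℝ => ((Nat.primeCounting ⌊x⌋₊ : ℝ) - theta x / Real.log x)) =o[atTop]
      (fun x : ℝ => x / Real.log x) := by
    refine primeCounting_sub_theta_div_log_isBigO.trans_isLittleO ?_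
    refine isLittleO_iff_tendsto' (by simp) |>.mpr ?_
    refine Tendsto.congr' (f₁ := fun x ↦ (Real.log x)⁻¹) ?_ Real.tendsto_log_atTop.inv_tendsto_atTop
    filter_upwards [eventually_gt_atTop 1] with x hx
    have := Real.log_pos hx
    field_simp
  have h2 := theta_lim.add h1.tendsto_div_nhds_zero
  rw [add_zero] at h2
  refine h2.congr' ?_
  filter_upwards [eventually_gt_atTop 1] with x hx
  have := Real.log_pos hx
  field_simp
  ring

/-- log weight on odd primes -/
noncomputable def aa (p : ℕ) : ℝ := if p.Prime ∧ Odd p then Real.log p else 0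
/-- indicator of odd primes -/
noncomputable def ee (p : ℕ) : ℝ := if p.Prime ∧ Odd p then 1 else 0
noncomputable def TT (n : ℕ) : ℝ := ∑ p ∈ Finset.range (n + 1), aa p
noncomputable def EE (n : ℕ) : ℝ := ∑ p ∈ Finset.range (n + 1), ee p

lemma TT_eq {n : ℕ} (hn : 2 ≤ n) : TT n = theta n - Real.log 2 := by
  induction n, hn using Nat.le_induction with
  | base =>
    have : theta (2:ℕ) = Real.log 2 := by
      rw [theta_eq_sum_Icc, Nat.floor_natCast, Finset.sum_filter]
      simp [Finset.sum_Icc_succ_top, Nat.prime_two, Nat.not_prime_zero, Nat.not_prime_one]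
    rw [this]
    simp [TT, aa, Finset.sum_range_succ, Nat.not_prime_zero, Nat.not_prime_one]
  | succ m hm ih =>
    have h1 : TT (m+1) = TT m + aa (m+1) := by
      unfold TT; rw [Finset.sum_range_succ]
    have h2 : theta ((m+1 : ℕ):ℝ) = theta m + if (m+1).Prime then Real.log ((m+1 : ℕ):ℝ) else 0 := by
      rw [theta_eq_sum_Icc, theta_eq_sum_Icc, Nat.floor_natCast, Nat.floor_natCast,
        Finset.sum_filter, Finset.sum_filter, Finset.sum_Icc_succ_top (by omega)]
    rw [h1, h2, ih]
    have h3 : aa (m+1) = if (m+1).Prime then Real.log ((m+1 : ℕ):ℝ) else 0 := by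
      unfold aa
      by_cases hp : (m+1).Prime
      · have := hp.odd_of_ne_two (by omega)
        rw [if_pos ⟨hp, this⟩, if_pos hp]
      · rw [if_neg (fun h => hp h.1), if_neg hp]
    rw [h3]; ring

lemma EE_eq {n : ℕ} (hn : 2 ≤ n) : EE n = Nat.primeCounting n - 1 := by
  induction n, hn using Nat.le_induction with
  | base =>
    have : Nat.primeCounting 2 = 1 := by decide
    rw [this]
    have e0 : ee 0 = 0 := by simp [ee, Nat.not_prime_zero]
    have e1 : ee 1 = 0 := by simp [ee, Nat.not_prime_one]
    have e2 : ee 2 = 0 := by simp [ee]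
    simp only [EE, Finset.sum_range_succ, Finset.sum_range_zero, e0, e1, e2]
    norm_num
  | succ m hm ih =>
    have h1 : EE (m+1) = EE m + ee (m+1) := by
      unfold EE; rw [Finset.sum_range_succ]
    have h2 : (Nat.primeCounting (m+1) : ℝ) = Nat.primeCounting m + if (m+1).Prime then 1 else 0 := by
      unfold Nat.primeCounting Nat.primeCounting'
      rw [Nat.count_succ]
      push_cast
      rfl
    rw [h1, h2, ih]
    have h3 : ee (m+1) = if (m+1).Prime then 1 else 0 := by
      unfold ee
      by_cases hp : (m+1).Prime
      · have := hp.odd_of_ne_two (by omega)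
        rw [if_pos ⟨hp, this⟩, if_pos hp]
      · rw [if_neg (fun h => hp h.1), if_neg hp]
    rw [h3]; ring

lemma TT_lim : Tendsto (fun n : ℕ => TT n / n) atTop (𝓝 1) := by
  have h1 := theta_lim.comp (tendsto_natCast_atTop_atTop (R := ℝ))
  have h2 := h1.sub (tendsto_const_div_atTop_nhds_zero_nat (Real.log 2))
  rw [sub_zero] at h2
  refine h2.congr' ?_
  filter_upwards [eventually_ge_atTop 2] with n hn
  rw [TT_eq hn]
  simp only [Function.comp_apply]
  ring

lemma EE_lim : Tendsto (fun n : ℕ => Real.log n * EE n / n) atTop (𝓝 1) := by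
  have h1 := pi_lim.comp (tendsto_natCast_atTop_atTop (R := ℝ))
  have h3 := (Real.isLittleO_log_id_atTop.tendsto_div_nhds_zero).comp
    (tendsto_natCast_atTop_atTop (R := ℝ))
  have h2 := h1.sub h3
  rw [sub_zero] at h2
  refine h2.congr' ?_
  filter_upwards [eventually_ge_atTop 2] with n hn
  rw [EE_eq hn]
  simp only [Function.comp_apply, Nat.floor_natCast, id]
  ring
end GB

namespace GB

lemma bound_of_lim {u : ℕ → ℝ} {c : ℝ} {j : ℕ}
    (h : Tendsto (fun k : ℕ => u k / (k : ℝ) ^ j) atTop (𝓝 c)) {ε : ℝ} (hε : 0 < ε) :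
    ∃ C : ℝ, 0 ≤ C ∧ ∀ k : ℕ, |u k - c * (k : ℝ) ^ j| ≤ ε * (k : ℝ) ^ j + C := by
  obtain ⟨K, hK⟩ := (Metric.tendsto_atTop.mp h) ε hε
  refine ⟨∑ i ∈ Finset.range (K + 1), |u i - c * (i : ℝ) ^ j|,
    Finset.sum_nonneg fun i _ => abs_nonneg _, fun k => ?_⟩
  by_cases hk : k < K + 1
  · have h1 := Finset.single_le_sum (f := fun i : ℕ => |u i - c * (i : ℝ) ^ j|)
      (fun i _ => abs_nonneg _) (Finset.mem_range.mpr hk)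
    have : 0 ≤ ε * (k : ℝ) ^ j := by positivity
    linarith
  · have h1 := hK k (by omega)
    rw [Real.dist_eq] at h1
    have hk0 : (0 : ℝ) < (k : ℝ) := by
      have : 0 < k := by omega
      exact_mod_cast this
    have hp : (0 : ℝ) < (k : ℝ) ^ j := by positivity
    have h2 : u k - c * (k : ℝ) ^ j = (u k / (k : ℝ) ^ j - c) * (k : ℝ) ^ j := by
      field_simp
    rw [h2, abs_mul, abs_of_pos hp]
    have h3 := mul_le_mul_of_nonneg_right h1.le hp.le
    have h4 : 0 ≤ ∑ i ∈ Finset.range (K + 1), |u i - c * (i : ℝ) ^ j| :=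
      Finset.sum_nonneg fun i _ => abs_nonneg _
    linarith

/-- squeeze tool: a sequence bounded by a small multiple of the scale plus lower order terms -/
lemma tendsto_zero_of_bound {f g : ℕ → ℝ} {B : ℝ} (hB : 0 < B)
    (hg : ∀ᶠ n in atTop, 0 < g n)
    (h : ∀ ε > 0, ∀ᶠ n in atTop, |f n| ≤ B * ε * g n) :
    Tendsto (fun n => f n / g n) atTop (𝓝 0) := by
  rw [Metric.tendsto_nhds]
  intro ε hε
  have := h (ε / (2 * B)) (by positivity)
  filter_upwards [this, hg] with n hn hgn
  rw [Real.dist_eq, sub_zero, abs_div, abs_of_pos hgn, div_lt_iff₀ hgn]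
  have h2 : B * (ε / (2 * B)) = ε / 2 := by field_simp
  rw [h2] at hn
  nlinarith [mul_pos hε hgn]

lemma cesaro {u : ℕ → ℝ} {c d : ℝ} {j : ℕ} (hj : 1 ≤ j)
    (hp : Tendsto (fun N : ℕ => (∑ k ∈ Finset.range N, (k : ℝ) ^ j) / (N : ℝ) ^ (j + 1)) atTop (𝓝 d))
    (h : Tendsto (fun k : ℕ => u k / (k : ℝ) ^ j) atTop (𝓝 c)) :
    Tendsto (fun N : ℕ => (∑ k ∈ Finset.range N, u k) / (N : ℝ) ^ (j + 1)) atTop (𝓝 (c * d)) := by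
  have key : Tendsto (fun N : ℕ => (∑ k ∈ Finset.range N, (u k - c * (k : ℝ) ^ j)) / (N : ℝ) ^ (j + 1))
      atTop (𝓝 0) := by
    refine tendsto_zero_of_bound (B := 2) (by norm_num) ?_ ?_
    · filter_upwards [eventually_gt_atTop 0] with N hN
      have : (0 : ℝ) < N := by exact_mod_cast hN
      positivity
    · intro ε hε
      obtain ⟨C, hC, hb⟩ := bound_of_lim h hε
      obtain ⟨K, hK⟩ := exists_nat_gt (C / ε)
      filter_upwards [eventually_ge_atTop (max K 1)] with N hN
      have hN1 : (1 : ℝ) ≤ N := by exact_mod_cast (le_max_right K 1).trans hN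
      have hNK : (K : ℝ) ≤ N := by exact_mod_cast (le_max_left K 1).trans hN
      have hCN : C ≤ ε * N := by
        rw [div_lt_iff₀ hε] at hK
        nlinarith
      have hNj : (N : ℝ) ≤ (N : ℝ) ^ j := by
        calc (N : ℝ) = (N : ℝ) ^ 1 := (pow_one _).symm
          _ ≤ _ := pow_le_pow_right₀ hN1 hj
      calc |∑ k ∈ Finset.range N, (u k - c * (k : ℝ) ^ j)|
          ≤ ∑ k ∈ Finset.range N, |u k - c * (k : ℝ) ^ j| := Finset.abs_sum_le_sum_abs _ _
        _ ≤ ∑ k ∈ Finset.range N, (2 * ε * (N : ℝ) ^ j) := by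
            refine Finset.sum_le_sum fun k hk => ?_
            refine (hb k).trans ?_
            have hkN : (k : ℝ) ≤ N := by exact_mod_cast (Finset.mem_range.mp hk).le
            have h1 : (k : ℝ) ^ j ≤ (N : ℝ) ^ j := pow_le_pow_left₀ (by positivity) hkN j
            nlinarith
        _ = 2 * ε * (N : ℝ) ^ (j + 1) := by
            rw [Finset.sum_const, Finset.card_range, nsmul_eq_mul]; ring
  have h2 := key.add (hp.const_mul c)
  rw [zero_add] at h2
  refine h2.congr fun N => ?_
  rw [Finset.sum_sub_distrib, ← Finset.mul_sum]
  ring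

lemma inv_nat_lim : Tendsto (fun N : ℕ => (1 : ℝ) / N) atTop (𝓝 0) :=
  tendsto_one_div_atTop_nhds_zero_nat

lemma pow1 : Tendsto (fun N : ℕ => (∑ k ∈ Finset.range N, (k : ℝ) ^ 1) / (N : ℝ) ^ (1 + 1)) atTop
    (𝓝 (1 / 2)) := by
  have h : ∀ N : ℕ, ∑ k ∈ Finset.range N, (k : ℝ) ^ 1 = N * (N - 1) / 2 := by
    intro N
    induction N with
    | zero => simp
    | succ m ih => rw [Finset.sum_range_succ, ih]; push_cast; ring
  have h2 := (tendsto_const_nhds (x := (1 / 2 : ℝ))).sub (inv_nat_lim.mul_const (1 / 2))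
  rw [zero_mul, sub_zero] at h2
  refine h2.congr' ?_
  filter_upwards [eventually_gt_atTop 0] with N hN
  have : (N : ℝ) ≠ 0 := by exact_mod_cast hN.ne'
  rw [h]; field_simp; ring

lemma pow2 : Tendsto (fun N : ℕ => (∑ k ∈ Finset.range N, (k : ℝ) ^ 2) / (N : ℝ) ^ (2 + 1)) atTop
    (𝓝 (1 / 3)) := by
  have h : ∀ N : ℕ, ∑ k ∈ Finset.range N, (k : ℝ) ^ 2 = N * (N - 1) * (2 * N - 1) / 6 := by
    intro N
    induction N with
    | zero => simp
    | succ m ih => rw [Finset.sum_range_succ, ih]; push_cast; ring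
  have h2 := ((tendsto_const_nhds (x := (1 : ℝ))).sub inv_nat_lim).mul
    (((tendsto_const_nhds (x := (2 : ℝ))).sub inv_nat_lim).mul_const (1 / 6))
  have e : ((1 : ℝ) - 0) * ((2 - 0) * (1 / 6)) = 1 / 3 := by norm_num
  rw [e] at h2
  refine h2.congr' ?_
  filter_upwards [eventually_gt_atTop 0] with N hN
  have : (N : ℝ) ≠ 0 := by exact_mod_cast hN.ne'
  rw [h]; field_simp; ring

lemma pow3 : Tendsto (fun N : ℕ => (∑ k ∈ Finset.range N, (k : ℝ) ^ 3) / (N : ℝ) ^ (3 + 1)) atTop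
    (𝓝 (1 / 4)) := by
  have h : ∀ N : ℕ, ∑ k ∈ Finset.range N, (k : ℝ) ^ 3 = N ^ 2 * (N - 1) ^ 2 / 4 := by
    intro N
    induction N with
    | zero => simp
    | succ m ih => rw [Finset.sum_range_succ, ih]; push_cast; ring
  have h2 := (((tendsto_const_nhds (x := (1 : ℝ))).sub inv_nat_lim).pow 2).mul_const (1 / 4)
  have e : ((1 : ℝ) - 0) ^ 2 * (1 / 4) = 1 / 4 := by norm_num
  rw [e] at h2
  refine h2.congr' ?_
  filter_upwards [eventually_gt_atTop 0] with N hN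
  have : (N : ℝ) ≠ 0 := by exact_mod_cast hN.ne'
  rw [h]; field_simp; ring

lemma aa_nonneg (p : ℕ) : 0 ≤ aa p := by
  unfold aa; split_ifs
  · exact Real.log_natCast_nonneg p
  · exact le_rfl

lemma ee_nonneg (p : ℕ) : 0 ≤ ee p := by
  unfold ee; split_ifs <;> norm_num

lemma ee_sq (p : ℕ) : ee p * ee p = ee p := by
  unfold ee; split_ifs <;> norm_num

lemma ee_le_one (p : ℕ) : ee p ≤ 1 := by
  unfold ee; split_ifs <;> norm_num

lemma aa_le {p N : ℕ} (h : p ≤ N) : aa p ≤ Real.log N * ee p := by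
  unfold aa ee; split_ifs with hp
  · rw [mul_one]
    exact Real.log_le_log (by exact_mod_cast hp.1.pos) (by exact_mod_cast h)
  · simp

noncomputable def RR (m : ℕ) : ℝ := ∑ p ∈ Finset.range (m + 1), aa p * aa (m - p)
noncomputable def SS (N : ℕ) : ℝ := ∑ m ∈ Finset.range (N + 1), RR m

lemma SS_eq (N : ℕ) : SS N = ∑ p ∈ Finset.range (N + 1), aa p * TT (N - p) := by
  unfold SS RR
  rw [Finset.sum_range_diag_flip (N + 1) (fun p q => aa p * aa q)]
  refine Finset.sum_congr rfl fun p hp => ?_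
  rw [← Finset.mul_sum]
  have : N + 1 - p = N - p + 1 := by have := Finset.mem_range.mp hp; omega
  rw [this, TT]

lemma sum_aa_mul (N : ℕ) : ∑ p ∈ Finset.range (N + 1), aa p * ((N : ℝ) - p) =
    ∑ k ∈ Finset.range N, TT k := by
  induction N with
  | zero => simp
  | succ m ih =>
    rw [Finset.sum_range_succ, Finset.sum_range_succ (fun k => TT k), ← ih]
    unfold TT
    rw [← Finset.sum_add_distrib, sub_self, mul_zero, add_zero]
    refine Finset.sum_congr rfl fun p _ => ?_
    push_cast; ring

lemma SS_lim : Tendsto (fun N : ℕ => SS N / (N : ℝ) ^ 2) atTop (𝓝 (1 / 2)) := by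
  have hT : Tendsto (fun k : ℕ => TT k / (k : ℝ) ^ 1) atTop (𝓝 1) := by
    simpa using TT_lim
  have h1 := cesaro le_rfl pow1 hT
  rw [one_mul] at h1
  have key : Tendsto (fun N : ℕ => (SS N - ∑ k ∈ Finset.range N, TT k) / (N : ℝ) ^ 2)
      atTop (𝓝 0) := by
    refine tendsto_zero_of_bound (B := 4) (by norm_num) ?_ ?_
    · filter_upwards [eventually_gt_atTop 0] with N hN
      have : (0 : ℝ) < N := by exact_mod_cast hN
      positivity
    · intro ε hε
      obtain ⟨C, hC, hb⟩ := bound_of_lim hT hε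
      obtain ⟨K, hK⟩ := exists_nat_gt (C / ε)
      have hT2 := hT.eventually (eventually_le_nhds (show (1 : ℝ) < 2 by norm_num))
      filter_upwards [eventually_ge_atTop (max K 1), hT2] with N hN hTN
      have hN1 : (1 : ℝ) ≤ N := by exact_mod_cast (le_max_right K 1).trans hN
      have hNK : (K : ℝ) ≤ N := by exact_mod_cast (le_max_left K 1).trans hN
      have hCN : C ≤ ε * N := by
        rw [div_lt_iff₀ hε] at hK
        nlinarith
      rw [pow_one, div_le_iff₀ (by linarith)] at hTN
      rw [SS_eq, ← sum_aa_mul, ← Finset.sum_sub_distrib]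
      calc |∑ p ∈ Finset.range (N + 1), (aa p * TT (N - p) - aa p * ((N : ℝ) - p))|
          ≤ ∑ p ∈ Finset.range (N + 1), |aa p * TT (N - p) - aa p * ((N : ℝ) - p)| :=
            Finset.abs_sum_le_sum_abs _ _
        _ ≤ ∑ p ∈ Finset.range (N + 1), aa p * (2 * ε * N) := by
            refine Finset.sum_le_sum fun p hp => ?_
            have hpN : p ≤ N := by have := Finset.mem_range.mp hp; omega
            rw [← mul_sub, abs_mul, abs_of_nonneg (aa_nonneg p)]
            refine mul_le_mul_of_nonneg_left ?_ (aa_nonneg p)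
            have h3 := hb (N - p)
            rw [Nat.cast_sub hpN, pow_one, one_mul] at h3
            have : (0 : ℝ) ≤ p := by positivity
            nlinarith
        _ = TT N * (2 * ε * N) := by rw [← Finset.sum_mul]; rfl
        _ ≤ (2 * N) * (2 * ε * N) := by
            refine mul_le_mul_of_nonneg_right hTN (by positivity)
        _ = 4 * ε * (N : ℝ) ^ 2 := by ring
  have h2 := key.add h1
  rw [zero_add] at h2
  refine h2.congr fun N => ?_
  norm_num
  ring

lemma RR_odd (k : ℕ) : RR (2 * k + 1) = 0 := by
  unfold RR
  refine Finset.sum_eq_zero fun p hp => ?_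
  have hp' := Finset.mem_range.mp hp
  unfold aa
  split_ifs with h1 h2
  · exfalso
    have h3 := h1.2; have h4 := h2.2
    rw [Nat.odd_iff] at h3 h4
    omega
  all_goals simp

noncomputable def ww (k : ℕ) : ℝ := RR (2 * k) / 2
noncomputable def VV (j n : ℕ) : ℝ := ∑ k ∈ Finset.range (n + 1), (k : ℝ) ^ j * ww k

lemma VV0_eq (n : ℕ) : VV 0 n = SS (2 * n) / 2 := by
  induction n with
  | zero => simp [VV, SS, ww]
  | succ m ih =>
    have h1 : VV 0 (m + 1) = VV 0 m + ww (m + 1) := by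
      unfold VV; rw [Finset.sum_range_succ]; simp
    have h2 : SS (2 * (m + 1)) = SS (2 * m) + RR (2 * m + 1) + RR (2 * (m + 1)) := by
      unfold SS
      rw [show 2 * (m + 1) + 1 = 2 * m + 1 + 1 + 1 by ring, Finset.sum_range_succ,
        Finset.sum_range_succ]
      rfl
    rw [h1, h2, RR_odd, ih, ww]; ring

lemma VV0_lim : Tendsto (fun n : ℕ => VV 0 n / (n : ℝ) ^ 2) atTop (𝓝 1) := by
  have h1 : Tendsto (fun n : ℕ => 2 * n) atTop atTop :=
    tendsto_id.const_mul_atTop' (by norm_num)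
  have h2 := (SS_lim.comp h1).mul_const 2
  rw [show (1 / 2 : ℝ) * 2 = 1 by norm_num] at h2
  refine h2.congr fun n => ?_
  simp only [Function.comp_apply, VV0_eq]
  push_cast
  rw [mul_pow]
  ring

lemma VV1_eq (n : ℕ) : VV 1 n = n * VV 0 n - ∑ k ∈ Finset.range n, VV 0 k := by
  induction n with
  | zero => simp [VV]
  | succ m ih =>
    have h0 : VV 0 (m + 1) = VV 0 m + ww (m + 1) := by
      unfold VV; rw [Finset.sum_range_succ]; simp
    have h1 : VV 1 (m + 1) = VV 1 m + (m + 1) * ww (m + 1) := by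
      unfold VV; rw [Finset.sum_range_succ]; simp
    rw [Finset.sum_range_succ, h1, h0, ih]; push_cast; ring

lemma VV2_eq (n : ℕ) : VV 2 n = n ^ 2 * VV 0 n -
    ∑ k ∈ Finset.range n, (2 * (k : ℝ) + 1) * VV 0 k := by
  induction n with
  | zero => simp [VV]
  | succ m ih =>
    have h0 : VV 0 (m + 1) = VV 0 m + ww (m + 1) := by
      unfold VV; rw [Finset.sum_range_succ]; simp
    have h1 : VV 2 (m + 1) = VV 2 m + (m + 1) ^ 2 * ww (m + 1) := by
      unfold VV; rw [Finset.sum_range_succ]; simp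
    rw [Finset.sum_range_succ, h1, h0, ih]; push_cast; ring

lemma VV1_lim : Tendsto (fun n : ℕ => VV 1 n / (n : ℝ) ^ 3) atTop (𝓝 (2 / 3)) := by
  have h1 := VV0_lim.sub (cesaro (by norm_num) pow2 VV0_lim)
  rw [show (1 : ℝ) - 1 * (1 / 3) = 2 / 3 by norm_num] at h1
  refine h1.congr' ?_
  filter_upwards [eventually_gt_atTop 0] with N hN
  have : (N : ℝ) ≠ 0 := by exact_mod_cast hN.ne'
  rw [VV1_eq]; field_simp; ring

lemma VV2_lim : Tendsto (fun n : ℕ => VV 2 n / (n : ℝ) ^ 4) atTop (𝓝 (1 / 2)) := by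
  have h0 : Tendsto (fun k : ℕ => ((2 * (k : ℝ) + 1) * VV 0 k) / (k : ℝ) ^ 3) atTop (𝓝 2) := by
    have := ((tendsto_const_nhds (x := (2 : ℝ))).add inv_nat_lim).mul VV0_lim
    rw [show ((2 : ℝ) + 0) * 1 = 2 by norm_num] at this
    refine this.congr' ?_
    filter_upwards [eventually_gt_atTop 0] with N hN
    have : (N : ℝ) ≠ 0 := by exact_mod_cast hN.ne'
    field_simp
  have h1 := VV0_lim.sub (cesaro (by norm_num) pow3 h0)
  rw [show (1 : ℝ) - 2 * (1 / 4) = 1 / 2 by norm_num] at h1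
  refine h1.congr' ?_
  filter_upwards [eventually_gt_atTop 0] with N hN
  have : (N : ℝ) ≠ 0 := by exact_mod_cast hN.ne'
  rw [VV2_eq]; field_simp; ring
end GB

namespace GB

noncomputable def rr (m : ℕ) : ℝ := ∑ p ∈ Finset.range (m + 1), ee p * ee (m - p)

lemma Q2_eq (k : ℕ) : (Q2 k : ℝ) = ∑ p ∈ Finset.range (2 * k + 1),
    if p ≤ 2 * k - p then ee p * ee (2 * k - p) else 0 := by
  unfold Q2
  rw [Finset.card_filter, Finset.sum_product]
  push_cast
  refine Finset.sum_congr rfl fun p hp => ?_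
  have hp' := Finset.mem_range.mp hp
  rw [Finset.sum_eq_single (2 * k - p)]
  · have h : p + (2 * k - p) = 2 * k := by omega
    unfold ee
    by_cases h1 : p.Prime ∧ Odd p
    · by_cases h2 : (2 * k - p).Prime ∧ Odd (2 * k - p)
      · simp [h1, h2, h]
      · rw [if_neg (by tauto), if_neg h2]; simp
    · rw [if_neg (by tauto), if_neg h1]; simp
  · intro q hq hne
    rw [if_neg]
    rintro ⟨_, _, _, _, _, h⟩
    omega
  · intro h
    exact absurd (Finset.mem_range.mpr (by omega)) h

lemma two_Q2 (k : ℕ) : 2 * (Q2 k : ℝ) = rr (2 * k) + ee k := by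
  have h1 := Q2_eq k
  have h2 : (Q2 k : ℝ) = ∑ p ∈ Finset.range (2 * k + 1),
      if 2 * k - p ≤ p then ee p * ee (2 * k - p) else 0 := by
    rw [h1, ← Finset.sum_range_reflect]
    refine Finset.sum_congr rfl fun p hp => ?_
    have hp' := Finset.mem_range.mp hp
    have e1 : 2 * k + 1 - 1 - p = 2 * k - p := by omega
    have e2 : 2 * k - (2 * k - p) = p := by omega
    rw [e1, e2, mul_comm (ee (2 * k - p))]
  have h3 : ee k = ∑ p ∈ Finset.range (2 * k + 1), if p = k then ee p * ee (2 * k - p) else 0 := by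
    rw [Finset.sum_ite_eq', if_pos (Finset.mem_range.mpr (by omega)),
      show 2 * k - k = k by omega, ee_sq]
  rw [two_mul]
  nth_rewrite 1 [h1]
  rw [h2, h3, rr, ← Finset.sum_add_distrib, ← Finset.sum_add_distrib]
  refine Finset.sum_congr rfl fun p hp => ?_
  have hp' := Finset.mem_range.mp hp
  rcases lt_trichotomy p k with h | h | h
  · rw [if_pos (by omega), if_neg (by omega), if_neg (by omega)]
  · rw [if_pos (by omega), if_pos (by omega), if_pos (by omega)]
  · rw [if_neg (by omega), if_pos (by omega), if_neg (by omega)]; ring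

noncomputable def MM (j n : ℕ) : ℝ := ∑ k ∈ Finset.range (n + 1), (k : ℝ) ^ j * (Q2 k : ℝ)

lemma MM_eq (j n : ℕ) : ∑ k ∈ Finset.Icc 3 n, (k : ℝ) ^ j * (Q2 k : ℝ) = MM j n := by
  unfold MM
  refine Finset.sum_subset (fun k hk => ?_) fun k hk hk2 => ?_
  · have := Finset.mem_Icc.mp hk
    exact Finset.mem_range.mpr (by omega)
  · have h1 := Finset.mem_range.mp hk
    have h2 : k < 3 := by
      by_contra h
      exact hk2 (Finset.mem_Icc.mpr (by omega))
    have : Q2 k = 0 := by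
      interval_cases k <;> decide
    rw [this]; simp

lemma sum_even_le {g : ℕ → ℝ} (hg : ∀ m, 0 ≤ g m) (n : ℕ) :
    ∑ k ∈ Finset.range (n + 1), g (2 * k) ≤ ∑ m ∈ Finset.range (2 * n + 1), g m := by
  induction n with
  | zero => simp
  | succ m ih =>
    rw [Finset.sum_range_succ, show 2 * (m + 1) + 1 = 2 * m + 1 + 1 + 1 by ring,
      Finset.sum_range_succ _ (2 * m + 1 + 1), Finset.sum_range_succ _ (2 * m + 1),
      show 2 * (m + 1) = 2 * m + 1 + 1 by ring]
    linarith [hg (2 * m + 1)]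

/-- pointwise defect -/
noncomputable def dd (L : ℝ) (k : ℕ) : ℝ := L ^ 2 * (Q2 k : ℝ) - ww k

lemma dd_eq (L : ℝ) (k : ℕ) : dd L k =
    (∑ p ∈ Finset.range (2 * k + 1), (L ^ 2 * (ee p * ee (2 * k - p)) - aa p * aa (2 * k - p))) / 2
      + L ^ 2 * ee k / 2 := by
  have h := two_Q2 k
  rw [Finset.sum_sub_distrib, ← Finset.mul_sum]
  unfold dd ww
  rw [show (Q2 k : ℝ) = (rr (2 * k) + ee k) / 2 by linarith, rr, RR]
  ring

lemma prod_bounds {L x y a b : ℝ} (hL : 0 ≤ L) (hx : 0 ≤ x) (hy : 0 ≤ y) (ha : 0 ≤ a) (hb : 0 ≤ b)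
    (h1 : a ≤ L * x) (h2 : b ≤ L * y) :
    0 ≤ L ^ 2 * (x * y) - a * b ∧
      L ^ 2 * (x * y) - a * b ≤ L * x * (L * y - b) + (L * x - a) * (L * y) := by
  constructor
  · have := mul_le_mul h1 h2 hb (by positivity)
    nlinarith
  · nlinarith [mul_nonneg (sub_nonneg.mpr h1) (sub_nonneg.mpr h2)]

lemma dd_nonneg {n k : ℕ} (hk : k ≤ n) : 0 ≤ dd (Real.log (2 * n : ℕ)) k := by
  rw [dd_eq]
  have hL : 0 ≤ Real.log (2 * n : ℕ) := Real.log_natCast_nonneg _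
  have h1 : 0 ≤ ∑ p ∈ Finset.range (2 * k + 1),
      (Real.log (2 * n : ℕ) ^ 2 * (ee p * ee (2 * k - p)) - aa p * aa (2 * k - p)) := by
    refine Finset.sum_nonneg fun p hp => ?_
    have hp' := Finset.mem_range.mp hp
    exact (prod_bounds hL (ee_nonneg _) (ee_nonneg _) (aa_nonneg _) (aa_nonneg _)
      (aa_le (by omega)) (aa_le (by omega))).1
  have h2 : 0 ≤ Real.log (2 * n : ℕ) ^ 2 * ee k := mul_nonneg (sq_nonneg _) (ee_nonneg k)
  linarith

noncomputable def Del (n : ℕ) : ℝ := ∑ k ∈ Finset.range (n + 1), dd (Real.log (2 * n : ℕ)) k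

lemma Del_le (n : ℕ) : Del n ≤
    Real.log (2 * n : ℕ) * EE (2 * n) * (Real.log (2 * n : ℕ) * EE (2 * n) - TT (2 * n))
      + Real.log (2 * n : ℕ) ^ 2 * (n + 1) / 2 := by
  set L := Real.log (2 * n : ℕ) with hLdef
  have hL : 0 ≤ L := Real.log_natCast_nonneg _
  let F : ℕ → ℕ → ℝ := fun p q => if p ≤ 2 * n ∧ q ≤ 2 * n then
    L * ee p * (L * ee q - aa q) + (L * ee p - aa p) * (L * ee q) else 0
  have hF : ∀ p q, 0 ≤ F p q := by
    intro p q
    simp only [F]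
    split_ifs with h
    · have h1 := prod_bounds hL (ee_nonneg p) (ee_nonneg q) (aa_nonneg _) (aa_nonneg _)
        (aa_le h.1) (aa_le h.2)
      exact h1.1.trans h1.2
    · exact le_rfl
  let g : ℕ → ℝ := fun m => ∑ p ∈ Finset.range (m + 1), F p (m - p)
  have hg : ∀ m, 0 ≤ g m := fun m => Finset.sum_nonneg fun p _ => hF _ _
  have h1 : ∀ k ∈ Finset.range (n + 1), dd L k ≤ g (2 * k) / 2 + L ^ 2 / 2 := by
    intro k hk
    have hk' := Finset.mem_range.mp hk
    rw [dd_eq]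
    have h2 : L ^ 2 * ee k ≤ L ^ 2 := by
      have := mul_le_mul_of_nonneg_left (ee_le_one k) (sq_nonneg L)
      linarith
    have h3 : ∑ p ∈ Finset.range (2 * k + 1),
        (L ^ 2 * (ee p * ee (2 * k - p)) - aa p * aa (2 * k - p)) ≤ g (2 * k) := by
      refine Finset.sum_le_sum fun p hp => ?_
      have hp' := Finset.mem_range.mp hp
      simp only [F]
      rw [if_pos (by omega)]
      exact (prod_bounds hL (ee_nonneg _) (ee_nonneg _) (aa_nonneg _) (aa_nonneg _)
        (aa_le (by omega)) (aa_le (by omega))).2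
    linarith
  have h4 : ∑ m ∈ Finset.range (2 * n + 1), g m ≤ 2 * (L * EE (2 * n) * (L * EE (2 * n) - TT (2 * n))) := by
    simp only [g]
    rw [Finset.sum_range_diag_flip (2 * n + 1) F]
    calc ∑ p ∈ Finset.range (2 * n + 1), ∑ q ∈ Finset.range (2 * n + 1 - p), F p q
        ≤ ∑ p ∈ Finset.range (2 * n + 1), ∑ q ∈ Finset.range (2 * n + 1), F p q := by
          refine Finset.sum_le_sum fun p _ => ?_
          refine Finset.sum_le_sum_of_subset_of_nonneg ?_ fun q _ _ => hF p q
          exact Finset.range_subset_range.mpr (by omega)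
      _ = ∑ p ∈ Finset.range (2 * n + 1), ∑ q ∈ Finset.range (2 * n + 1),
            (L * ee p * (L * ee q - aa q) + (L * ee p - aa p) * (L * ee q)) := by
          refine Finset.sum_congr rfl fun p hp => Finset.sum_congr rfl fun q hq => ?_
          have hp' := Finset.mem_range.mp hp
          have hq' := Finset.mem_range.mp hq
          simp only [F]
          rw [if_pos (by omega)]
      _ = 2 * (L * EE (2 * n) * (L * EE (2 * n) - TT (2 * n))) := by
          simp only [Finset.sum_add_distrib, ← Finset.mul_sum, ← Finset.sum_mul,
            Finset.sum_sub_distrib]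
          simp only [EE, TT]
          ring
  calc Del n ≤ ∑ k ∈ Finset.range (n + 1), (g (2 * k) / 2 + L ^ 2 / 2) := Finset.sum_le_sum h1
    _ = (∑ k ∈ Finset.range (n + 1), g (2 * k)) / 2 + L ^ 2 * (n + 1) / 2 := by
        rw [Finset.sum_add_distrib, Finset.sum_div, Finset.sum_const, Finset.card_range,
          nsmul_eq_mul]
        push_cast; ring
    _ ≤ _ := by
        have := sum_even_le hg n
        linarith

lemma Del_nonneg (n : ℕ) : 0 ≤ Del n :=
  Finset.sum_nonneg fun k hk => dd_nonneg (by have := Finset.mem_range.mp hk; omega)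

lemma two_mul_tendsto : Tendsto (fun n : ℕ => 2 * n) atTop atTop :=
  tendsto_id.const_mul_atTop' (by norm_num)

lemma log_sq_lim : Tendsto (fun n : ℕ => Real.log (2 * n : ℕ) ^ 2 / ((2 * n : ℕ) : ℝ)) atTop (𝓝 0) := by
  have h := (Real.isLittleO_pow_log_id_atTop (n := 2)).tendsto_div_nhds_zero
  exact (h.comp (tendsto_natCast_atTop_atTop (R := ℝ))).comp two_mul_tendsto

lemma Del_lim : Tendsto (fun n : ℕ => Del n / (n : ℝ) ^ 2) atTop (𝓝 0) := by
  have hE := EE_lim.comp two_mul_tendsto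
  have hT := TT_lim.comp two_mul_tendsto
  have h1 := ((hE.mul (hE.sub hT)).mul_const 4).add
    ((log_sq_lim.mul ((tendsto_const_nhds (x := (1 : ℝ))).add inv_nat_lim)))
  rw [show (1 : ℝ) * (1 - 1) * 4 + 0 * (1 + 0) = 0 by norm_num] at h1
  refine squeeze_zero' (Eventually.of_forall fun n => div_nonneg (Del_nonneg n) (by positivity))
    ?_ h1
  filter_upwards [eventually_gt_atTop 0] with n hn
  have hn' : (0 : ℝ) < n := by exact_mod_cast hn
  rw [div_le_iff₀ (by positivity)]
  refine (Del_le n).trans (le_of_eq ?_)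
  simp only [Function.comp_apply]
  push_cast
  field_simp
  try ring

lemma MM_lim (j : ℕ) {c : ℝ} (h : Tendsto (fun n : ℕ => VV j n / (n : ℝ) ^ (j + 2)) atTop (𝓝 c)) :
    Tendsto (fun n : ℕ => Real.log (2 * n : ℕ) ^ 2 * MM j n / (n : ℝ) ^ (j + 2)) atTop (𝓝 c) := by
  have key : Tendsto (fun n : ℕ => (Real.log (2 * n : ℕ) ^ 2 * MM j n - VV j n) / (n : ℝ) ^ (j + 2))
      atTop (𝓝 0) := by
    have e : ∀ n, Real.log (2 * n : ℕ) ^ 2 * MM j n - VV j n =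
        ∑ k ∈ Finset.range (n + 1), (k : ℝ) ^ j * dd (Real.log (2 * n : ℕ)) k := by
      intro n
      unfold MM VV dd
      rw [Finset.mul_sum, ← Finset.sum_sub_distrib]
      exact Finset.sum_congr rfl fun k _ => by ring
    refine squeeze_zero' (Eventually.of_forall fun n => ?_) ?_ Del_lim
    · rw [e]
      refine div_nonneg (Finset.sum_nonneg fun k hk => ?_) (by positivity)
      exact mul_nonneg (by positivity) (dd_nonneg (by have := Finset.mem_range.mp hk; omega))
    · filter_upwards [eventually_gt_atTop 0] with n hn
      have hn' : (0 : ℝ) < n := by exact_mod_cast hn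
      rw [e, div_le_div_iff₀ (by positivity) (by positivity)]
      have h2 : ∑ k ∈ Finset.range (n + 1), (k : ℝ) ^ j * dd (Real.log (2 * n : ℕ)) k ≤
          (n : ℝ) ^ j * Del n := by
        unfold Del
        rw [Finset.mul_sum]
        refine Finset.sum_le_sum fun k hk => ?_
        have hk' : k ≤ n := by have := Finset.mem_range.mp hk; omega
        refine mul_le_mul_of_nonneg_right ?_ (dd_nonneg hk')
        exact pow_le_pow_left₀ (by positivity) (by exact_mod_cast hk') j
      calc _ ≤ (n : ℝ) ^ j * Del n * (n : ℝ) ^ 2 := mul_le_mul_of_nonneg_right h2 (by positivity)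
        _ = _ := by ring
  have h2 := key.add h
  rw [zero_add] at h2
  exact h2.congr fun n => by ring

end GB

/-- `Var(Gₙ)/n² → 1/18`, expressed via the moment sums of `Q2`. -/
theorem variance_goldbach_number :
    Tendsto (fun n : ℕ =>
        (∑ k ∈ Finset.Icc 3 n, (k : ℝ) ^ 2 * (Q2 k : ℝ)) /
            ((n : ℝ) ^ 2 * ∑ k ∈ Finset.Icc 3 n, (Q2 k : ℝ)) -
          ((∑ k ∈ Finset.Icc 3 n, (k : ℝ) * (Q2 k : ℝ)) /
            ((n : ℝ) * ∑ k ∈ Finset.Icc 3 n, (Q2 k : ℝ))) ^ 2)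
      atTop (𝓝 (1 / 18)) := by
  have h0 := GB.MM_lim 0 GB.VV0_lim
  have h1 := GB.MM_lim 1 GB.VV1_lim
  have h2 := GB.MM_lim 2 GB.VV2_lim
  have h3 := (h2.div h0 one_ne_zero).sub ((h1.div h0 one_ne_zero).pow 2)
  rw [show (1 / 2 : ℝ) / 1 - (2 / 3 / 1) ^ 2 = 1 / 18 by norm_num] at h3
  refine h3.congr' ?_
  filter_upwards [eventually_gt_atTop 0] with n hn
  have hn' : (n : ℝ) ≠ 0 := by exact_mod_cast hn.ne'
  have hL : Real.log (2 * n : ℕ) ≠ 0 := by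
    refine (Real.log_pos ?_).ne'
    have : 1 < 2 * n := by omega
    exact_mod_cast this
  have e0 := GB.MM_eq 0 n
  have e1 := GB.MM_eq 1 n
  have e2 := GB.MM_eq 2 n
  simp only [pow_zero, one_mul, pow_one] at e0 e1
  rw [e0, e1, e2]
  simp only [Pi.div_apply]
  set L := Real.log (2 * n : ℕ)
  have c : ∀ j : ℕ, L ^ 2 * GB.MM j n / (n : ℝ) ^ (j + 2) / (L ^ 2 * GB.MM 0 n / (n : ℝ) ^ (0 + 2))
      = GB.MM j n / ((n : ℝ) ^ j * GB.MM 0 n) := by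
    intro j
    by_cases hM : GB.MM 0 n = 0
    · simp [hM]
    · rw [pow_add]
      field_simp
      try ring
  rw [c 2, c 1, pow_one]
end

section
/- Let Q₂(2k) denote the number of Goldbach partitions of the even integer 2k. Then the limit, as n → ∞, of (Σ_{2<k≤n} k²·Q₂(2k)) / (n² · Σ_{2<k≤n} Q₂(2k)) equals 1/2. Equivalently, E(Gₙ²)/n² → 1/2 for the random variable Gₙ of a uniformly random Goldbach partition of an even integer in (4, 2n]. -/
open Filter Topology Asymptotics MeasureTheory

open FourierTransform in
/-- Abstract Fourier-analytic part of the Wiener-Ikehara argument. -/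
lemma wi_abstract (f : ℝ → ℝ) (hfm : Measurable f) (C : ℝ) (hfC : ∀ x, |f x| ≤ C)
    (hf0 : ∀ x ≤ 0, f x = 0) (G : ℂ → ℂ) (hG : ContinuousOn G {s | 0 ≤ s.re})
    (hfG : ∀ s : ℂ, 0 < s.re → ∫ x : ℝ, (f x : ℂ) * Complex.exp (-s * x) = G s)
    (k : ℝ → ℂ) (hk : Continuous k) (hkc : HasCompactSupport k) (hkF : Integrable (𝓕 k)) :
    Tendsto (fun y : ℝ => ∫ x : ℝ, (f x : ℂ) * 𝓕 k (x - y)) atTop (𝓝 0) := by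
  have hC : 0 ≤ C := (abs_nonneg _).trans (hfC 0)
  -- shifted kernels
  have hshift : ∀ x y : ℝ, 𝓕 (fun t : ℝ => k t * Complex.exp (2 * Real.pi * t * y * Complex.I)) x
      = 𝓕 k (x - y) := by
    intro x y
    rw [Real.fourier_real_eq_integral_exp_smul, Real.fourier_real_eq_integral_exp_smul]
    congr 1; ext t
    simp only [smul_eq_mul]
    rw [mul_left_comm, mul_comm (Complex.exp _) (k t), ← Complex.exp_add]
    congr 2
    push_cast; ring
  have hkint : ∀ y : ℝ, Integrable
      (fun t : ℝ => k t * Complex.exp (2 * Real.pi * t * y * Complex.I)) := by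
    intro y
    apply Continuous.integrable_of_hasCompactSupport
    · fun_prop
    · exact hkc.mul_right
  have hfint : ∀ δ : ℝ, 0 < δ → Integrable (fun x : ℝ => (f x : ℂ) * Complex.exp (-(δ:ℂ) * x)) := by
    intro δ hδ
    have h1 : IntegrableOn (fun x : ℝ => C * Real.exp (-δ * x)) (Set.Ioi 0) :=
      (integrableOn_exp_mul_Ioi (by linarith) 0).const_mul C
    have h2 := h1.integrable_indicator measurableSet_Ioi
    refine h2.mono' ?_ ?_
    · apply Measurable.aestronglyMeasurable
      fun_prop
    · refine Eventually.of_forall fun x => ?_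
      by_cases hx : 0 < x
      · rw [Set.indicator_of_mem (by exact hx)]
        rw [norm_mul, Complex.norm_exp]
        simp only [Complex.norm_real, Real.norm_eq_abs]
        have : (-(δ:ℂ) * x).re = -δ * x := by simp
        rw [this]
        gcongr
        exact hfC x
      · rw [hf0 x (not_lt.mp hx)]
        simp only [Complex.ofReal_zero, zero_mul, norm_zero]
        exact Set.indicator_nonneg (fun _ _ => by positivity) _
  -- key identity for positive δ
  have key : ∀ δ : ℝ, 0 < δ → ∀ y : ℝ,
      ∫ t : ℝ, G (δ + 2 * Real.pi * t * Complex.I) *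
        (k t * Complex.exp (2 * Real.pi * t * y * Complex.I)) =
      ∫ x : ℝ, ((f x : ℂ) * Complex.exp (-(δ:ℂ) * x)) * 𝓕 k (x - y) := by
    intro δ hδ y
    have h := VectorFourier.integral_fourierIntegral_smul_eq_flip (L := innerₗ ℝ)
      (μ := volume) (ν := volume) (e := Real.fourierChar)
      Real.continuous_fourierChar continuous_inner (hfint δ hδ) (hkint y)
    rw [flip_innerₗ] at h
    change ∫ t : ℝ, 𝓕 (fun x : ℝ => (f x : ℂ) * Complex.exp (-(δ:ℂ) * x)) t • _ =
      ∫ x : ℝ, _ • 𝓕 (fun t : ℝ => k t * Complex.exp (2 * Real.pi * t * y * Complex.I)) x at h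
    simp only [hshift, smul_eq_mul] at h
    rw [← h]
    congr 1; ext t
    congr 1
    rw [Real.fourier_real_eq_integral_exp_smul, ← hfG _ (by simpa using hδ)]
    congr 1; ext x
    rw [smul_eq_mul, mul_left_comm, ← Complex.exp_add]
    congr 2
    push_cast; ring
  have lim : ∀ y : ℝ, ∫ t : ℝ, G (2 * Real.pi * t * Complex.I) *
        (k t * Complex.exp (2 * Real.pi * t * y * Complex.I)) =
      ∫ x : ℝ, (f x : ℂ) * 𝓕 k (x - y) := by
    intro y
    have hR : Tendsto (fun δ : ℝ => ∫ x : ℝ, ((f x : ℂ) * Complex.exp (-(δ:ℂ) * x)) * 𝓕 k (x - y))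
        (𝓝[>] 0) (𝓝 (∫ x : ℝ, (f x : ℂ) * 𝓕 k (x - y))) := by
      apply tendsto_integral_filter_of_dominated_convergence (fun x => C * ‖𝓕 k (x - y)‖)
      · refine Eventually.of_forall fun δ => ?_
        refine AEStronglyMeasurable.mul ?_ (hkF.comp_sub_right y).aestronglyMeasurable
        apply Measurable.aestronglyMeasurable
        fun_prop
      · filter_upwards [self_mem_nhdsWithin] with δ hδ
        refine Eventually.of_forall fun x => ?_
        rw [norm_mul]
        gcongr
        rw [norm_mul, Complex.norm_exp]
        simp only [Complex.norm_real, Real.norm_eq_abs]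
        have : (-(δ:ℂ) * x).re = -δ * x := by simp
        rw [this]
        by_cases hx : 0 < x
        · have h1 : Real.exp (-δ * x) ≤ 1 := by
            rw [Real.exp_le_one_iff]
            have : 0 < δ * x := mul_pos hδ hx
            linarith
          calc _ ≤ C * 1 := by gcongr; exact hfC x
            _ = C := mul_one C
        · rw [hf0 x (not_lt.mp hx)]; simpa using hC
      · exact (hkF.comp_sub_right y).norm.const_mul C
      · refine Eventually.of_forall fun x => ?_
        refine Tendsto.mul_const _ ?_
        have : Continuous fun δ : ℝ => (f x : ℂ) * Complex.exp (-(δ:ℂ) * x) := by fun_prop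
        have h := this.tendsto 0
        simp only [Complex.ofReal_zero, neg_zero, zero_mul, Complex.exp_zero, mul_one] at h
        exact h.mono_left nhdsWithin_le_nhds
    have hL : Tendsto (fun δ : ℝ => ∫ t : ℝ, G (δ + 2 * Real.pi * t * Complex.I) *
        (k t * Complex.exp (2 * Real.pi * t * y * Complex.I)))
        (𝓝[>] 0) (𝓝 (∫ t : ℝ, G (2 * Real.pi * t * Complex.I) *
        (k t * Complex.exp (2 * Real.pi * t * y * Complex.I)))) := by
      have hG2 : ContinuousOn (fun p : ℝ × ℝ => G (p.1 + 2 * Real.pi * p.2 * Complex.I))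
          (Set.Ici 0 ×ˢ Set.univ) := by
        apply hG.comp (by fun_prop)
        intro p hp
        simpa using hp.1
      obtain ⟨M, hM⟩ := (isCompact_Icc.prod hkc.isCompact).exists_bound_of_continuousOn
        (hG2.mono (t := Set.Icc (0:ℝ) 1 ×ˢ tsupport k) (fun p hp => ⟨hp.1.1, trivial⟩))
      have hmem : ∀ᶠ δ : ℝ in 𝓝[>] 0, δ ∈ Set.Ioo (0:ℝ) 1 := Ioo_mem_nhdsGT one_pos
      apply tendsto_integral_filter_of_dominated_convergence (fun t => M * ‖k t‖)
      · filter_upwards [hmem] with δ hδ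
        apply Continuous.aestronglyMeasurable
        refine Continuous.mul ?_ (by fun_prop)
        have : ContinuousOn (fun t : ℝ => G (δ + 2 * Real.pi * t * Complex.I)) Set.univ := by
          apply hG.comp (by fun_prop)
          intro t _
          simpa using hδ.1.le
        exact continuousOn_univ.mp this
      · filter_upwards [hmem] with δ hδ
        refine Eventually.of_forall fun t => ?_
        have he : ‖Complex.exp (2 * Real.pi * t * y * Complex.I)‖ = 1 := by
          rw [Complex.norm_exp]; simp
        rw [norm_mul, norm_mul, he, mul_one]
        by_cases ht : t ∈ tsupport k
        · gcongr
          exact hM (δ, t) ⟨⟨hδ.1.le, hδ.2.le⟩, ht⟩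
        · rw [image_eq_zero_of_notMem_tsupport ht]; simp
      · exact (hk.integrable_of_hasCompactSupport hkc).norm.const_mul M
      · refine Eventually.of_forall fun t => ?_
        refine Tendsto.mul_const _ ?_
        have h := hG2.comp (f := fun δ : ℝ => (δ, t)) (s := Set.Ici 0) (by fun_prop)
          (fun δ hδ => ⟨hδ, trivial⟩)
        have h3 := (h 0 (by simp)).tendsto
        simp only [Function.comp_def, Complex.ofReal_zero, zero_add] at h3
        exact h3.mono_left (nhdsWithin_mono _ Set.Ioi_subset_Ici_self)
    refine tendsto_nhds_unique hL (hR.congr' ?_)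
    filter_upwards [self_mem_nhdsWithin] with δ hδ
    exact (key δ hδ y).symm
  have RL := (Real.tendsto_integral_exp_smul_cocompact
    (fun t : ℝ => G (2 * Real.pi * t * Complex.I) * k t)).comp
      (tendsto_neg_atTop_atBot.mono_right atBot_le_cocompact)
  refine RL.congr fun y => ?_
  rw [← lim y]
  simp only [Function.comp_def]
  congr 1; ext t
  rw [Circle.smul_def, Real.fourierChar_apply, smul_eq_mul, mul_comm, mul_assoc]
  congr 3
  push_cast; ring


/-- There is `G` continuous on `Re s ≥ 1` that is the L-series of `Λ` minus its pole. -/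
lemma vM_cont : ∃ F : ℂ → ℂ, ContinuousOn F {s | 1 ≤ s.re} ∧ ∀ s : ℂ, 1 < s.re →
    LSeries (fun n => ((ArithmeticFunction.vonMangoldt n : ℝ) : ℂ)) s = F s + 1 / (s - 1) := by
  refine ⟨_, ArithmeticFunction.vonMangoldt.continuousOn_LFunctionResidueClassAux (q := 1) 1, ?_⟩
  intro s hs
  rw [ArithmeticFunction.vonMangoldt.eqOn_LFunctionResidueClassAux (q := 1) isUnit_one hs]
  have : (ArithmeticFunction.vonMangoldt.residueClass (1 : ZMod 1)) =
      fun n => ArithmeticFunction.vonMangoldt n := by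
    ext n
    simp [ArithmeticFunction.vonMangoldt.residueClass, Set.indicator, eq_iff_true_of_subsingleton]
  rw [this]
  simp

lemma psi_bigO_nat : (fun n : ℕ => ∑ k ∈ Finset.Icc 1 n, ArithmeticFunction.vonMangoldt k)
    =O[atTop] fun n : ℕ => (n : ℝ) ^ (1 : ℝ) := by
  refine IsBigO.of_bound (Real.log 4 + 4) ?_
  refine Eventually.of_forall fun n => ?_
  have h := Chebyshev.psi_le_const_mul_self (x := n) (Nat.cast_nonneg n)
  rw [Chebyshev.psi, Nat.floor_natCast] at h
  rw [Real.norm_of_nonneg (Finset.sum_nonneg fun _ _ => ArithmeticFunction.vonMangoldt_nonneg)]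
  rw [Real.rpow_one, Real.norm_of_nonneg (Nat.cast_nonneg n)]
  exact h

/-- The normalized Chebyshev error function. -/
noncomputable def psiErr (x : ℝ) : ℝ :=
  (Set.Ioi (0:ℝ)).indicator (fun x => Chebyshev.psi (Real.exp x) * Real.exp (-x) - 1) x

lemma psiErr_meas : Measurable psiErr := by
  unfold psiErr
  apply Measurable.indicator _ measurableSet_Ioi
  have := Chebyshev.psi_mono.measurable
  fun_prop

lemma psiErr_bdd (x : ℝ) : |psiErr x| ≤ Real.log 4 + 5 := by
  have hl : 0 ≤ Real.log 4 := Real.log_nonneg (by norm_num)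
  unfold psiErr
  by_cases hx : x ∈ Set.Ioi (0:ℝ)
  · rw [Set.indicator_of_mem hx]
    have h := Chebyshev.psi_le_const_mul_self (x := Real.exp x) (Real.exp_pos x).le
    have h0 := Chebyshev.psi_nonneg (Real.exp x)
    have h1 : Chebyshev.psi (Real.exp x) * Real.exp (-x) ≤ Real.log 4 + 4 := by
      rw [Real.exp_neg, ← div_eq_mul_inv, div_le_iff₀ (Real.exp_pos x)]
      exact h
    have h2 : 0 ≤ Chebyshev.psi (Real.exp x) * Real.exp (-x) :=
      mul_nonneg h0 (Real.exp_pos _).le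
    rw [abs_le]; constructor <;> linarith
  · rw [Set.indicator_of_notMem hx]; simp; linarith

lemma psiErr_laplace : ∃ G : ℂ → ℂ, ContinuousOn G {s | 0 ≤ s.re} ∧ ∀ s : ℂ, 0 < s.re →
    ∫ x : ℝ, (psiErr x : ℂ) * Complex.exp (-s * x) = G s := by
  obtain ⟨F, hF, hFs⟩ := vM_cont
  refine ⟨fun s => (F (s + 1) - 1) / (s + 1), ?_, ?_⟩
  · have hc : ContinuousOn (fun s : ℂ => F (s + 1)) {s | 0 ≤ s.re} := by
      apply hF.comp (by fun_prop)
      intro s hs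
      simpa using hs
    refine ContinuousOn.div (hc.sub continuousOn_const) (by fun_prop) ?_
    intro s hs h
    have := congrArg Complex.re h
    simp at this
    simp at hs
    linarith
  · intro s hs
    have hs1 : s + 1 ≠ 0 := by
      intro h
      have := congrArg Complex.re h
      simp at this
      linarith
    have hs0 : s ≠ 0 := by rintro rfl; simp at hs
    have h1 := LSeries_eq_mul_integral_of_nonneg (fun n => ArithmeticFunction.vonMangoldt n)
      zero_le_one (s := s + 1) (by simpa using hs) psi_bigO_nat
      (fun _ => ArithmeticFunction.vonMangoldt_nonneg)
    rw [hFs _ (by simpa using hs)] at h1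
    have h2 : ∫ t in Set.Ioi (1 : ℝ), (∑ k ∈ Finset.Icc 1 ⌊t⌋₊,
        ((ArithmeticFunction.vonMangoldt k : ℝ) : ℂ)) * (t : ℂ) ^ (-(s + 1 + 1)) =
        ∫ x in Set.Ioi (0:ℝ), ((Chebyshev.psi (Real.exp x) * Real.exp (-x) : ℝ) : ℂ) *
          Complex.exp (-s * x) := by
      have himg : Real.exp '' Set.Ioi 0 = Set.Ioi 1 := by
        ext y; constructor
        · rintro ⟨x, hx, rfl⟩
          exact Real.one_lt_exp_iff.mpr hx
        · intro hy
          exact ⟨Real.log y, Real.log_pos hy, Real.exp_log (lt_trans one_pos hy)⟩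
      rw [← himg, integral_image_eq_integral_abs_deriv_smul measurableSet_Ioi
        (fun x _ => (Real.hasDerivAt_exp x).hasDerivWithinAt) Real.exp_injective.injOn]
      refine setIntegral_congr_fun measurableSet_Ioi fun x hx => ?_
      rw [abs_of_pos (Real.exp_pos x), Complex.real_smul,
        Complex.cpow_def_of_ne_zero (by exact_mod_cast (Real.exp_pos x).ne'),
        ← Complex.ofReal_log (Real.exp_pos x).le, Real.log_exp]
      have : Chebyshev.psi (Real.exp x) = ∑ k ∈ Finset.Icc 1 ⌊Real.exp x⌋₊,
        (ArithmeticFunction.vonMangoldt k : ℝ) := rfl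
      rw [this]
      push_cast
      rw [mul_left_comm, mul_assoc, ← Complex.exp_add, ← Complex.exp_add]
      congr 2
      ring
    rw [h2] at h1
    have h3 : ∫ x in Set.Ioi (0:ℝ), Complex.exp (-s * x) = 1 / s := by
      rw [integral_exp_mul_complex_Ioi (by simpa using hs)]
      simp
    have i3 : IntegrableOn (fun x : ℝ => Complex.exp (-s * x)) (Set.Ioi (0:ℝ)) :=
      integrableOn_exp_mul_complex_Ioi (by simpa using hs) 0
    have i2 : IntegrableOn (fun x : ℝ => ((Chebyshev.psi (Real.exp x) * Real.exp (-x) : ℝ) : ℂ) *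
          Complex.exp (-s * x)) (Set.Ioi (0:ℝ)) := by
      refine Integrable.bdd_mul (c := Real.log 4 + 4) i3 ?_ ?_
      · have := Chebyshev.psi_mono.measurable
        apply Measurable.aestronglyMeasurable
        fun_prop
      · refine Eventually.of_forall fun x => ?_
        have h := Chebyshev.psi_le_const_mul_self (x := Real.exp x) (Real.exp_pos x).le
        have h0 := Chebyshev.psi_nonneg (Real.exp x)
        rw [Complex.norm_real, Real.norm_of_nonneg (mul_nonneg h0 (Real.exp_pos _).le)]
        rw [Real.exp_neg, ← div_eq_mul_inv, div_le_iff₀ (Real.exp_pos x)]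
        exact h
    have h4 : ∫ x : ℝ, (psiErr x : ℂ) * Complex.exp (-s * x) =
        ∫ x in Set.Ioi (0:ℝ), (((Chebyshev.psi (Real.exp x) * Real.exp (-x) : ℝ) : ℂ) *
          Complex.exp (-s * x) - Complex.exp (-s * x)) := by
      rw [← integral_indicator measurableSet_Ioi]
      congr 1; ext x
      unfold psiErr
      by_cases hx : x ∈ Set.Ioi (0:ℝ)
      · rw [Set.indicator_of_mem hx, Set.indicator_of_mem hx]
        push_cast; ring
      · rw [Set.indicator_of_notMem hx, Set.indicator_of_notMem hx]; simp
    rw [h4, integral_sub i2 i3, h3]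
    have h5 : s + 1 - 1 = s := by ring
    rw [h5] at h1
    generalize (∫ x in Set.Ioi (0:ℝ), ((Chebyshev.psi (Real.exp x) * Real.exp (-x) : ℝ) : ℂ) *
          Complex.exp (-s * x)) = I at *
    have hI : I = (F (s+1) + 1 / s) / (s + 1) := by rw [h1]; field_simp
    rw [hI]
    field_simp
    ring


open FourierTransform Convolution ContDiff in
/-- A nonnegative integrable kernel whose Fourier transform has compact support. -/
lemma exists_kernel_s2 : ∃ (k : ℝ → ℂ) (K : ℝ → ℝ), Continuous k ∧ HasCompactSupport k ∧
    (∀ ξ, 𝓕 k ξ = (K ξ : ℂ)) ∧ (∀ ξ, 0 ≤ K ξ) ∧ Integrable K ∧ 0 < ∫ x, K x := by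
  let b : ContDiffBump (0 : ℝ) := ⟨1, 2, one_pos, one_lt_two⟩
  let η : ℝ → ℂ := fun x => (b x : ℂ)
  have hη1 : HasCompactSupport η := b.hasCompactSupport.comp_left (g := fun x : ℝ => (x : ℂ)) rfl
  have hη2 : ContDiff ℝ ∞ η := Complex.ofRealCLM.contDiff.comp b.contDiff
  have hηc : Continuous η := hη2.continuous
  have hηi : Integrable η := hηc.integrable_of_hasCompactSupport hη1
  let S := hη1.toSchwartzMap hη2
  have hS : ((𝓕 S : SchwartzMap ℝ ℂ) : ℝ → ℂ) = 𝓕 η := rfl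
  have hcF : Continuous (𝓕 η) := by rw [← hS]; exact (𝓕 S : SchwartzMap ℝ ℂ).continuous
  have hreal : ∀ ξ, (starRingEnd ℂ) (𝓕 η ξ) = 𝓕 η ξ := by
    intro ξ
    rw [Real.fourier_real_eq_integral_exp_smul, ← integral_conj]
    rw [← integral_neg_eq_self]
    congr 1; ext t
    simp only [smul_eq_mul, map_mul, ← Complex.exp_conj, η, Complex.conj_ofReal, Complex.conj_I]
    congr 1
    · congr 1; push_cast; ring
    · rw [b.neg]
  let K : ℝ → ℝ := fun ξ => (𝓕 η ξ).re ^ 2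
  have hre : ∀ ξ, (((𝓕 η ξ).re : ℝ) : ℂ) = 𝓕 η ξ := fun ξ => Complex.conj_eq_iff_re.mp (hreal ξ)
  have hKc : Continuous K := (Complex.continuous_re.comp hcF).pow 2
  have hKi : Integrable K := by
    obtain ⟨M, hM⟩ : ∃ M, ∀ ξ, ‖𝓕 η ξ‖ ≤ M :=
      ⟨∫ x, ‖η x‖, fun ξ => VectorFourier.norm_fourierIntegral_le_integral_norm _ _ _ _ ξ⟩
    have hi : Integrable (𝓕 η) := by rw [← hS]; exact (𝓕 S : SchwartzMap ℝ ℂ).integrable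
    refine (hi.norm.const_mul M).mono' hKc.aestronglyMeasurable ?_
    refine Eventually.of_forall fun ξ => ?_
    simp only [K]
    rw [Real.norm_of_nonneg (sq_nonneg _), ← sq_abs, sq]
    have h1 := Complex.abs_re_le_norm (𝓕 η ξ)
    have h2 := hM ξ
    have h3 := abs_nonneg (𝓕 η ξ).re
    nlinarith
  refine ⟨η ⋆[ContinuousLinearMap.mul ℂ ℂ] η, K, ?_, ?_, ?_, fun ξ => sq_nonneg _, hKi, ?_⟩
  · exact hη1.continuous_convolution_right _ hηi.locallyIntegrable hηc
  · exact hη1.convolution _ hη1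
  · intro ξ
    rw [Real.fourier_mul_convolution_eq hηi hηi]
    simp only [K]
    rw [Complex.ofReal_pow, hre, sq]
  · rw [integral_pos_iff_support_of_nonneg (fun ξ => sq_nonneg _) hKi]
    refine (hKc.isOpen_support).measure_pos volume ⟨0, ?_⟩
    have h0 : 𝓕 η 0 = ((∫ x, b x : ℝ) : ℂ) := by
      rw [Real.fourier_real_eq_integral_exp_smul, ← integral_complex_ofReal]
      simp [η]
    simp only [Function.mem_support, K, h0, Complex.ofReal_re]
    exact pow_ne_zero _ (b.integral_pos).ne'

open FourierTransform in
lemma psiErr_smooth (k : ℝ → ℂ) (K : ℝ → ℝ) (hk : Continuous k) (hkc : HasCompactSupport k)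
    (hkK : ∀ ξ, 𝓕 k ξ = (K ξ : ℂ)) (hKi : Integrable K) (l : ℝ) (hl : 0 < l) :
    Tendsto (fun y : ℝ => ∫ u : ℝ, psiErr (y + u / l) * K u) atTop (𝓝 0) := by
  obtain ⟨G, hG, hG2⟩ := psiErr_laplace
  have hl0 : (l : ℂ) ≠ 0 := by exact_mod_cast hl.ne'
  have hF : ∀ ξ, 𝓕 (fun t : ℝ => k (t / l)) ξ = ((l * K (l * ξ) : ℝ) : ℂ) := by
    intro ξ
    have h1 : (fun t : ℝ => Complex.exp (↑(-2 * Real.pi * t * ξ) * Complex.I) • k (t / l)) =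
        fun t => (fun t : ℝ => Complex.exp (↑(-2 * Real.pi * t * (l * ξ)) * Complex.I) • k t)
          (t / l) := by
      ext t
      simp only
      congr 4
      field_simp
    rw [Real.fourier_real_eq_integral_exp_smul, h1, Measure.integral_comp_div
      (fun t : ℝ => Complex.exp (↑(-2 * Real.pi * t * (l * ξ)) * Complex.I) • k t) l,
      ← Real.fourier_real_eq_integral_exp_smul, hkK, abs_of_pos hl, Complex.real_smul]
    push_cast; rfl
  have hKl : Integrable fun ξ => l * K (l * ξ) := (hKi.comp_mul_left' hl.ne').const_mul l
  have h := wi_abstract psiErr psiErr_meas _ psiErr_bdd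
    (fun x hx => Set.indicator_of_notMem (by simpa using hx) _) G hG hG2
    (fun t : ℝ => k (t / l)) (by fun_prop)
    (hkc.comp_homeomorph (Homeomorph.mulRight₀ (l⁻¹) (inv_ne_zero hl.ne')))
    (by rw [show 𝓕 (fun t : ℝ => k (t / l)) = fun ξ => ((l * K (l * ξ) : ℝ) : ℂ) from funext hF]
        exact hKl.ofReal)
  simp only [hF, ← Complex.ofReal_mul, integral_complex_ofReal] at h
  have h2 := (Complex.continuous_re.tendsto 0).comp h
  simp only [Function.comp_def, Complex.ofReal_re, Complex.zero_re] at h2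
  refine h2.congr fun y => ?_
  have e1 := integral_add_right_eq_self (μ := volume)
    (fun x => psiErr x * (l * K (l * (x - y)))) y
  rw [← e1]
  have e2 := Measure.integral_comp_mul_left (fun u => psiErr (y + u / l) * K u) l
  rw [abs_of_pos (inv_pos.mpr hl), smul_eq_mul, eq_inv_mul_iff_mul_eq₀ hl.ne'] at e2
  rw [← e2, ← integral_const_mul]
  congr 1; ext x
  rw [mul_div_cancel_left₀ _ hl.ne', add_sub_cancel_right, add_comm]
  ring

/-- The normalized Chebyshev function in the exponential variable. -/
noncomputable def psiB (x : ℝ) : ℝ := Chebyshev.psi (Real.exp x) * Real.exp (-x)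

lemma psiB_le {x y h : ℝ} (hxy : x ≤ y) (hyx : y ≤ x + h) : psiB x * Real.exp (-h) ≤ psiB y := by
  unfold psiB
  have h1 : Chebyshev.psi (Real.exp x) ≤ Chebyshev.psi (Real.exp y) :=
    Chebyshev.psi_mono (Real.exp_le_exp.mpr hxy)
  have h0 := Chebyshev.psi_nonneg (Real.exp x)
  rw [mul_assoc, ← Real.exp_add]
  have h2 : Real.exp (-x + -h) ≤ Real.exp (-y) := Real.exp_le_exp.mpr (by linarith)
  gcongr

lemma psiErr_eq {x : ℝ} (hx : 0 < x) : psiErr x = psiB x - 1 := by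
  unfold psiErr psiB
  rw [Set.indicator_of_mem (by exact hx)]

lemma psiB_bounds (h ε : ℝ) (hh : 0 < h) (hε : 0 < ε) :
    ∀ᶠ z in atTop, psiB z * Real.exp (-(2 * h)) - 1 ≤ ε ∧
      -ε ≤ psiB z * Real.exp (2 * h) - 1 := by
  obtain ⟨k, K, hk, hkc, hkK, hK0, hKi, hM⟩ := exists_kernel_s2
  set M := ∫ x, K x with hMdef
  set C := Real.log 4 + 5 with hC
  have hC0 : 0 < C := by
    have : 0 ≤ Real.log 4 := Real.log_nonneg (by norm_num)
    linarith
  -- tail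
  have htail : Tendsto (fun R : ℝ => ∫ u in Set.Icc (-R) R, K u) atTop (𝓝 M) := by
    have := (aecover_Icc (μ := volume) (tendsto_neg_atTop_atBot (G := ℝ))
      (tendsto_id (α := ℝ))).integral_tendsto_of_countably_generated hKi
    exact this
  -- choose tail tolerance
  set τ := min (M / 2) (ε * M / (8 * C)) with hτ
  have hτ0 : 0 < τ := lt_min (by positivity) (by positivity)
  obtain ⟨R, hR, hR0⟩ := ((htail.eventually (lt_mem_nhds (show M - τ < M by linarith))).and
    (eventually_gt_atTop 0)).exists
  set m := ∫ u in Set.Icc (-R) R, K u with hm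
  have hsplit : m + ∫ u in (Set.Icc (-R) R)ᶜ, K u = M :=
    integral_add_compl measurableSet_Icc hKi
  have hm2 : M / 2 ≤ m := by
    have := min_le_left (M / 2) (ε * M / (8 * C))
    linarith
  have hm0 : 0 < m := by linarith
  have htl : C * ∫ u in (Set.Icc (-R) R)ᶜ, K u ≤ ε * M / 8 := by
    have h1 := min_le_right (M / 2) (ε * M / (8 * C))
    have h2 : ∫ u in (Set.Icc (-R) R)ᶜ, K u ≤ ε * M / (8 * C) := by linarith
    calc _ ≤ C * (ε * M / (8 * C)) := by gcongr
      _ = ε * M / 8 := by field_simp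
  set l := R / h with hl
  have hl0 : 0 < l := by positivity
  have hlim := psiErr_smooth k K hk hkc hkK hKi l hl0
  have hInteg : ∀ y, Integrable (fun u : ℝ => psiErr (y + u / l) * K u) := by
    intro y
    refine Integrable.bdd_mul (c := C) hKi ?_ ?_
    · have := psiErr_meas
      apply Measurable.aestronglyMeasurable
      fun_prop
    · exact Eventually.of_forall fun u => psiErr_bdd _
  have hIcc : ∀ u ∈ Set.Icc (-R) R, -h ≤ u / l ∧ u / l ≤ h := by
    intro u hu
    rw [le_div_iff₀ hl0, div_le_iff₀ hl0]
    have : h * l = R := by rw [hl]; field_simp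
    constructor
    · linarith [hu.1]
    · linarith [hu.2]
  have hout : ∀ y, |∫ u in (Set.Icc (-R) R)ᶜ, psiErr (y + u / l) * K u| ≤ ε * M / 8 := by
    intro y
    refine le_trans ?_ htl
    rw [← integral_const_mul]
    rw [← Real.norm_eq_abs]
    refine norm_integral_le_of_norm_le (hKi.integrableOn.const_mul C) ?_
    refine Eventually.of_forall fun u => ?_
    rw [norm_mul, Real.norm_of_nonneg (hK0 u)]
    exact mul_le_mul_of_nonneg_right (psiErr_bdd _) (hK0 u)
  have hin : ∀ y c, (∀ u ∈ Set.Icc (-R) R, c ≤ psiErr (y + u / l)) →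
      c * m ≤ ∫ u in Set.Icc (-R) R, psiErr (y + u / l) * K u := by
    intro y c hc
    rw [hm, ← integral_const_mul]
    refine setIntegral_mono_on (hKi.integrableOn.const_mul c) (hInteg y).integrableOn
      measurableSet_Icc fun u hu => ?_
    exact mul_le_mul_of_nonneg_right (hc u hu) (hK0 u)
  have hin' : ∀ y c, (∀ u ∈ Set.Icc (-R) R, psiErr (y + u / l) ≤ c) →
      ∫ u in Set.Icc (-R) R, psiErr (y + u / l) * K u ≤ c * m := by
    intro y c hc
    rw [hm, ← integral_const_mul]
    refine setIntegral_mono_on (hInteg y).integrableOn (hKi.integrableOn.const_mul c)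
      measurableSet_Icc fun u hu => ?_
    exact mul_le_mul_of_nonneg_right (hc u hu) (hK0 u)
  have hI : ∀ᶠ y in atTop, |∫ u : ℝ, psiErr (y + u / l) * K u| < ε * M / 8 := by
    have := hlim.abs
    rw [abs_zero] at this
    exact this.eventually (gt_mem_nhds (by positivity))
  have hI1 := (tendsto_atTop_add_const_right atTop h tendsto_id).eventually hI
  have hI2 := (tendsto_atTop_add_const_right atTop (-h) tendsto_id).eventually hI
  filter_upwards [hI1, hI2, eventually_gt_atTop (2 * h)] with z h1 h2 hz
  simp only [id] at h1 h2
  have hεm : ε * M / 2 ≤ ε * m := by nlinarith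
  constructor
  · have a := hin (z + h) (psiB z * Real.exp (-(2 * h)) - 1) (by
      intro u hu
      obtain ⟨u1, u2⟩ := hIcc u hu
      rw [psiErr_eq (by linarith)]
      have := psiB_le (x := z) (y := z + h + u / l) (h := 2 * h) (by linarith) (by linarith)
      linarith)
    have b := hout (z + h)
    have c := integral_add_compl (measurableSet_Icc (a := -R) (b := R)) (hInteg (z + h))
    have b' := abs_le.mp b
    have h1' := abs_lt.mp h1
    by_contra hcon
    push Not at hcon
    have : ε * m < (psiB z * Real.exp (-(2 * h)) - 1) * m := by gcongr
    have : 0 < ε * M := by positivity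
    linarith [b'.1, b'.2, h1'.1, h1'.2]
  · have a := hin' (z + -h) (psiB z * Real.exp (2 * h) - 1) (by
      intro u hu
      obtain ⟨u1, u2⟩ := hIcc u hu
      rw [psiErr_eq (by linarith)]
      have := psiB_le (x := z + -h + u / l) (y := z) (h := 2 * h) (by linarith) (by linarith)
      have h3 : psiB (z + -h + u / l) = psiB (z + -h + u / l) * Real.exp (-(2 * h)) *
          Real.exp (2 * h) := by
        rw [mul_assoc, ← Real.exp_add]; simp
      have h4 : psiB (z + -h + u / l) ≤ psiB z * Real.exp (2 * h) := by
        rw [h3]; gcongr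
      linarith)
    have b := hout (z + -h)
    have c := integral_add_compl (measurableSet_Icc (a := -R) (b := R)) (hInteg (z + -h))
    have b' := abs_le.mp b
    have h1' := abs_lt.mp h2
    by_contra hcon
    push Not at hcon
    have : (psiB z * Real.exp (2 * h) - 1) * m < -ε * m := by gcongr
    have : 0 < ε * M := by positivity
    linarith [b'.1, b'.2, h1'.1, h1'.2]

lemma psiB_tendsto : Tendsto psiB atTop (𝓝 1) := by
  rw [Metric.tendsto_nhds]
  intro η hη
  have c1 : Tendsto (fun h : ℝ => (1 + h) * Real.exp (2 * h)) (𝓝[>] 0) (𝓝 1) := by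
    have : Continuous (fun h : ℝ => (1 + h) * Real.exp (2 * h)) := by fun_prop
    have h := this.tendsto 0
    simp only [add_zero, mul_zero, Real.exp_zero, mul_one] at h
    exact h.mono_left nhdsWithin_le_nhds
  have c2 : Tendsto (fun h : ℝ => (1 - h) * Real.exp (-(2 * h))) (𝓝[>] 0) (𝓝 1) := by
    have : Continuous (fun h : ℝ => (1 - h) * Real.exp (-(2 * h))) := by fun_prop
    have h := this.tendsto 0
    simp only [sub_zero, mul_zero, neg_zero, Real.exp_zero, mul_one] at h
    exact h.mono_left nhdsWithin_le_nhds
  obtain ⟨h, ⟨h1, h2⟩, h0⟩ := (((c1.eventually (gt_mem_nhds (show (1:ℝ) < 1 + η by linarith))).and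
    (c2.eventually (lt_mem_nhds (show 1 - η < (1:ℝ) by linarith)))).and
      self_mem_nhdsWithin).exists
  have h0 : 0 < h := h0
  filter_upwards [psiB_bounds h h h0 h0] with z hz
  have e : Real.exp (-(2 * h)) * Real.exp (2 * h) = 1 := by rw [← Real.exp_add]; simp
  have e1 := Real.exp_pos (2 * h)
  have e2 := Real.exp_pos (-(2 * h))
  have u1 : psiB z = psiB z * Real.exp (-(2 * h)) * Real.exp (2 * h) := by
    rw [mul_assoc, e, mul_one]
  have u2 : psiB z = psiB z * Real.exp (2 * h) * Real.exp (-(2 * h)) := by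
    rw [mul_assoc, mul_comm (Real.exp (2 * h)), e, mul_one]
  have v1 : psiB z ≤ (1 + h) * Real.exp (2 * h) := by
    rw [u1]; gcongr; linarith [hz.1]
  have v2 : (1 - h) * Real.exp (-(2 * h)) ≤ psiB z := by
    rw [u2]; gcongr; linarith [hz.2]
  rw [Real.dist_eq, abs_lt]
  constructor <;> linarith

/-- Prime number theorem, for `θ`. -/
lemma theta_pnt : Tendsto (fun x : ℝ => Chebyshev.theta x / x) atTop (𝓝 1) := by
  have h1 : Tendsto (fun x : ℝ => Chebyshev.psi x / x) atTop (𝓝 1) := by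
    refine (psiB_tendsto.comp Real.tendsto_log_atTop).congr' ?_
    filter_upwards [eventually_gt_atTop 0] with x hx
    simp only [Function.comp, psiB]
    rw [Real.exp_neg, Real.exp_log hx, div_eq_mul_inv]
  have h2 : Tendsto (fun x : ℝ => (Chebyshev.psi - Chebyshev.theta) x / x) atTop (𝓝 0) := by
    refine (Chebyshev.isBigO_psi_sub_theta_sqrt.trans_isLittleO ?_).tendsto_div_nhds_zero
    refine (isLittleO_iff_tendsto' ?_).mpr ?_
    · filter_upwards [eventually_gt_atTop 0] with x hx h0
      exact absurd h0 hx.ne'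
    · simp only [Real.sqrt_div_self]
      exact (tendsto_inv_atTop_zero.comp Real.tendsto_sqrt_atTop)
  have h3 := h1.sub h2
  rw [sub_zero] at h3
  refine h3.congr fun x => ?_
  simp only [Pi.sub_apply]; ring

/-- Cesàro-type summation: sums of `a j ~ l j^d`. -/
lemma sum_asymp (a : ℕ → ℝ) (d : ℕ) (l c : ℝ)
    (ha : Tendsto (fun j : ℕ => a j / (j : ℝ) ^ d) atTop (𝓝 l))
    (hpow : Tendsto (fun m : ℕ => (∑ j ∈ Finset.range m, (j : ℝ) ^ d) / (m : ℝ) ^ (d + 1))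
      atTop (𝓝 c)) (hc : 0 < c) :
    Tendsto (fun m : ℕ => (∑ j ∈ Finset.range m, a j) / (m : ℝ) ^ (d + 1)) atTop (𝓝 (l * c)) := by
  have hdiv : Tendsto (fun m : ℕ => ∑ j ∈ Finset.range m, (j : ℝ) ^ d) atTop atTop := by
    have h1 : Tendsto (fun m : ℕ => (m : ℝ) ^ (d + 1)) atTop atTop :=
      (tendsto_pow_atTop (by omega)).comp tendsto_natCast_atTop_atTop
    refine (hpow.pos_mul_atTop hc h1).congr' ?_
    filter_upwards [eventually_gt_atTop 0] with m hm
    have : (m : ℝ) ≠ 0 := by exact_mod_cast hm.ne'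
    field_simp
  have ho : (fun j : ℕ => a j - l * (j : ℝ) ^ d) =o[atTop] fun j : ℕ => (j : ℝ) ^ d := by
    refine (isLittleO_iff_tendsto' ?_).mpr ?_
    · filter_upwards [eventually_gt_atTop 0] with j hj h0
      have : (j : ℝ) ^ d ≠ 0 := pow_ne_zero _ (by exact_mod_cast hj.ne')
      exact absurd h0 this
    · have := ha.sub_const l
      rw [sub_self] at this
      refine this.congr' ?_
      filter_upwards [eventually_gt_atTop 0] with j hj
      have : (j : ℝ) ≠ 0 := by exact_mod_cast hj.ne'
      field_simp
  have hs := ho.sum_range (fun j => by positivity) hdiv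
  have hs2 : Tendsto (fun m : ℕ => (∑ j ∈ Finset.range m, (a j - l * (j : ℝ) ^ d)) /
      (∑ j ∈ Finset.range m, (j : ℝ) ^ d)) atTop (𝓝 0) := hs.tendsto_div_nhds_zero
  have h3 := (hs2.mul hpow).add (hpow.const_mul l)
  rw [zero_mul, zero_add] at h3
  refine h3.congr' ?_
  filter_upwards [hdiv.eventually_gt_atTop 0, eventually_gt_atTop 0] with m hm hm0
  have : (m : ℝ) ≠ 0 := by exact_mod_cast hm0.ne'
  rw [Finset.sum_sub_distrib, ← Finset.mul_sum]
  field_simp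
  ring

lemma inv_nat_tendsto : Tendsto (fun m : ℕ => ((m : ℝ))⁻¹) atTop (𝓝 0) :=
  tendsto_inv_atTop_zero.comp tendsto_natCast_atTop_atTop

lemma sum_pow_one : Tendsto (fun m : ℕ => (∑ j ∈ Finset.range m, (j : ℝ) ^ 1) / (m : ℝ) ^ (1 + 1))
      atTop (𝓝 (1 / 2)) := by
  have hf : ∀ m : ℕ, ∑ j ∈ Finset.range m, (j : ℝ) ^ 1 = m * (m - 1) / 2 := by
    intro m
    induction m with
    | zero => simp
    | succ m ih => rw [Finset.sum_range_succ, ih]; push_cast; ring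
  have h := (inv_nat_tendsto.const_sub 1).div_const 2
  rw [sub_zero] at h
  refine h.congr' ?_
  filter_upwards [eventually_gt_atTop 0] with m hm
  have : (m : ℝ) ≠ 0 := by exact_mod_cast hm.ne'
  rw [hf]; field_simp; ring

lemma sum_pow_three :
    Tendsto (fun m : ℕ => (∑ j ∈ Finset.range m, (j : ℝ) ^ 3) / (m : ℝ) ^ (3 + 1))
      atTop (𝓝 (1 / 4)) := by
  have hf : ∀ m : ℕ, ∑ j ∈ Finset.range m, (j : ℝ) ^ 3 = m ^ 2 * (m - 1) ^ 2 / 4 := by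
    intro m
    induction m with
    | zero => simp
    | succ m ih => rw [Finset.sum_range_succ, ih]; push_cast; ring
  have h := ((inv_nat_tendsto.const_sub 1).pow 2).div_const 4
  rw [sub_zero, one_pow] at h
  refine h.congr' ?_
  filter_upwards [eventually_gt_atTop 0] with m hm
  have : (m : ℝ) ≠ 0 := by exact_mod_cast hm.ne'
  rw [hf]; field_simp; ring

/-- If `Σ_{p ≤ m} c p ~ m` then the summatory function of `c * c` is `~ m^2/2`. -/
lemma conv_asymp (c : ℕ → ℝ) (hc : ∀ n, 0 ≤ c n)
    (hS : Tendsto (fun m : ℕ => (∑ p ∈ Finset.range (m + 1), c p) / (m : ℝ)) atTop (𝓝 1)) :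
    Tendsto (fun m : ℕ => (∑ p ∈ Finset.range (m + 1), ∑ q ∈ Finset.range (m + 1 - p), c p * c q) /
      (m : ℝ) ^ 2) atTop (𝓝 (1 / 2)) := by
  set S : ℕ → ℝ := fun m => ∑ p ∈ Finset.range (m + 1), c p with hSdef
  have hmain : Tendsto (fun m : ℕ => (∑ j ∈ Finset.range m, S j) / (m : ℝ) ^ 2) atTop
      (𝓝 (1 / 2)) := by
    have := sum_asymp S 1 1 (1/2) (by simpa using hS) sum_pow_one (by norm_num)
    simpa using this
  have habel : ∀ m : ℕ, ∑ p ∈ Finset.range (m + 1), c p * ((m : ℝ) - p) =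
      ∑ j ∈ Finset.range m, S j := by
    intro m
    induction m with
    | zero => simp
    | succ m ih =>
      rw [Finset.sum_range_succ (fun j => S j), ← ih, Finset.sum_range_succ]
      simp only [hSdef, ← Finset.sum_add_distrib]
      push_cast
      rw [sub_self, mul_zero, add_zero]
      refine Finset.sum_congr rfl fun p _ => by ring
  have herr : Tendsto (fun m : ℕ => (∑ p ∈ Finset.range (m + 1),
      c p * (S (m - p) - ((m : ℝ) - p))) / (m : ℝ) ^ 2) atTop (𝓝 0) := by
    rw [Metric.tendsto_nhds]
    intro ε hε
    -- uniform bound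
    obtain ⟨C, hC0, hC⟩ : ∃ C, 0 ≤ C ∧ ∀ m : ℕ, |S m - m| ≤ ε / 8 * m + C := by
      have h1 := hS.eventually (Metric.ball_mem_nhds 1 (show 0 < ε / 8 by positivity))
      obtain ⟨N, hN⟩ := eventually_atTop.mp h1
      refine ⟨∑ m ∈ Finset.range (N + 1), |S m - m|,
        Finset.sum_nonneg fun _ _ => abs_nonneg _, fun m => ?_⟩
      by_cases hm : m < N + 1
      · have := Finset.single_le_sum (f := fun m : ℕ => |S m - m|)
          (fun _ _ => abs_nonneg _) (Finset.mem_range.mpr hm)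
        have h2 : 0 ≤ ε / 8 * m := by positivity
        linarith
      · have h2 := hN m (by omega)
        rw [Real.dist_eq] at h2
        change |S m / m - 1| < _ at h2
        have hm0 : (0 : ℝ) < m := by exact_mod_cast (by omega : 0 < m)
        have h3 : |S m - m| = |S m / m - 1| * m := by
          rw [← abs_of_pos hm0, ← abs_mul, abs_of_pos hm0]
          congr 1; field_simp
        have h4 : 0 ≤ ∑ m ∈ Finset.range (N + 1), |S m - m| :=
          Finset.sum_nonneg fun _ _ => abs_nonneg _
        rw [h3]
        have : |S m / m - 1| * m ≤ ε / 8 * m := by gcongr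
        linarith
    have h5 : Tendsto (fun m : ℕ => C * ((m : ℝ))⁻¹) atTop (𝓝 0) := by
      simpa using inv_nat_tendsto.const_mul C
    filter_upwards [hS.eventually (gt_mem_nhds (show (1:ℝ) < 2 by norm_num)),
      h5.eventually (gt_mem_nhds (show 0 < ε / 8 by positivity)), eventually_gt_atTop 0]
      with m hm1 hm2 hm0
    have hm0' : (0 : ℝ) < m := by exact_mod_cast hm0
    rw [Real.dist_eq, sub_zero, abs_div, abs_of_pos (show (0:ℝ) < (m:ℝ) ^ 2 by positivity),
      div_lt_iff₀ (by positivity)]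
    have hb : |∑ p ∈ Finset.range (m + 1), c p * (S (m - p) - ((m : ℝ) - p))| ≤
        S m * (ε / 8 * m + C) := by
      refine (Finset.abs_sum_le_sum_abs _ _).trans ?_
      simp only [hSdef]
      rw [Finset.sum_mul]
      refine Finset.sum_le_sum fun p hp => ?_
      have hpm : p ≤ m := by have := Finset.mem_range.mp hp; omega
      rw [abs_mul, abs_of_nonneg (hc p)]
      refine mul_le_mul_of_nonneg_left ?_ (hc p)
      have := hC (m - p)
      rw [Nat.cast_sub hpm] at this
      refine this.trans ?_
      have hp0 : (0:ℝ) ≤ p := Nat.cast_nonneg p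
      have : ε / 8 * ((m:ℝ) - p) ≤ ε / 8 * m := by gcongr; linarith
      linarith
    have hC2 : C < ε / 8 * m := by
      rwa [← div_eq_mul_inv, div_lt_iff₀ hm0'] at hm2
    have hS2 : S m < 2 * m := by
      rwa [div_lt_iff₀ hm0'] at hm1
    have hS0 : 0 ≤ S m := Finset.sum_nonneg fun _ _ => hc _
    have hεm : 0 < ε * m := by positivity
    calc _ ≤ _ := hb
      _ ≤ (2 * m) * (ε / 8 * m + ε / 8 * m) := by gcongr
      _ = ε * m ^ 2 / 2 := by ring
      _ < ε * m ^ 2 := by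
        have : 0 < ε * (m:ℝ) ^ 2 := by positivity
        linarith
  have h := hmain.add herr
  rw [add_zero] at h
  refine h.congr fun m => ?_
  rw [← habel, ← add_div, ← Finset.sum_add_distrib]
  congr 1
  refine Finset.sum_congr rfl fun p hp => ?_
  have hpm : p ≤ m := by have := Finset.mem_range.mp hp; omega
  rw [← Finset.mul_sum, show m + 1 - p = m - p + 1 by omega]
  simp only [hSdef]
  ring

/-- indicator of odd primes -/
noncomputable def oOne (p : ℕ) : ℝ := if p.Prime ∧ Odd p then 1 else 0

/-- indicator of odd primes, weighted by `log` -/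
noncomputable def oLog (p : ℕ) : ℝ := if p.Prime ∧ Odd p then Real.log p else 0

/-- additive self-convolution -/
noncomputable def cv (c : ℕ → ℝ) (m : ℕ) : ℝ := ∑ p ∈ Finset.range (m + 1), c p * c (m - p)

lemma cv_sum (c : ℕ → ℝ) (hc : ∀ n, ¬ Odd n → c n = 0) (n : ℕ) :
    ∑ k ∈ Finset.range (n + 1), cv c (2 * k) =
      ∑ p ∈ Finset.range (2 * n + 1), ∑ q ∈ Finset.range (2 * n + 1 - p), c p * c q := by
  have h1 : ∑ k ∈ Finset.range (n + 1), cv c (2 * k) = ∑ m ∈ Finset.range (2 * n + 1), cv c m := by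
    induction n with
    | zero => simp
    | succ n ih =>
      rw [Finset.sum_range_succ, ih, show 2 * (n + 1) + 1 = 2 * n + 1 + 1 + 1 by ring,
        Finset.sum_range_succ _ (2 * n + 1 + 1), Finset.sum_range_succ _ (2 * n + 1)]
      have : cv c (2 * n + 1) = 0 := by
        refine Finset.sum_eq_zero fun p hp => ?_
        have hp' := Finset.mem_range.mp hp
        by_cases ho : Odd p
        · rw [hc (2 * n + 1 - p), mul_zero]
          intro h
          obtain ⟨a, ha⟩ := ho
          obtain ⟨b, hb⟩ := h
          omega
        · rw [hc p ho, zero_mul]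
      rw [this, add_zero]
      rfl
  rw [h1]
  exact Finset.sum_range_diag_flip (2 * n + 1) (fun p q => c p * c q)

lemma oLog_sum_eq (m : ℕ) (hm : 2 ≤ m) :
    ∑ p ∈ Finset.range (m + 1), oLog p = Chebyshev.theta m - Real.log 2 := by
  have h2 : 2 ∈ Finset.range (m + 1) := by simp; omega
  have hth : Chebyshev.theta m = ∑ p ∈ Finset.range (m + 1), if p.Prime then Real.log p else 0 := by
    rw [Chebyshev.theta_eq_sum_Icc, Nat.floor_natCast, Finset.sum_filter]
    congr 1
    ext x; simp
  rw [hth, ← Finset.add_sum_erase _ _ h2, 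
    ← Finset.add_sum_erase _ (fun p : ℕ => if p.Prime then Real.log p else 0) h2]
  have : oLog 2 = 0 := by simp [oLog]
  rw [this, if_pos Nat.prime_two]
  push_cast
  rw [zero_add, add_sub_cancel_left]
  refine Finset.sum_congr rfl fun p hp => ?_
  unfold oLog
  have hne := Finset.ne_of_mem_erase hp
  congr 1
  simp only [eq_iff_iff, and_iff_left_iff_imp]
  intro hpp
  exact hpp.odd_of_ne_two hne

lemma oLog_asymp :
    Tendsto (fun m : ℕ => (∑ p ∈ Finset.range (m + 1), oLog p) / (m : ℝ)) atTop (𝓝 1) := by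
  have h1 := theta_pnt.comp tendsto_natCast_atTop_atTop
  have h2 := h1.sub (inv_nat_tendsto.const_mul (Real.log 2))
  rw [mul_zero, sub_zero] at h2
  refine h2.congr' ?_
  filter_upwards [eventually_ge_atTop 2] with m hm
  rw [oLog_sum_eq m hm]
  simp only [Function.comp]
  ring

lemma oLog_nonneg (n : ℕ) : 0 ≤ oLog n := by
  unfold oLog; split_ifs
  · exact Real.log_natCast_nonneg n
  · exact le_rfl

lemma oOne_nonneg (n : ℕ) : 0 ≤ oOne n := by
  unfold oOne; split_ifs <;> norm_num

lemma oLog_even (n : ℕ) (h : ¬ Odd n) : oLog n = 0 := by simp [oLog, h]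
lemma oOne_even (n : ℕ) (h : ¬ Odd n) : oOne n = 0 := by simp [oOne, h]

lemma two_mul_tendsto : Tendsto (fun n : ℕ => 2 * n) atTop atTop :=
  tendsto_id.const_mul_atTop' (by norm_num)

lemma W_asymp : Tendsto (fun n : ℕ => (∑ k ∈ Finset.range (n + 1), cv oLog (2 * k)) / (n : ℝ) ^ 2)
    atTop (𝓝 2) := by
  have h := ((conv_asymp oLog oLog_nonneg oLog_asymp).comp two_mul_tendsto).const_mul 4
  rw [show (4:ℝ) * (1/2) = 2 by norm_num] at h
  refine h.congr fun n => ?_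
  rw [cv_sum oLog oLog_even]
  simp only [Function.comp]
  push_cast
  rw [mul_pow, ← mul_div_assoc, show (2:ℝ) ^ 2 = 4 by norm_num,
    mul_div_mul_left _ _ (by norm_num)]

lemma W2_asymp :
    Tendsto (fun n : ℕ => (∑ k ∈ Finset.range (n + 1), (k:ℝ) ^ 2 * cv oLog (2 * k)) / (n : ℝ) ^ 4)
    atTop (𝓝 1) := by
  set W : ℕ → ℝ := fun n => ∑ k ∈ Finset.range (n + 1), cv oLog (2 * k) with hW
  have habel : ∀ n : ℕ, ∑ k ∈ Finset.range (n + 1), (k:ℝ) ^ 2 * cv oLog (2 * k) =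
      (n:ℝ) ^ 2 * W n - ∑ k ∈ Finset.range n, (2 * (k:ℝ) + 1) * W k := by
    intro n
    induction n with
    | zero => simp
    | succ n ih =>
      rw [Finset.sum_range_succ, ih, Finset.sum_range_succ _ n]
      have : W (n + 1) = W n + cv oLog (2 * (n + 1)) := by
        simp only [hW]; rw [Finset.sum_range_succ]
      rw [this]; push_cast; ring
  have hWl : Tendsto (fun n : ℕ => W n / (n : ℝ) ^ 2) atTop (𝓝 2) := W_asymp
  have h3 : Tendsto (fun k : ℕ => ((2 * (k:ℝ) + 1) * W k) / (k : ℝ) ^ 3) atTop (𝓝 4) := by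
    have := (inv_nat_tendsto.const_add 2).mul hWl
    rw [add_zero, show (2:ℝ) * 2 = 4 by norm_num] at this
    refine this.congr' ?_
    filter_upwards [eventually_gt_atTop 0] with m hm
    have : (m : ℝ) ≠ 0 := by exact_mod_cast hm.ne'
    field_simp
  have h4 := sum_asymp _ 3 4 (1/4) h3 sum_pow_three (by norm_num)
  have h5 := hWl.sub h4
  rw [show (2:ℝ) - 4 * (1/4) = 1 by norm_num] at h5
  refine h5.congr' ?_
  filter_upwards [eventually_gt_atTop 0] with m hm
  have : (m : ℝ) ≠ 0 := by exact_mod_cast hm.ne'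
  rw [habel]
  field_simp
  ring

lemma oOne_sum_eq (m : ℕ) (hm : 2 ≤ m) :
    ∑ p ∈ Finset.range (m + 1), oOne p = (Nat.primeCounting m : ℝ) - 1 := by
  have h2 : 2 ∈ Finset.range (m + 1) := by simp; omega
  have hth : (Nat.primeCounting m : ℝ) =
      ∑ p ∈ Finset.range (m + 1), if p.Prime then (1 : ℝ) else 0 := by
    rw [Nat.primeCounting, Nat.primeCounting', Nat.count_eq_card_filter_range]
    simp
  rw [hth, ← Finset.add_sum_erase _ _ h2,
    ← Finset.add_sum_erase _ (fun p : ℕ => if p.Prime then (1 : ℝ) else 0) h2]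
  have : oOne 2 = 0 := by simp [oOne]
  rw [this, if_pos Nat.prime_two]
  rw [zero_add, add_sub_cancel_left]
  refine Finset.sum_congr rfl fun p hp => ?_
  unfold oOne
  have hne := Finset.ne_of_mem_erase hp
  congr 1
  simp only [eq_iff_iff, and_iff_left_iff_imp]
  intro hpp
  exact hpp.odd_of_ne_two hne

lemma log_nat_tendsto : Tendsto (fun m : ℕ => Real.log m) atTop atTop :=
  Real.tendsto_log_atTop.comp tendsto_natCast_atTop_atTop

lemma log_sq_div : Tendsto (fun m : ℕ => Real.log m ^ 2 / m) atTop (𝓝 0) := by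
  have := (Real.tendsto_pow_log_div_mul_add_atTop 1 0 2 one_ne_zero).comp
    (tendsto_natCast_atTop_atTop (R := ℝ))
  simpa [Function.comp_def] using this

lemma log_div_nat : Tendsto (fun m : ℕ => Real.log m / m) atTop (𝓝 0) := by
  have := (Real.tendsto_pow_log_div_mul_add_atTop 1 0 1 one_ne_zero).comp
    (tendsto_natCast_atTop_atTop (R := ℝ))
  simpa [Function.comp_def] using this

lemma pi_theta : Tendsto (fun m : ℕ =>
    (Real.log m * Nat.primeCounting m - Chebyshev.theta m) / m) atTop (𝓝 0) := by
  have h1 := Chebyshev.primeCounting_sub_theta_div_log_isBigO.mul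
    (isBigO_refl (fun x : ℝ => Real.log x / x) atTop)
  have h2 : Tendsto (fun x : ℝ => x / Real.log x ^ 2 * (Real.log x / x)) atTop (𝓝 0) := by
    refine (tendsto_inv_atTop_zero.comp Real.tendsto_log_atTop).congr' ?_
    filter_upwards [eventually_gt_atTop 1] with x hx
    have : 0 < Real.log x := Real.log_pos hx
    have : x ≠ 0 := by linarith
    simp only [Function.comp]
    field_simp
  have h3 := (h1.trans_tendsto h2).comp (tendsto_natCast_atTop_atTop (R := ℝ))
  refine h3.congr' ?_
  filter_upwards [eventually_gt_atTop 1] with m hm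
  have hm' : (1:ℝ) < m := by exact_mod_cast hm
  have : 0 < Real.log m := Real.log_pos hm'
  simp only [Function.comp, Nat.floor_natCast]
  field_simp

lemma D_asymp : Tendsto (fun m : ℕ =>
    (Real.log m * (∑ p ∈ Finset.range (m + 1), oOne p) - ∑ p ∈ Finset.range (m + 1), oLog p) / m)
    atTop (𝓝 0) := by
  have h := (pi_theta.sub log_div_nat).add (inv_nat_tendsto.const_mul (Real.log 2))
  rw [sub_zero, mul_zero, add_zero] at h
  refine h.congr' ?_
  filter_upwards [eventually_ge_atTop 2] with m hm
  rw [oOne_sum_eq m hm, oLog_sum_eq m hm]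
  ring

lemma oLog_le (p m : ℕ) (h : p ≤ m) : oLog p ≤ Real.log m * oOne p := by
  unfold oLog oOne
  split_ifs with hp
  · rw [mul_one]
    exact Real.log_le_log (by exact_mod_cast hp.1.pos) (by exact_mod_cast h)
  · simp

lemma cv_le (k m : ℕ) (h : k ≤ m) : cv oLog k ≤ Real.log m ^ 2 * cv oOne k := by
  unfold cv
  rw [Finset.mul_sum]
  refine Finset.sum_le_sum fun p hp => ?_
  have hp' := Finset.mem_range.mp hp
  have h1 := oLog_le p m (by omega)
  have h2 := oLog_le (k - p) m (by omega)
  calc oLog p * oLog (k - p) ≤ (Real.log m * oOne p) * (Real.log m * oOne (k - p)) :=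
        mul_le_mul h1 h2 (oLog_nonneg _) ((oLog_nonneg _).trans h1)
    _ = _ := by ring

lemma diff_le (n : ℕ) :
    Real.log (2 * n : ℕ) ^ 2 * (∑ k ∈ Finset.range (n + 1), cv oOne (2 * k)) -
      (∑ k ∈ Finset.range (n + 1), cv oLog (2 * k)) ≤
    2 * (Real.log (2 * n : ℕ) * ∑ p ∈ Finset.range (2 * n + 1), oOne p) *
      (Real.log (2 * n : ℕ) * (∑ p ∈ Finset.range (2 * n + 1), oOne p) -
        ∑ p ∈ Finset.range (2 * n + 1), oLog p) := by
  rw [cv_sum _ oOne_even, cv_sum _ oLog_even]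
  set m := 2 * n
  set L := Real.log (m : ℕ)
  have hL : 0 ≤ L := Real.log_natCast_nonneg m
  have e1 : 2 * (L * ∑ p ∈ Finset.range (m + 1), oOne p) *
      (L * (∑ p ∈ Finset.range (m + 1), oOne p) - ∑ p ∈ Finset.range (m + 1), oLog p) =
      ∑ p ∈ Finset.range (m + 1), ∑ q ∈ Finset.range (m + 1),
        (L * oOne p * (L * oOne q - oLog q) + L * oOne q * (L * oOne p - oLog p)) := by
    simp only [Finset.sum_add_distrib]
    rw [Finset.sum_comm (f := fun p q => L * oOne q * (L * oOne p - oLog p))]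
    simp only [← Finset.mul_sum, ← Finset.sum_mul, Finset.sum_sub_distrib]
    ring
  rw [e1, Finset.mul_sum, ← Finset.sum_sub_distrib]
  refine Finset.sum_le_sum fun p hp => ?_
  have hp' := Finset.mem_range.mp hp
  have h1 := oLog_le p m (by omega)
  have hsub : Finset.range (m + 1 - p) ⊆ Finset.range (m + 1) := by
    intro x hx
    rw [Finset.mem_range] at *
    omega
  rw [Finset.mul_sum, ← Finset.sum_sub_distrib]
  have hnn : ∀ q ∈ Finset.range (m + 1), 0 ≤
      (L * oOne p * (L * oOne q - oLog q) + L * oOne q * (L * oOne p - oLog p)) := by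
    intro q hq
    have hq' := Finset.mem_range.mp hq
    have h2 := oLog_le q m (by omega)
    have := mul_nonneg (mul_nonneg hL (oOne_nonneg p)) (sub_nonneg.mpr h2)
    have := mul_nonneg (mul_nonneg hL (oOne_nonneg q)) (sub_nonneg.mpr h1)
    linarith
  refine le_trans (Finset.sum_le_sum fun q hq => ?_)
    (Finset.sum_le_sum_of_subset_of_nonneg hsub fun q hq _ => hnn q hq)
  have hq' := Finset.mem_range.mp hq
  have h2 := oLog_le q m (by omega)
  have h3 := mul_nonneg (sub_nonneg.mpr h1) (sub_nonneg.mpr h2)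
  change 0 ≤ (L * oOne p - oLog p) * (L * oOne q - oLog q) at h3
  nlinarith [h3]

lemma diff_tendsto : Tendsto (fun n : ℕ =>
    (Real.log (2 * n : ℕ) ^ 2 * (∑ k ∈ Finset.range (n + 1), cv oOne (2 * k)) -
      (∑ k ∈ Finset.range (n + 1), cv oLog (2 * k))) / (n : ℝ) ^ 2) atTop (𝓝 0) := by
  have h1 : Tendsto (fun m : ℕ => (Real.log m * ∑ p ∈ Finset.range (m + 1), oOne p) / m)
      atTop (𝓝 1) := by
    have := D_asymp.add oLog_asymp
    rw [zero_add] at this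
    refine this.congr fun m => ?_
    ring
  have h2 := ((h1.mul D_asymp).const_mul 8).comp two_mul_tendsto
  rw [mul_zero, mul_zero] at h2
  refine squeeze_zero (fun n => ?_) (fun n => ?_) h2
  · refine div_nonneg (sub_nonneg.mpr ?_) (by positivity)
    rw [Finset.mul_sum]
    refine Finset.sum_le_sum fun k hk => cv_le _ _ ?_
    have := Finset.mem_range.mp hk
    omega
  · have h3 := diff_le n
    rcases Nat.eq_zero_or_pos n with rfl | hn
    · simp
    have hn0 : (n : ℝ) ≠ 0 := by exact_mod_cast hn.ne'
    calc _ ≤ _ := div_le_div_of_nonneg_right h3 (by positivity)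
      _ = _ := by
        simp only [Function.comp]
        have e : ((2 * n : ℕ) : ℝ) = 2 * (n : ℝ) := by push_cast; ring
        generalize Real.log ((2 * n : ℕ) : ℝ) = L
        rw [e]
        field_simp
        ring

lemma A1_tendsto : Tendsto (fun n : ℕ =>
    Real.log (2 * n : ℕ) ^ 2 * (∑ k ∈ Finset.range (n + 1), cv oOne (2 * k)) / (n : ℝ) ^ 2)
    atTop (𝓝 2) := by
  have := diff_tendsto.add W_asymp
  rw [zero_add] at this
  refine this.congr fun n => ?_
  ring

lemma A2_tendsto : Tendsto (fun n : ℕ =>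
    Real.log (2 * n : ℕ) ^ 2 * (∑ k ∈ Finset.range (n + 1), (k:ℝ) ^ 2 * cv oOne (2 * k)) /
      (n : ℝ) ^ 4) atTop (𝓝 1) := by
  have hd : Tendsto (fun n : ℕ =>
    (Real.log (2 * n : ℕ) ^ 2 * (∑ k ∈ Finset.range (n + 1), (k:ℝ) ^ 2 * cv oOne (2 * k)) -
      (∑ k ∈ Finset.range (n + 1), (k:ℝ) ^ 2 * cv oLog (2 * k))) / (n : ℝ) ^ 4) atTop (𝓝 0) := by
    have hk : ∀ n : ℕ, ∀ k ∈ Finset.range (n + 1),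
        0 ≤ Real.log (2 * n : ℕ) ^ 2 * cv oOne (2 * k) - cv oLog (2 * k) := by
      intro n k hk
      refine sub_nonneg.mpr (cv_le _ _ ?_)
      have := Finset.mem_range.mp hk
      omega
    have e : ∀ n : ℕ,
        Real.log (2 * n : ℕ) ^ 2 * (∑ k ∈ Finset.range (n + 1), (k:ℝ) ^ 2 * cv oOne (2 * k)) -
        (∑ k ∈ Finset.range (n + 1), (k:ℝ) ^ 2 * cv oLog (2 * k)) =
        ∑ k ∈ Finset.range (n + 1), (k:ℝ) ^ 2 *
          (Real.log (2 * n : ℕ) ^ 2 * cv oOne (2 * k) - cv oLog (2 * k)) := by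
      intro n
      rw [Finset.mul_sum, ← Finset.sum_sub_distrib]
      refine Finset.sum_congr rfl fun k _ => by ring
    refine squeeze_zero (fun n => ?_) (fun n => ?_) diff_tendsto
    · rw [e]
      exact div_nonneg (Finset.sum_nonneg fun k hk' => mul_nonneg (by positivity) (hk n k hk'))
        (by positivity)
    · rcases Nat.eq_zero_or_pos n with rfl | hn
      · simp
      have hn0 : (n : ℝ) ≠ 0 := by exact_mod_cast hn.ne'
      rw [e]
      calc _ ≤ (∑ k ∈ Finset.range (n + 1), (n:ℝ) ^ 2 *
          (Real.log (2 * n : ℕ) ^ 2 * cv oOne (2 * k) - cv oLog (2 * k))) / (n:ℝ) ^ 4 := by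
            refine div_le_div_of_nonneg_right (Finset.sum_le_sum fun k hk' => ?_) (by positivity)
            refine mul_le_mul_of_nonneg_right ?_ (hk n k hk')
            have : (k:ℝ) ≤ n := by
              have := Finset.mem_range.mp hk'
              exact_mod_cast (by omega : k ≤ n)
            gcongr
        _ = _ := by
            rw [← Finset.mul_sum, Finset.sum_sub_distrib, ← Finset.mul_sum]
            generalize Real.log ((2 * n : ℕ) : ℝ) = L
            field_simp
  have := hd.add W2_asymp
  rw [zero_add] at this
  refine this.congr fun n => ?_
  ring

lemma Q2_link (k : ℕ) : ∃ e : ℝ, 0 ≤ e ∧ e ≤ 1 ∧ 2 * (Q2 k : ℝ) = cv oOne (2 * k) + e := by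
  classical
  set X := (Finset.range (2 * k + 1)).filter
    (fun p => (p.Prime ∧ Odd p) ∧ ((2 * k - p).Prime ∧ Odd (2 * k - p))) with hX
  have hcv : cv oOne (2 * k) = (X.card : ℝ) := by
    unfold cv oOne
    rw [hX, Finset.card_filter]
    push_cast
    refine Finset.sum_congr rfl fun p _ => ?_
    by_cases h1 : p.Prime ∧ Odd p <;> by_cases h2 : (2 * k - p).Prime ∧ Odd (2 * k - p) <;>
      simp [h1, h2]
  set Y := X.filter (fun p => p ≤ 2 * k - p) with hY
  set Y' := X.filter (fun p => 2 * k - p ≤ p) with hY'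
  have hQ : Q2 k = Y.card := by
    unfold Q2
    refine Finset.card_bij (fun pq _ => pq.1) ?_ ?_ ?_
    · rintro ⟨p, q⟩ h
      simp only [Finset.mem_filter, Finset.mem_product, Finset.mem_range] at h
      obtain ⟨⟨h1, h2⟩, h3, h4, h5, h6, h7, h8⟩ := h
      have : 2 * k - p = q := by omega
      simp only [hY, hX, Finset.mem_filter, Finset.mem_range, this]
      exact ⟨⟨h1, ⟨h3, h5⟩, h4, h6⟩, h7⟩
    · rintro ⟨p, q⟩ h ⟨p', q'⟩ h' hh
      simp only [Finset.mem_filter, Finset.mem_product, Finset.mem_range] at h h' hh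
      rw [Prod.mk.injEq]
      omega
    · intro p hp
      simp only [hY, hX, Finset.mem_filter, Finset.mem_range] at hp
      obtain ⟨⟨h1, ⟨h3, h5⟩, h4, h6⟩, h7⟩ := hp
      refine ⟨(p, 2 * k - p), ?_, rfl⟩
      simp only [Finset.mem_filter, Finset.mem_product, Finset.mem_range]
      exact ⟨⟨h1, by omega⟩, h3, h4, h5, h6, h7, by omega⟩
  have hYY : Y.card = Y'.card := by
    refine Finset.card_bij (fun p _ => 2 * k - p) ?_ ?_ ?_
    · intro p hp
      simp only [hY, hY', hX, Finset.mem_filter, Finset.mem_range] at hp ⊢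
      obtain ⟨⟨h1, h3, h4⟩, h7⟩ := hp
      have : 2 * k - (2 * k - p) = p := by omega
      rw [this]
      exact ⟨⟨by omega, h4, h3⟩, h7⟩
    · intro p hp q hq h
      simp only [hY, hX, Finset.mem_filter, Finset.mem_range] at hp hq h
      omega
    · intro p hp
      simp only [hY', hX, Finset.mem_filter, Finset.mem_range] at hp
      obtain ⟨⟨h1, h3, h4⟩, h7⟩ := hp
      have : 2 * k - (2 * k - p) = p := by omega
      refine ⟨2 * k - p, ?_, this⟩
      simp only [hY, hX, Finset.mem_filter, Finset.mem_range]
      rw [this]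
      exact ⟨⟨by omega, h4, h3⟩, h7⟩
  have hU : Y ∪ Y' = X := by
    ext p
    simp only [hY, hY', Finset.mem_union, Finset.mem_filter]
    have := le_total p (2 * k - p)
    tauto
  have hI : (Y ∩ Y').card ≤ 1 := by
    rw [Finset.card_le_one]
    intro a ha b hb
    simp only [hY, hY', hX, Finset.mem_inter, Finset.mem_filter, Finset.mem_range] at ha hb
    omega
  have hcard := Finset.card_union_add_card_inter Y Y'
  rw [hU, ← hYY, ← hQ] at hcard
  refine ⟨((Y ∩ Y').card : ℝ), by positivity, by exact_mod_cast hI, ?_⟩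
  rw [hcv]
  have : ((X.card + (Y ∩ Y').card : ℕ) : ℝ) = ((Q2 k + Q2 k : ℕ) : ℝ) := by rw [hcard]
  push_cast at this
  linarith

lemma Q2_range (f : ℕ → ℝ) (n : ℕ) :
    ∑ k ∈ Finset.Icc 3 n, f k * (Q2 k : ℝ) = ∑ k ∈ Finset.range (n + 1), f k * (Q2 k : ℝ) := by
  refine Finset.sum_subset (fun k hk => ?_) (fun k hk hk' => ?_)
  · rw [Finset.mem_Icc] at hk
    rw [Finset.mem_range]; omega
  · rw [Finset.mem_range] at hk
    rw [Finset.mem_Icc] at hk'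
    have h3 : k < 3 := by omega
    have : Q2 k = 0 := by
      interval_cases k <;> decide
    rw [this]; simp

/-- Weighted transfer from `cv oOne` to `Q2`. -/
lemma Q2_transfer (d : ℕ) (l : ℝ)
    (h : Tendsto (fun n : ℕ => Real.log (2 * n : ℕ) ^ 2 *
      (∑ k ∈ Finset.range (n + 1), (k:ℝ) ^ d * cv oOne (2 * k)) / (n : ℝ) ^ (d + 2))
      atTop (𝓝 l)) :
    Tendsto (fun n : ℕ => Real.log (2 * n : ℕ) ^ 2 *
      (2 * ∑ k ∈ Finset.Icc 3 n, (k:ℝ) ^ d * (Q2 k : ℝ)) / (n : ℝ) ^ (d + 2))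
      atTop (𝓝 l) := by
  choose e he0 he1 he using Q2_link
  have herr : Tendsto (fun n : ℕ => Real.log (2 * n : ℕ) ^ 2 *
      (∑ k ∈ Finset.range (n + 1), (k:ℝ) ^ d * e k) / (n : ℝ) ^ (d + 2)) atTop (𝓝 0) := by
    have hb := (log_sq_div.comp two_mul_tendsto).const_mul 4
    rw [mul_zero] at hb
    refine squeeze_zero' (Eventually.of_forall fun n => ?_) ?_ hb
    · refine div_nonneg (mul_nonneg (by positivity) (Finset.sum_nonneg fun k _ =>
        mul_nonneg (by positivity) (he0 k))) (by positivity)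
    · filter_upwards [eventually_ge_atTop 1] with n hn
      have hn1 : (1 : ℝ) ≤ n := by exact_mod_cast hn
      have hn0 : (0 : ℝ) < n := by linarith
      have hs : ∑ k ∈ Finset.range (n + 1), (k:ℝ) ^ d * e k ≤ 2 * (n:ℝ) ^ (d + 1) := by
        calc _ ≤ ∑ k ∈ Finset.range (n + 1), (n:ℝ) ^ d * 1 := by
              refine Finset.sum_le_sum fun k hk => ?_
              have hkn : (k:ℝ) ≤ n := by
                have := Finset.mem_range.mp hk
                exact_mod_cast (by omega : k ≤ n)
              exact mul_le_mul (by gcongr) (he1 k) (he0 k) (by positivity)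
          _ = ((n:ℝ) + 1) * (n:ℝ) ^ d := by simp
          _ ≤ (2 * n) * (n:ℝ) ^ d := by gcongr; linarith
          _ = _ := by ring
      simp only [Function.comp]
      have e2 : ((2 * n : ℕ) : ℝ) = 2 * (n : ℝ) := by push_cast; ring
      calc _ ≤ Real.log (2 * n : ℕ) ^ 2 * (2 * (n:ℝ) ^ (d + 1)) / (n : ℝ) ^ (d + 2) := by
            gcongr
        _ = _ := by
            generalize Real.log ((2 * n : ℕ) : ℝ) = L
            rw [e2]
            field_simp
            ring
  have h2 := h.add herr
  rw [add_zero] at h2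
  refine h2.congr fun n => ?_
  have hs : ∑ k ∈ Finset.range (n + 1), ((k:ℝ) ^ d * cv oOne (2 * k) + (k:ℝ) ^ d * e k) =
      2 * ∑ k ∈ Finset.Icc 3 n, (k:ℝ) ^ d * (Q2 k : ℝ) := by
    rw [Q2_range (fun k => (k:ℝ) ^ d), Finset.mul_sum]
    refine Finset.sum_congr rfl fun k _ => ?_
    rw [← mul_add, ← he k]
    ring
  rw [← add_div, ← mul_add, ← Finset.sum_add_distrib, hs]

/-- The limit of `(Σ_{2<k≤n} k²·Q₂(2k)) / (n² · Σ_{2<k≤n} Q₂(2k))` as `n → ∞` is `1/2`;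
equivalently, `E(Gₙ²)/n² → 1/2`. -/
theorem second_moment_goldbach_number :
    Tendsto (fun n : ℕ =>
        (∑ k ∈ Finset.Icc 3 n, (k : ℝ) ^ 2 * (Q2 k : ℝ)) /
          ((n : ℝ) ^ 2 * ∑ k ∈ Finset.Icc 3 n, (Q2 k : ℝ)))
      atTop (𝓝 (1 / 2)) := by
  have h0 := Q2_transfer 0 2 (by simpa using A1_tendsto)
  have h2 := Q2_transfer 2 1 (by simpa using A2_tendsto)
  refine (h2.div h0 (by norm_num)).congr' ?_
  filter_upwards [eventually_ge_atTop 1] with n hn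
  have hn0 : (n : ℝ) ≠ 0 := by exact_mod_cast (by omega : n ≠ 0)
  have hL : Real.log ((2 * n : ℕ) : ℝ) ≠ 0 := by
    refine (Real.log_pos ?_).ne'
    exact_mod_cast (by omega : 1 < 2 * n)
  simp only [Pi.div_apply, pow_zero, one_mul, zero_add]
  generalize Real.log ((2 * n : ℕ) : ℝ) = L at hL
  generalize ∑ k ∈ Finset.Icc 3 n, (Q2 k : ℝ) = B
  generalize ∑ k ∈ Finset.Icc 3 n, (k : ℝ) ^ 2 * (Q2 k : ℝ) = A
  by_cases hB : B = 0
  · simp [hB]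
  · field_simp
end
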